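/- Sharp rate of convergence (Proposition 6.1): Under the hypotheses of the main theorem (ω Diophantine; A : 𝕋 × ℰ → GL(d,K) continuous, analytic in x uniformly in E, Hölder in E uniformly in x; gap condition λ_j(E) − λ_{j+1}(E) > κ > 0 for all E ∈ ℰ and 1 ≤ j < d), there is a constant C depending on κ, A, ℰ, ω such that |λ_{j,n}(E) − λ_j(E)| ≤ C/n for all E ∈ ℰ, all 1 ≤ j ≤ d and all n ≥ 1. -/

import Mathlib

/-!
Write `I p n` for the mean `∫ log ‖Λ^p A^{(n)}_x‖ dx` (`meanLog`), a subadditive sequence in `n`. It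
suffices to bound the doubling defects `2 I p n - I p (2n)` uniformly in `n`, `p` and the parameter:
telescoping `I p (2^i n) / (2^i n)` then shows that `I p n / n` is within `O(1/n)` of its limit
(`subadditive_rate`).

*Three blocks.* If `B` is invertible and `‖Λ^p B‖ ‖Λ^(p+2) B‖` is much smaller than `‖Λ^(p+1) B‖²`,
then `Λ^(p+1) B` is nearly of rank one, so `‖CB‖ ‖BA‖ ≈ ‖CBA‖ ‖B‖` in `Λ^(p+1)` (`compound_three`).

*Large deviations.* Up to a bounded error, `log ‖Λ^p A^{(n)}_x‖` is the restriction to the real axis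
of `½ log (∑ |minors|² + η)`, a smooth subharmonic function on a strip, of size `O(n)`. Its Fourier
coefficients are therefore `O(n / |k|)` (`fourier_decay_cos`, `Tame.fourier_approx`). The Diophantine
condition makes `∑ k⁻² ‖kω‖^(-3/2)` converge, which gives an `L²` bound for centred Birkhoff averages
(`ergodic_l2`). As a shift by `ω` moves `log ‖Λ^p A^{(n)}_x‖` by `O(1)` only, this function is within
`δ n` of its mean off a set of measure `O(n^(-3/2))` (`Tame.ldt`).

*Avalanche.* Off the exceptional set the three-block inequality applies with an exponentially small
error; on it the loss is `O(m)`. Integrating, the additivity defect changes by `O(m^(-1/2))` when a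
block of length `m` is prolonged to roughly `2m`, as long as the gaps
`2 I (p+1) m - I p m - I (p+2) m` stay of size at least `κ m / 2` (`Tame.step`). These changes are
summable over dyadic scales, so gaps and defects are preserved by induction on scales (`avalanche`),
starting from a scale at which the means are close to their limits at a given parameter. By continuity
of the means this scale works in a neighbourhood (`Tame.local_rate`), and compactness of the
parameter space gives a global constant.
-/

open MeasureTheory

noncomputable section

/-- The canonical embedding of `K` (= ℝ or ℂ) into `ℂ`. -/
def rcToComplex {K : Type*} [RCLike K] (z : K) : ℂ := ⟨RCLike.re z, RCLike.im z⟩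

/-- The operator norm of a matrix, viewed as an operator between Euclidean (ℓ²) spaces. -/
def matOpNorm {K : Type*} [RCLike K] {m n : Type*} [Fintype m] [Fintype n] [DecidableEq n]
    (M : Matrix m n K) : ℝ :=
  ‖LinearMap.toContinuousLinearMap (Matrix.toEuclideanLin M)‖

/-- The cocycle products `A^{(n)}_x(E) = A(x+nω,E)⋯A(x+2ω,E)A(x+ω,E)`. -/
def cocycle {K : Type*} [RCLike K] {d : ℕ} {ε : Type*}
    (A : ℝ → ε → Matrix (Fin d) (Fin d) K) (ω : ℝ) (n : ℕ) (x : ℝ) (e : ε) :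
    Matrix (Fin d) (Fin d) K :=
  ((List.range n).reverse.map (fun j => A (x + (j + 1 : ℕ) * ω) e)).prod

/-- The `p`-th exterior power (compound matrix): the matrix of all `p × p` minors,
indexed by `p`-element subsets of the index set. -/
def compound {K : Type*} [RCLike K] {d : ℕ} (p : ℕ) (M : Matrix (Fin d) (Fin d) K) :
    Matrix {s : Finset (Fin d) // s.card = p} {s : Finset (Fin d) // s.card = p} K :=
  fun s t =>
    (M.submatrix (fun i => (s.1.orderIsoOfFin s.2 i : Fin d))
      (fun i => (t.1.orderIsoOfFin t.2 i : Fin d))).det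

/-- `Σ_{i=1}^p λ_{i,n}(E) = (1/n) ∫_𝕋 log ‖Λ^p A^{(n)}_x(E)‖ dx`. -/
def sumLyapFin {K : Type*} [RCLike K] {d : ℕ} {ε : Type*}
    (A : ℝ → ε → Matrix (Fin d) (Fin d) K) (ω : ℝ) (p n : ℕ) (e : ε) : ℝ :=
  (1 / n : ℝ) * ∫ x in (0:ℝ)..1, Real.log (matOpNorm (compound p (cocycle A ω n x e)))

/-- The finite-scale Lyapunov exponents `λ_{i,n}(E)` (for `1 ≤ i ≤ d`). -/
def lyapFin {K : Type*} [RCLike K] {d : ℕ} {ε : Type*}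
    (A : ℝ → ε → Matrix (Fin d) (Fin d) K) (ω : ℝ) (i n : ℕ) (e : ε) : ℝ :=
  sumLyapFin A ω i n e - sumLyapFin A ω (i - 1) n e

/-- `Σ_{i=1}^p λ_i(E) = lim_n Σ_{i=1}^p λ_{i,n}(E)`; by subadditivity the limit
is the infimum over the scales `n ≥ 1`. -/
def sumLyap {K : Type*} [RCLike K] {d : ℕ} {ε : Type*}
    (A : ℝ → ε → Matrix (Fin d) (Fin d) K) (ω : ℝ) (p : ℕ) (e : ε) : ℝ :=
  ⨅ n : ℕ, sumLyapFin A ω p (n + 1) e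

/-- The Lyapunov exponents `λ_i(E) = lim_n λ_{i,n}(E)` (for `1 ≤ i ≤ d`). -/
def lyap {K : Type*} [RCLike K] {d : ℕ} {ε : Type*}
    (A : ℝ → ε → Matrix (Fin d) (Fin d) K) (ω : ℝ) (i : ℕ) (e : ε) : ℝ :=
  sumLyap A ω i e - sumLyap A ω (i - 1) e

/-- The Diophantine condition `‖nω‖_{ℝ/ℤ} ≥ c(ω) / (n (log n)^a)` for all `n ≥ 2`. -/
def Diophantine (ω a : ℝ) : Prop :=
  ∃ cω > (0:ℝ), ∀ n : ℕ, 2 ≤ n → ∀ k : ℤ,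
    cω / (n * Real.log n ^ a) ≤ |(n : ℝ) * ω - k|

/-- `x ↦ A(x,E)` is analytic, uniformly in `E`: identifying the torus `𝕋 = ℝ/ℤ` with the
unit circle, `A(·,E)` extends holomorphically to a fixed annulus around the circle
(equivalently, to a fixed `1`-periodic strip `{|Im z| < ρ}`), with a uniform bound. -/
def AnalyticOnStrip {K : Type*} [RCLike K] {d : ℕ} {ε : Type*}
    (A : ℝ → ε → Matrix (Fin d) (Fin d) K) : Prop :=
  ∃ ρ > (0:ℝ), ∃ F : ℂ → ε → Matrix (Fin d) (Fin d) ℂ,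
    (∀ e i j, DifferentiableOn ℂ (fun z => F z e i j) {z : ℂ | |z.im| < ρ}) ∧
    (∀ z e, F (z + 1) e = F z e) ∧
    (∀ (x : ℝ) (e : ε), F (x : ℂ) e = (A x e).map rcToComplex) ∧
    (∃ M : ℝ, ∀ z ∈ {z : ℂ | |z.im| < ρ}, ∀ e, matOpNorm (F z e) ≤ M)

/-! ### Compound matrices as exterior powers -/

/-- The basis of `⋀^p K^d` formed by the wedge products of the standard basis vectors, indexed
like the rows of `compound`. -/
def wedgeBasis (K : Type*) [RCLike K] (d p : ℕ) :
    Module.Basis {s : Finset (Fin d) // s.card = p} K (⋀[K]^p (Fin d → K)) :=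
  ((Pi.basisFun K (Fin d)).exteriorPower p).reindex
    (Equiv.subtypeEquivRight (fun s => by simp [Set.powersetCard.mem_iff]))

/-- The compound matrix represents the functorial map on the exterior power, which gives its
multiplicativity. -/
theorem compound_eq_toMatrix {K : Type*} [RCLike K] {d : ℕ} (p : ℕ)
    (M : Matrix (Fin d) (Fin d) K) :
    compound p M = LinearMap.toMatrix (wedgeBasis K d p) (wedgeBasis K d p)
      (exteriorPower.map p (Matrix.toLin' M)) := by
  ext s t
  rw [LinearMap.toMatrix_apply, wedgeBasis, Module.Basis.repr_reindex_apply,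
    Module.Basis.reindex_apply, exteriorPower.basis_apply,
    exteriorPower.map_apply_ιMulti_family, exteriorPower.basis_repr_apply,
    exteriorPower.ιMulti_family, exteriorPower.ιMultiDual_apply_ιMulti, compound,
    ← Matrix.det_transpose]
  congr 1
  ext i j
  simp [Set.powersetCard.ofFinEmbEquiv_symm_apply, Matrix.toLin'_apply, Matrix.mulVec_single]

theorem compound_mul {K : Type*} [RCLike K] {d : ℕ} (p : ℕ) (M N : Matrix (Fin d) (Fin d) K) :
    compound p (M * N) = compound p M * compound p N := by
  simp only [compound_eq_toMatrix]
  rw [Matrix.toLin'_mul, exteriorPower.map_comp, LinearMap.toMatrix_comp _ (wedgeBasis K d p)]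

theorem compound_one {K : Type*} [RCLike K] {d : ℕ} (p : ℕ) :
    compound p (1 : Matrix (Fin d) (Fin d) K) = 1 := by
  simp only [compound_eq_toMatrix]
  rw [Matrix.toLin'_one, exteriorPower.map_id, LinearMap.toMatrix_id]

theorem compound_conjTranspose {K : Type*} [RCLike K] {d : ℕ} (p : ℕ)
    (M : Matrix (Fin d) (Fin d) K) :
    compound p M.conjTranspose = (compound p M).conjTranspose := by
  ext s t
  simp only [compound, Matrix.conjTranspose_apply]
  rw [← Matrix.det_conjTranspose]
  rfl

theorem compound_map {K L : Type*} [RCLike K] [RCLike L] {d : ℕ} (p : ℕ) (φ : K →+* L)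
    (M : Matrix (Fin d) (Fin d) K) :
    compound p (M.map φ) = (compound p M).map φ := by
  ext s t
  simp only [compound, Matrix.map_apply]
  rw [RingHom.map_det]
  rfl

theorem compound_diagonal {K : Type*} [RCLike K] {d : ℕ} (p : ℕ) (D : Fin d → K) :
    compound p (Matrix.diagonal D) = Matrix.diagonal (fun s => ∏ i ∈ s.1, D i) := by
  ext s t
  by_cases h : s = t
  · subst h
    simp only [compound, Matrix.diagonal_apply_eq]
    have : (Matrix.diagonal D).submatrix (fun i => (s.1.orderIsoOfFin s.2 i : Fin d))
        (fun i => (s.1.orderIsoOfFin s.2 i : Fin d)) =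
        Matrix.diagonal (fun i => D (s.1.orderIsoOfFin s.2 i : Fin d)) :=
      Matrix.submatrix_diagonal _ _ (fun i j hij => by simpa [Subtype.ext_iff] using hij)
    rw [this, Matrix.det_diagonal, ← Finset.prod_coe_sort s.1]
    exact Fintype.prod_equiv (s.1.orderIsoOfFin s.2).toEquiv
      (fun i => D (s.1.orderIsoOfFin s.2 i : Fin d)) (fun a => D a) (fun i => rfl)
  · rw [Matrix.diagonal_apply_ne _ h]
    -- some row of the minor vanishes
    obtain ⟨a, has, hat⟩ : ∃ a ∈ s.1, a ∉ t.1 := by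
      by_contra! hcon
      exact h (Subtype.ext (Finset.eq_of_subset_of_card_le hcon (by rw [s.2, t.2])))
    obtain ⟨i, hi⟩ := (s.1.orderIsoOfFin s.2).surjective ⟨a, has⟩
    refine Matrix.det_eq_zero_of_row_eq_zero i (fun j => ?_)
    rw [Matrix.submatrix_apply, hi]
    refine Matrix.diagonal_apply_ne _ (fun hh => hat ?_)
    simp only at hh
    rw [hh]
    exact (t.1.orderIsoOfFin t.2 j).2

/-! ### The three-block inequality -/

section
open scoped Matrix.Norms.L2Operator ComplexOrder

theorem matOpNorm_eq {K : Type*} [RCLike K] {m : Type*} [Fintype m] [DecidableEq m]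
    (M : Matrix m m K) : matOpNorm M = ‖M‖ := rfl

theorem matOpNorm_eq_clm {K : Type*} [RCLike K] {m : Type*} [Fintype m] [DecidableEq m]
    (M : Matrix m m K) : matOpNorm M = ‖Matrix.toEuclideanCLM (n := m) (𝕜 := K) M‖ := rfl

theorem matOpNorm_nonneg {K : Type*} [RCLike K] {m : Type*} [Fintype m] [DecidableEq m]
    (M : Matrix m m K) : 0 ≤ matOpNorm M := norm_nonneg _

theorem matOpNorm_mul_le {K : Type*} [RCLike K] {m : Type*} [Fintype m] [DecidableEq m]
    (M N : Matrix m m K) : matOpNorm (M * N) ≤ matOpNorm M * matOpNorm N :=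
  Matrix.l2_opNorm_mul M N

theorem matOpNorm_one {K : Type*} [RCLike K] {m : Type*} [Fintype m] [DecidableEq m]
    [Nonempty m] : matOpNorm (1 : Matrix m m K) = 1 := by
  rw [matOpNorm_eq_clm, map_one, norm_one]

theorem matOpNorm_le_one_of_unitary {K : Type*} [RCLike K] {m : Type*} [Fintype m]
    [DecidableEq m] {U : Matrix m m K} (hU : U ∈ Matrix.unitaryGroup m K) : matOpNorm U ≤ 1 := by
  rcases isEmpty_or_nonempty m with hm | hm
  · rw [Subsingleton.elim U 0, matOpNorm_eq, norm_zero]; exact zero_le_one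
  · rw [matOpNorm_eq]; exact (CStarRing.norm_of_mem_unitary hU).le

theorem norm_entry_le_matOpNorm {K : Type*} [RCLike K] {m : Type*} [Fintype m] [DecidableEq m]
    (M : Matrix m m K) (i j : m) : ‖M i j‖ ≤ matOpNorm M := by
  have h1 := (Matrix.toEuclideanCLM (n := m) (𝕜 := K) M).le_opNorm (EuclideanSpace.single j 1)
  rw [PiLp.norm_single, norm_one, mul_one, ← matOpNorm_eq_clm] at h1
  refine le_trans (le_trans ?_ (PiLp.norm_apply_le _ i)) h1
  rw [Matrix.ofLp_toEuclideanCLM]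
  simp

/-- The operator norm is at most the Frobenius norm. -/
theorem matOpNorm_sq_le {K : Type*} [RCLike K] {m : Type*} [Fintype m] [DecidableEq m]
    (M : Matrix m m K) : matOpNorm M ^ 2 ≤ ∑ i : m × m, ‖M i.1 i.2‖ ^ 2 := by
  have hS : 0 ≤ ∑ i : m × m, ‖M i.1 i.2‖ ^ 2 := by positivity
  have : matOpNorm M ≤ √(∑ i : m × m, ‖M i.1 i.2‖ ^ 2) := by
    rw [matOpNorm_eq_clm]
    refine ContinuousLinearMap.opNorm_le_bound _ (Real.sqrt_nonneg _) (fun v => ?_)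
    rw [EuclideanSpace.norm_eq, EuclideanSpace.norm_eq, ← Real.sqrt_mul hS]
    refine Real.sqrt_le_sqrt ?_
    rw [Fintype.sum_prod_type, Finset.sum_mul]
    refine Finset.sum_le_sum (fun i _ => ?_)
    rw [Matrix.ofLp_toEuclideanCLM, Matrix.mulVec, dotProduct]
    calc ‖∑ j, M i j * v j‖ ^ 2 ≤ (∑ j, ‖M i j‖ * ‖v j‖) ^ 2 := by
          gcongr
          exact (norm_sum_le _ _).trans (by simp)
      _ ≤ _ := Finset.sum_mul_sq_le_sq_mul_sq _ _ _
  calc matOpNorm M ^ 2 ≤ √(∑ i : m × m, ‖M i.1 i.2‖ ^ 2) ^ 2 := by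
        gcongr; exact matOpNorm_nonneg M
    _ = _ := Real.sq_sqrt hS

theorem sum_sq_le_matOpNorm {K : Type*} [RCLike K] {m : Type*} [Fintype m] [DecidableEq m]
    (M : Matrix m m K) :
    ∑ i : m × m, ‖M i.1 i.2‖ ^ 2 ≤ (Fintype.card m : ℝ) ^ 2 * matOpNorm M ^ 2 := by
  calc ∑ i : m × m, ‖M i.1 i.2‖ ^ 2 ≤ ∑ i : m × m, matOpNorm M ^ 2 := by
        gcongr; exact norm_entry_le_matOpNorm _ _ _
    _ = _ := by
        rw [Finset.sum_const, Finset.card_univ, Fintype.card_prod, nsmul_eq_mul]; push_cast; ring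

/-- A matrix all of whose entries are bounded by `c` has operator norm at most `card * c`. -/
theorem matOpNorm_le_of_entries {K : Type*} [RCLike K] {m : Type*} [Fintype m] [DecidableEq m]
    (M : Matrix m m K) {c : ℝ} (hc : 0 ≤ c) (h : ∀ i j, ‖M i j‖ ≤ c) :
    matOpNorm M ≤ Fintype.card m * c := by
  refine le_of_sq_le_sq ?_ (by positivity)
  refine (matOpNorm_sq_le M).trans ?_
  calc ∑ i : m × m, ‖M i.1 i.2‖ ^ 2 ≤ ∑ i : m × m, c ^ 2 := by
        gcongr; exact h _ _
    _ = _ := by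
        rw [Finset.sum_const, Finset.card_univ, Fintype.card_prod, nsmul_eq_mul]; push_cast; ring

/-- If the `2 × 2` minors of `b` are at most `Γ`, then `b` behaves like a rank one operator up
to an error controlled by `Γ`: the inequality below, with `Γ = 0`, is an equality in rank one. -/
theorem opNorm_three {K : Type*} [RCLike K] {H : Type*} [NormedAddCommGroup H]
    [InnerProductSpace K H] [CompleteSpace H] (c b a : H →L[K] H) (Γ : ℝ) (hΓ : 0 ≤ Γ)
    (h : ∀ y w v x : H, ‖inner K y (b v) * inner K w (b x) - inner K y (b x) * inner K w (b v)‖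
      ≤ Γ * (‖y‖ * ‖w‖ * ‖v‖ * ‖x‖)) :
    ‖c * b‖ * ‖b * a‖ ≤ ‖c * b * a‖ * ‖b‖ + Γ * (‖c‖ * ‖a‖) := by
  set R := ‖c * b * a‖ * ‖b‖ + Γ * (‖c‖ * ‖a‖) with hR
  have hR0 : 0 ≤ R := by positivity
  have key : ∀ v x : H, ‖(c * b) v‖ * ‖(b * a) x‖ ≤ R * (‖v‖ * ‖x‖) := by
    intro v x
    by_cases h0 : ‖(c * b) v‖ * ‖(b * a) x‖ = 0
    · rw [h0]; positivity
    have hpos : 0 < ‖(c * b) v‖ * ‖(b * a) x‖ := lt_of_le_of_ne (by positivity) (Ne.symm h0)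
    set y := (c * b) v with hy
    set w := (b * a) x with hw
    have h1 := h (c.adjoint y) w v (a x)
    rw [ContinuousLinearMap.adjoint_inner_left, ContinuousLinearMap.adjoint_inner_left] at h1
    have e1 : c (b v) = y := rfl
    have e2 : b (a x) = w := rfl
    rw [e1, e2] at h1
    have h2 : ‖inner K y y * inner K w w‖ = (‖y‖ * ‖w‖) * (‖y‖ * ‖w‖) := by
      rw [norm_mul, inner_self_eq_norm_sq_to_K, inner_self_eq_norm_sq_to_K]
      simp; ring
    have h3 : ‖inner K y (c w) * inner K w (b v)‖ ≤
        (‖y‖ * (‖c * b * a‖ * ‖x‖)) * (‖w‖ * (‖b‖ * ‖v‖)) := by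
      rw [norm_mul]
      gcongr
      · refine (norm_inner_le_norm _ _).trans ?_
        gcongr
        exact (c * b * a).le_opNorm x
      · refine (norm_inner_le_norm _ _).trans ?_
        gcongr
        exact b.le_opNorm v
    have h4 : ‖c.adjoint y‖ ≤ ‖c‖ * ‖y‖ := by
      refine (ContinuousLinearMap.le_opNorm _ _).trans ?_
      rw [LinearIsometryEquiv.norm_map]
    have h5 : Γ * (‖c.adjoint y‖ * ‖w‖ * ‖v‖ * ‖a x‖) ≤
        Γ * ((‖c‖ * ‖y‖) * ‖w‖ * ‖v‖ * (‖a‖ * ‖x‖)) := by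
      gcongr
      exact a.le_opNorm x
    have h6 : ‖inner K y y * inner K w w‖ ≤
        ‖inner K y y * inner K w w - inner K y (c w) * inner K w (b v)‖ +
        ‖inner K y (c w) * inner K w (b v)‖ := by
      simpa using norm_add_le (inner K y y * inner K w w - inner K y (c w) * inner K w (b v))
        (inner K y (c w) * inner K w (b v))
    rw [h2] at h6
    refine le_of_mul_le_mul_right (a := ‖y‖ * ‖w‖) ?_ hpos
    calc (‖y‖ * ‖w‖) * (‖y‖ * ‖w‖) ≤ Γ * ((‖c‖ * ‖y‖) * ‖w‖ * ‖v‖ * (‖a‖ * ‖x‖)) +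
        (‖y‖ * (‖c * b * a‖ * ‖x‖)) * (‖w‖ * (‖b‖ * ‖v‖)) := by linarith
      _ = _ := by rw [hR]; ring
  have k2 : ∀ x : H, ‖c * b‖ * ‖(b * a) x‖ ≤ R * ‖x‖ := by
    intro x
    have : ‖(‖(b * a) x‖ : K) • (c * b)‖ ≤ R * ‖x‖ := by
      refine ContinuousLinearMap.opNorm_le_bound _ (by positivity) (fun v => ?_)
      have := key v x
      rw [smul_apply, norm_smul]
      simp only [RCLike.norm_ofReal, abs_norm]
      linarith
    rw [norm_smul] at this
    simp only [RCLike.norm_ofReal, abs_norm] at this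
    linarith
  have : ‖(‖c * b‖ : K) • (b * a)‖ ≤ R := by
    refine ContinuousLinearMap.opNorm_le_bound _ hR0 (fun x => ?_)
    rw [smul_apply, norm_smul]
    simp only [RCLike.norm_ofReal, abs_norm]
    exact k2 x
  rw [norm_smul] at this
  simpa only [RCLike.norm_ofReal, abs_norm] using this

/-- Singular value decomposition of an invertible matrix. -/
theorem exists_svd {K : Type*} [RCLike K] {d : ℕ} (B : Matrix (Fin d) (Fin d) K)
    (hB : IsUnit B) : ∃ U ∈ Matrix.unitaryGroup (Fin d) K, ∃ V ∈ Matrix.unitaryGroup (Fin d) K,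
      ∃ D : Fin d → K, B = U * Matrix.diagonal D * star V := by
  have hpd : (B.conjTranspose * B).PosDef :=
    Matrix.PosDef.conjTranspose_mul_self B (Matrix.mulVec_injective_of_isUnit hB)
  have hH := hpd.isHermitian
  set V : Matrix (Fin d) (Fin d) K := hH.eigenvectorUnitary.1 with hV
  have hVu : V ∈ Matrix.unitaryGroup (Fin d) K := hH.eigenvectorUnitary.2
  set l := hH.eigenvalues with hl
  have hlpos : ∀ i, 0 < l i := hpd.eigenvalues_pos
  have hsp : B.conjTranspose * B = V * Matrix.diagonal (RCLike.ofReal ∘ l) * star V := by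
    have := hH.spectral_theorem
    rw [Unitary.conjStarAlgAut_apply] at this
    exact this
  set s : Fin d → K := fun i => ((√(l i) : ℝ) : K) with hs
  have hs0 : ∀ i, s i ≠ 0 := fun i => by
    simp only [hs]; exact_mod_cast (Real.sqrt_pos.2 (hlpos i)).ne'
  have hss : ∀ i, s i * s i = (l i : K) := fun i => by
    simp only [hs]; rw [← RCLike.ofReal_mul, Real.mul_self_sqrt (hlpos i).le]
  have hVV : star V * V = 1 := (Matrix.mem_unitaryGroup_iff').1 hVu
  have hVV' : V * star V = 1 := (Matrix.mem_unitaryGroup_iff).1 hVu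
  refine ⟨B * V * Matrix.diagonal (fun i => (s i)⁻¹), ?_, V, hVu, s, ?_⟩
  · rw [Matrix.mem_unitaryGroup_iff']
    have h1 : star (Matrix.diagonal (fun i => (s i)⁻¹)) = Matrix.diagonal (fun i => (s i)⁻¹) := by
      rw [Matrix.star_eq_conjTranspose, Matrix.diagonal_conjTranspose]
      congr 1; ext i; simp [hs]
    rw [star_mul, star_mul, h1]
    calc Matrix.diagonal (fun i => (s i)⁻¹) * (star V * star B) *
          (B * V * Matrix.diagonal (fun i => (s i)⁻¹))
        = Matrix.diagonal (fun i => (s i)⁻¹) * (star V * (B.conjTranspose * B) * V) *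
          Matrix.diagonal (fun i => (s i)⁻¹) := by
          rw [← Matrix.star_eq_conjTranspose]; simp only [mul_assoc]
      _ = Matrix.diagonal (fun i => (s i)⁻¹) * ((star V * V) * Matrix.diagonal (RCLike.ofReal ∘ l)
            * (star V * V)) * Matrix.diagonal (fun i => (s i)⁻¹) := by
          rw [hsp]; simp only [mul_assoc]
      _ = 1 := by
          rw [hVV, one_mul, mul_one, Matrix.diagonal_mul_diagonal, Matrix.diagonal_mul_diagonal,
            ← Matrix.diagonal_one]
          congr 1; ext i
          simp only [Function.comp_apply]
          rw [← hss]
          field_simp [hs0 i]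
  · rw [mul_assoc (B * V), Matrix.diagonal_mul_diagonal]
    have : (fun i => (s i)⁻¹ * s i) = fun _ => (1 : K) := by
      ext i; exact inv_mul_cancel₀ (hs0 i)
    rw [this, Matrix.diagonal_one, mul_one, mul_assoc, hVV', mul_one]

theorem compound_mem_unitary {K : Type*} [RCLike K] {d : ℕ} (p : ℕ)
    {U : Matrix (Fin d) (Fin d) K} (hU : U ∈ Matrix.unitaryGroup (Fin d) K) :
    compound p U ∈ Matrix.unitaryGroup _ K := by
  rw [Matrix.mem_unitaryGroup_iff, Matrix.star_eq_conjTranspose] at *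
  rw [← compound_conjTranspose, ← compound_mul, hU, compound_one]


/-- The `2 × 2` minors of a diagonal matrix are controlled by the products of two distinct
diagonal entries. -/
theorem minor_bound_diagonal {K : Type*} [RCLike K] {m : Type*} [Fintype m] [DecidableEq m]
    (D : m → K) (Γ : ℝ) (hΓ : 0 ≤ Γ) (hD : ∀ s t, s ≠ t → ‖D s‖ * ‖D t‖ ≤ Γ)
    (y w v x : EuclideanSpace K m) :
    ‖inner K y (Matrix.toEuclideanCLM (n := m) (𝕜 := K) (Matrix.diagonal D) v) *
        inner K w (Matrix.toEuclideanCLM (n := m) (𝕜 := K) (Matrix.diagonal D) x) -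
      inner K y (Matrix.toEuclideanCLM (n := m) (𝕜 := K) (Matrix.diagonal D) x) *
        inner K w (Matrix.toEuclideanCLM (n := m) (𝕜 := K) (Matrix.diagonal D) v)‖ ≤
      (2 * Fintype.card m ^ 2 * Γ) * (‖y‖ * ‖w‖ * ‖v‖ * ‖x‖) := by
  have hin : ∀ y v : EuclideanSpace K m,
      inner K y (Matrix.toEuclideanCLM (n := m) (𝕜 := K) (Matrix.diagonal D) v) =
      ∑ s, star (y s) * (D s * v s) := by
    intro y v
    rw [PiLp.inner_apply]
    refine Finset.sum_congr rfl (fun s _ => ?_)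
    rw [Matrix.ofLp_toEuclideanCLM, Matrix.mulVec_diagonal, RCLike.inner_apply]
    simp [mul_comm]
  simp only [hin, Finset.sum_mul_sum]
  rw [← Finset.sum_sub_distrib]
  simp only [← Finset.sum_sub_distrib]
  have hb : ∀ s t : m, ‖star (y s) * (D s * v s) * (star (w t) * (D t * x t)) -
      star (y s) * (D s * x s) * (star (w t) * (D t * v t))‖ ≤
      2 * Γ * (‖y‖ * ‖w‖ * ‖v‖ * ‖x‖) := by
    intro s t
    have e : star (y s) * (D s * v s) * (star (w t) * (D t * x t)) -
      star (y s) * (D s * x s) * (star (w t) * (D t * v t)) =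
      D s * D t * (star (y s) * star (w t)) * (v s * x t - x s * v t) := by ring
    rw [e]
    by_cases hst : s = t
    · subst hst
      rw [mul_comm (v s), sub_self, mul_zero, norm_zero]; positivity
    rw [norm_mul, norm_mul, norm_mul, norm_mul, norm_star, norm_star]
    calc ‖D s‖ * ‖D t‖ * (‖y s‖ * ‖w t‖) * ‖v s * x t - x s * v t‖
        ≤ Γ * (‖y‖ * ‖w‖) * (‖v‖ * ‖x‖ + ‖x‖ * ‖v‖) := by
          gcongr
          · exact hD s t hst
          · exact PiLp.norm_apply_le _ _
          · exact PiLp.norm_apply_le _ _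
          · refine (norm_sub_le _ _).trans ?_
            rw [norm_mul, norm_mul]
            gcongr <;> exact PiLp.norm_apply_le _ _
      _ = _ := by ring
  calc _ ≤ ∑ s : m, ∑ t : m, 2 * Γ * (‖y‖ * ‖w‖ * ‖v‖ * ‖x‖) :=
        (norm_sum_le _ _).trans (Finset.sum_le_sum (fun s _ =>
          (norm_sum_le _ _).trans (Finset.sum_le_sum (fun t _ => hb s t))))
    _ = _ := by simp; ring

/-- The exchange `D_S D_T = D_{S ∪ i} D_{T \ i}` bounds the products of two distinct diagonal
entries of `⋀^(p+1)` by the norms of the neighbouring exterior powers. -/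
theorem diag_exchange {K : Type*} [RCLike K] {d : ℕ} (p : ℕ) (D : Fin d → K)
    (s t : {s : Finset (Fin d) // s.card = p + 1}) (hst : s ≠ t) :
    ‖∏ i ∈ s.1, D i‖ * ‖∏ i ∈ t.1, D i‖ ≤
      matOpNorm (compound p (Matrix.diagonal D)) *
      matOpNorm (compound (p + 2) (Matrix.diagonal D)) := by
  obtain ⟨a, hat, has⟩ : ∃ a ∈ t.1, a ∉ s.1 := by
    by_contra! hcon
    exact hst (Subtype.ext (Finset.eq_of_subset_of_card_le hcon (by rw [s.2, t.2])).symm)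
  have h1 : (t.1.erase a).card = p := by rw [Finset.card_erase_of_mem hat, t.2]; rfl
  have h2 : (insert a s.1).card = p + 2 := by rw [Finset.card_insert_of_notMem has, s.2]
  have e1 := norm_entry_le_matOpNorm (compound p (Matrix.diagonal D)) ⟨_, h1⟩ ⟨_, h1⟩
  have e2 := norm_entry_le_matOpNorm (compound (p + 2) (Matrix.diagonal D)) ⟨_, h2⟩ ⟨_, h2⟩
  rw [compound_diagonal, Matrix.diagonal_apply_eq] at e1 e2
  rw [← compound_diagonal] at e1 e2
  refine le_trans (le_of_eq ?_) (mul_le_mul e1 e2 (norm_nonneg _) (matOpNorm_nonneg _))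
  simp only
  rw [Finset.prod_insert has, ← Finset.mul_prod_erase _ _ hat]
  simp only [norm_mul]
  ring

theorem matOpNorm_sandwich_le {K : Type*} [RCLike K] {m : Type*} [Fintype m] [DecidableEq m]
    {U V : Matrix m m K} (B : Matrix m m K) (hU : U ∈ Matrix.unitaryGroup m K)
    (hV : V ∈ Matrix.unitaryGroup m K) : matOpNorm (U * B * V) ≤ matOpNorm B := by
  have h1 := matOpNorm_mul_le (U * B) V
  have h2 := matOpNorm_mul_le U B
  have h3 := matOpNorm_le_one_of_unitary hU
  have h4 := matOpNorm_le_one_of_unitary hV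
  have h5 := mul_le_of_le_one_right (matOpNorm_nonneg (U * B)) h4
  have h6 := mul_le_of_le_one_left (matOpNorm_nonneg B) h3
  linarith

/-- The near rank one inequality for a matrix given by a singular value decomposition whose
products of two distinct singular values are at most `Γ`. -/
theorem matOpNorm_three {K : Type*} [RCLike K] {m : Type*} [Fintype m] [DecidableEq m]
    (c b a u v : Matrix m m K) (hu : u ∈ Matrix.unitaryGroup m K)
    (hv : v ∈ Matrix.unitaryGroup m K) (D : m → K) (hb : b = u * Matrix.diagonal D * star v)
    (Γ : ℝ) (hΓ : 0 ≤ Γ) (hD : ∀ s t, s ≠ t → ‖D s‖ * ‖D t‖ ≤ Γ) :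
    matOpNorm (c * b) * matOpNorm (b * a) ≤ matOpNorm (c * b * a) * matOpNorm b +
      (2 * (Fintype.card m : ℝ) ^ 2 * Γ) * (matOpNorm c * matOpNorm a) := by
  set T := Matrix.toEuclideanCLM (n := m) (𝕜 := K) with hT
  have hv' : star v ∈ Matrix.unitaryGroup m K := Unitary.star_mem hv
  have hu' : star u ∈ Matrix.unitaryGroup m K := Unitary.star_mem hu
  have key := opNorm_three (T c) (T b) (T a) (2 * (Fintype.card m : ℝ) ^ 2 * Γ) (by positivity) ?_
  · simp only [← map_mul] at key
    exact key
  intro y w z x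
  have hin : ∀ y z, inner K y (T b z) =
      inner K (T (star u) y) (T (Matrix.diagonal D) (T (star v) z)) := by
    intro y z
    rw [map_star T u, ContinuousLinearMap.star_eq_adjoint, ContinuousLinearMap.adjoint_inner_left,
      ← mul_apply_eq_comp, ← mul_apply_eq_comp, ← map_mul, ← map_mul,
      ← hb]
  simp only [hin]
  have hn : ∀ W ∈ Matrix.unitaryGroup m K, ∀ z, ‖T W z‖ ≤ ‖z‖ := by
    intro W hW z
    refine ((T W).le_opNorm z).trans ?_
    have := matOpNorm_le_one_of_unitary hW
    rw [matOpNorm_eq_clm] at this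
    exact mul_le_of_le_one_left (norm_nonneg _) this
  refine (minor_bound_diagonal _ _ hΓ hD _ _ _ _).trans ?_
  refine mul_le_mul_of_nonneg_left ?_ (by positivity)
  exact mul_le_mul (mul_le_mul (mul_le_mul (hn _ hu' _) (hn _ hu' _) (norm_nonneg _)
    (norm_nonneg _)) (hn _ hv' _) (norm_nonneg _) (by positivity)) (hn _ hv' _) (norm_nonneg _)
    (by positivity)

/-- The three-block inequality: if `‖Λ^p B‖ ‖Λ^(p+2) B‖` is small compared with `‖Λ^(p+1) B‖²`, then
`Λ^(p+1) B` is nearly of rank one, and `‖CB‖ ‖BA‖ ≈ ‖CBA‖ ‖B‖` holds in the `(p+1)`-st exterior power. -/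
theorem compound_three {K : Type*} [RCLike K] {d : ℕ} (p : ℕ)
    (C B A : Matrix (Fin d) (Fin d) K) (hB : IsUnit B) :
    matOpNorm (compound (p + 1) (C * B)) * matOpNorm (compound (p + 1) (B * A)) ≤
      matOpNorm (compound (p + 1) (C * B * A)) * matOpNorm (compound (p + 1) B) +
      (2 * (Fintype.card {s : Finset (Fin d) // s.card = p + 1} : ℝ) ^ 2) *
        (matOpNorm (compound p B) * matOpNorm (compound (p + 2) B)) *
        (matOpNorm (compound (p + 1) C) * matOpNorm (compound (p + 1) A)) := by
  obtain ⟨U, hU, V, hV, D, hD⟩ := exists_svd B hB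
  have hV' : star V ∈ Matrix.unitaryGroup (Fin d) K := Unitary.star_mem hV
  have hU' : star U ∈ Matrix.unitaryGroup (Fin d) K := Unitary.star_mem hU
  have hdiag : Matrix.diagonal D = star U * B * V := by
    have e1 : star U * U = 1 := (Matrix.mem_unitaryGroup_iff').1 hU
    have e2 : star V * V = 1 := (Matrix.mem_unitaryGroup_iff').1 hV
    calc Matrix.diagonal D = (star U * U) * Matrix.diagonal D * (star V * V) := by
          rw [e1, e2, one_mul, mul_one]
      _ = _ := by rw [hD]; simp only [mul_assoc]
  have hle : ∀ q, matOpNorm (compound q (Matrix.diagonal D)) ≤ matOpNorm (compound q B) := by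
    intro q
    rw [hdiag, compound_mul, compound_mul]
    exact matOpNorm_sandwich_le _ (compound_mem_unitary q hU') (compound_mem_unitary q hV)
  have n0 := matOpNorm_nonneg (compound p B)
  have n1 := matOpNorm_nonneg (compound (p + 2) B)
  have n2 := matOpNorm_nonneg (compound (p + 2) (Matrix.diagonal D))
  have hmin : ∀ s t : {s : Finset (Fin d) // s.card = p + 1}, s ≠ t →
      ‖∏ i ∈ s.1, D i‖ * ‖∏ i ∈ t.1, D i‖ ≤
        matOpNorm (compound p B) * matOpNorm (compound (p + 2) B) := by
    intro s t hst
    exact (diag_exchange p D s t hst).trans (mul_le_mul (hle _) (hle _) n2 n0)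
  have hb : compound (p + 1) B = compound (p + 1) U *
      Matrix.diagonal (fun s => ∏ i ∈ s.1, D i) * star (compound (p + 1) V) := by
    rw [Matrix.star_eq_conjTranspose, ← compound_conjTranspose, ← compound_diagonal,
      ← compound_mul, ← compound_mul, ← Matrix.star_eq_conjTranspose, ← hD]
  have key := matOpNorm_three (compound (p + 1) C) (compound (p + 1) B) (compound (p + 1) A) _ _
    (compound_mem_unitary _ hU) (compound_mem_unitary _ hV) _ hb _ (mul_nonneg n0 n1) hmin
  simp only [← compound_mul] at key
  exact key

end

/-! ### Small divisors -/

theorem circle_norm_le_abs (x : ℝ) : ‖(x : UnitAddCircle)‖ ≤ |x| := by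
  rw [UnitAddCircle.norm_eq]
  simpa using round_le x 0

theorem circle_norm_eq_sub_int (x : ℝ) (k : ℤ) : ‖((x - k : ℝ) : UnitAddCircle)‖ =
    ‖(x : UnitAddCircle)‖ := by
  rw [UnitAddCircle.norm_eq, UnitAddCircle.norm_eq, round_sub_intCast]
  push_cast
  congr 1
  ring

/-- The logarithmic Diophantine condition implies a polynomial one with exponent `7/6`. -/
theorem diophantine_pow {ω a : ℝ} (ha : 1 < a) (h : Diophantine ω a) :
    ∃ c > (0 : ℝ), ∀ n : ℕ, 1 ≤ n →
      c / (n : ℝ) ^ (7 / 6 : ℝ) ≤ ‖(((n : ℝ) * ω : ℝ) : UnitAddCircle)‖ := by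
  obtain ⟨c, hc, h⟩ := h
  set ε : ℝ := 1 / (6 * a) with hε
  have hεpos : 0 < ε := by positivity
  have h2 : ∀ n : ℕ, 2 ≤ n →
      (c * ε ^ a) / (n : ℝ) ^ (7 / 6 : ℝ) ≤ ‖(((n : ℝ) * ω : ℝ) : UnitAddCircle)‖ := by
    intro n hn
    rw [UnitAddCircle.norm_eq]
    refine le_trans ?_ (h n hn (round ((n : ℝ) * ω)))
    have hn1 : (1 : ℝ) < n := by exact_mod_cast hn
    have hn0 : (0 : ℝ) < n := by linarith
    have hlog : 0 < Real.log n := Real.log_pos hn1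
    have h3 : Real.log n ^ a ≤ (n : ℝ) ^ (1 / 6 : ℝ) / ε ^ a := by
      calc Real.log n ^ a ≤ ((n : ℝ) ^ ε / ε) ^ a := by
            gcongr
            exact Real.log_le_rpow_div hn0.le hεpos
        _ = _ := by
            rw [Real.div_rpow (by positivity) hεpos.le, ← Real.rpow_mul hn0.le]
            congr 2
            rw [hε]; field_simp
    have h4 : (n : ℝ) ^ (7 / 6 : ℝ) = n * (n : ℝ) ^ (1 / 6 : ℝ) := by
      rw [show (7 / 6 : ℝ) = 1 + 1 / 6 by norm_num, Real.rpow_add hn0, Real.rpow_one]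
    have hεa : 0 < ε ^ a := by positivity
    rw [h4, div_le_div_iff₀ (by positivity) (by positivity)]
    calc c * ε ^ a * (n * Real.log n ^ a) ≤ c * ε ^ a * (n * ((n : ℝ) ^ (1 / 6 : ℝ) / ε ^ a)) := by
          gcongr
      _ = _ := by field_simp
  refine ⟨min (c * ε ^ a) ‖((ω : ℝ) : UnitAddCircle)‖, ?_, ?_⟩
  · refine lt_min (by positivity) ?_
    have h5 := h2 2 le_rfl
    have h6 : ‖((((2 : ℕ) : ℝ) * ω : ℝ) : UnitAddCircle)‖ ≤ 2 * ‖((ω : ℝ) : UnitAddCircle)‖ := by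
      have : ((((2 : ℕ) : ℝ) * ω : ℝ) : UnitAddCircle) = (ω : UnitAddCircle) + ω := by
        push_cast; rw [two_mul]
        exact AddCircle.coe_add 1 ω ω
      rw [this, two_mul]
      exact norm_add_le _ _
    have h7 : 0 < (c * ε ^ a) / ((2 : ℕ) : ℝ) ^ (7 / 6 : ℝ) := by positivity
    have h8 := h7.trans_le (h5.trans h6)
    linarith
  · intro n hn
    rcases Nat.lt_or_ge n 2 with h8 | h8
    · have : n = 1 := by omega
      subst this
      simp
    · refine le_trans ?_ (h2 n h8)
      gcongr
      exact min_le_left _ _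

/-- Points of the circle that are `g`-separated from each other and from `0`, all on one side
of `0`, satisfy `∑ ‖t‖^(-3/2) ≤ g^(-3/2) ∑ q^(-3/2)`. -/
theorem sum_spaced_half {ι : Type*} (S : Finset ι) (t : ι → ℝ) (g : ℝ) (hg : 0 < g)
    (h0 : ∀ k ∈ S, g ≤ t k) (hsep : ∀ k ∈ S, ∀ l ∈ S, k ≠ l → g ≤ |t k - t l|) :
    ∑ k ∈ S, (t k ^ (3 / 2 : ℝ))⁻¹ ≤
      (g ^ (3 / 2 : ℝ))⁻¹ * ∑' q : ℕ, ((q : ℝ) ^ (3 / 2 : ℝ))⁻¹ := by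
  have hsum : Summable (fun q : ℕ => ((q : ℝ) ^ (3 / 2 : ℝ))⁻¹) :=
    Real.summable_nat_rpow_inv.2 (by norm_num)
  set q : ι → ℕ := fun k => ⌊t k / g⌋₊ with hq
  have hinj : Set.InjOn q S := by
    intro k hk l hl hkl
    by_contra hne
    have h1 := hsep k hk l hl hne
    have a1 : (q k : ℝ) ≤ t k / g := Nat.floor_le (div_nonneg (hg.le.trans (h0 k hk)) hg.le)
    have a2 : t k / g < q k + 1 := Nat.lt_floor_add_one _
    have b1 : (q l : ℝ) ≤ t l / g := Nat.floor_le (div_nonneg (hg.le.trans (h0 l hl)) hg.le)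
    have b2 : t l / g < q l + 1 := Nat.lt_floor_add_one _
    rw [hkl] at a1 a2
    rw [le_div_iff₀ hg] at a1 b1
    rw [div_lt_iff₀ hg] at a2 b2
    have : |t k - t l| < g := by rw [abs_lt]; constructor <;> linarith
    linarith
  calc ∑ k ∈ S, (t k ^ (3 / 2 : ℝ))⁻¹
      ≤ ∑ k ∈ S, (g ^ (3 / 2 : ℝ))⁻¹ * ((q k : ℝ) ^ (3 / 2 : ℝ))⁻¹ := by
        refine Finset.sum_le_sum (fun k hk => ?_)
        have hge : 1 ≤ q k := by
          rw [hq]; simp only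
          rw [Nat.one_le_floor_iff, le_div_iff₀ hg, one_mul]
          exact h0 k hk
        have hge' : (1 : ℝ) ≤ q k := by exact_mod_cast hge
        have a1 : (q k : ℝ) ≤ t k / g := Nat.floor_le (div_nonneg (hg.le.trans (h0 k hk)) hg.le)
        rw [le_div_iff₀ hg] at a1
        rw [← mul_inv, ← Real.mul_rpow hg.le (by linarith)]
        gcongr
        linarith
    _ = (g ^ (3 / 2 : ℝ))⁻¹ * ∑ k ∈ S, ((q k : ℝ) ^ (3 / 2 : ℝ))⁻¹ := by rw [Finset.mul_sum]
    _ = (g ^ (3 / 2 : ℝ))⁻¹ * ∑ r ∈ S.image q, ((r : ℝ) ^ (3 / 2 : ℝ))⁻¹ := by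
        rw [Finset.sum_image hinj]
    _ ≤ _ := by
        gcongr
        exact hsum.sum_le_tsum _ (fun i _ => by positivity)

/-- The two-sided form of `sum_spaced_half` for the points `k ω` of the circle. -/
theorem sum_spaced (ω : ℝ) (S : Finset ℕ) (g : ℝ) (hg : 0 < g)
    (h0 : ∀ k ∈ S, g ≤ ‖(((k : ℝ) * ω : ℝ) : UnitAddCircle)‖)
    (hsep : ∀ k ∈ S, ∀ l ∈ S, k < l → g ≤ ‖((((l - k : ℕ) : ℝ) * ω : ℝ) : UnitAddCircle)‖) :
    ∑ k ∈ S, (‖(((k : ℝ) * ω : ℝ) : UnitAddCircle)‖ ^ (3 / 2 : ℝ))⁻¹ ≤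
      2 * ((g ^ (3 / 2 : ℝ))⁻¹ * ∑' q : ℕ, ((q : ℝ) ^ (3 / 2 : ℝ))⁻¹) := by
  set t : ℕ → ℝ := fun k => (k : ℝ) * ω - round ((k : ℝ) * ω) with ht
  have hn : ∀ k : ℕ, ‖(((k : ℝ) * ω : ℝ) : UnitAddCircle)‖ = |t k| := fun k =>
    UnitAddCircle.norm_eq
  have hsep1 : ∀ k ∈ S, ∀ l ∈ S, k < l → g ≤ |t l - t k| := by
    intro k hk l hl hkl
    refine (hsep k hk l hl hkl).trans ?_
    refine le_trans (le_of_eq ?_) (circle_norm_le_abs _)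
    rw [← circle_norm_eq_sub_int _ (round ((l : ℝ) * ω) - round ((k : ℝ) * ω))]
    congr 2
    rw [Nat.cast_sub hkl.le]
    simp only [ht]
    push_cast
    ring
  have hsep2 : ∀ k ∈ S, ∀ l ∈ S, k ≠ l → g ≤ |t k - t l| := by
    intro k hk l hl hkl
    rcases lt_or_gt_of_ne hkl with h | h
    · rw [abs_sub_comm]; exact hsep1 k hk l hl h
    · exact hsep1 l hl k hk h
  have hp := sum_spaced_half (S.filter (fun k => 0 ≤ t k)) t g hg
    (fun k hk => by
      rw [Finset.mem_filter] at hk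
      have := h0 k hk.1
      rwa [hn, abs_of_nonneg hk.2] at this)
    (fun k hk l hl => hsep2 k (Finset.mem_filter.1 hk).1 l (Finset.mem_filter.1 hl).1)
  have hm := sum_spaced_half (S.filter (fun k => ¬ 0 ≤ t k)) (fun k => - t k) g hg
    (fun k hk => by
      rw [Finset.mem_filter] at hk
      have := h0 k hk.1
      rwa [hn, abs_of_neg (not_le.1 hk.2)] at this)
    (fun k hk l hl hkl => by
      have := hsep2 k (Finset.mem_filter.1 hk).1 l (Finset.mem_filter.1 hl).1 hkl
      rwa [← abs_neg, neg_sub, ← neg_sub_neg] at this)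
  rw [← Finset.sum_filter_add_sum_filter_not S (fun k => 0 ≤ t k)]
  have e1 : ∑ k ∈ S.filter (fun k => 0 ≤ t k),
      (‖(((k : ℝ) * ω : ℝ) : UnitAddCircle)‖ ^ (3 / 2 : ℝ))⁻¹ =
      ∑ k ∈ S.filter (fun k => 0 ≤ t k), (t k ^ (3 / 2 : ℝ))⁻¹ :=
    Finset.sum_congr rfl (fun k hk => by rw [hn, abs_of_nonneg (Finset.mem_filter.1 hk).2])
  have e2 : ∑ k ∈ S.filter (fun k => ¬ 0 ≤ t k),
      (‖(((k : ℝ) * ω : ℝ) : UnitAddCircle)‖ ^ (3 / 2 : ℝ))⁻¹ =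
      ∑ k ∈ S.filter (fun k => ¬ 0 ≤ t k), ((- t k) ^ (3 / 2 : ℝ))⁻¹ :=
    Finset.sum_congr rfl (fun k hk => by
      rw [hn, abs_of_neg (not_le.1 (Finset.mem_filter.1 hk).2)])
  rw [e1, e2]
  linarith

/-- On a dyadic block `[2^i, 2^(i+1))` the points `k ω` are separated by a multiple of
`2^(-7i/6)`, so by `sum_spaced` the block contributes `O(2^(-2i) · 2^(7i/4))`. -/
theorem summable_small_divisors_nat {ω a : ℝ} (ha : 1 < a) (h : Diophantine ω a) :
    Summable (fun k : ℕ => ((k : ℝ) ^ 2)⁻¹ *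
      (‖(((k : ℝ) * ω : ℝ) : UnitAddCircle)‖ ^ (3 / 2 : ℝ))⁻¹) := by
  obtain ⟨c, hc, h⟩ := diophantine_pow ha h
  set f : ℕ → ℝ := fun k : ℕ => ((k : ℝ) ^ 2)⁻¹ *
      (‖(((k : ℝ) * ω : ℝ) : UnitAddCircle)‖ ^ (3 / 2 : ℝ))⁻¹ with hf
  have hf0 : ∀ k, 0 ≤ f k := fun k => by simp only [hf]; positivity
  set Z : ℝ := ∑' q : ℕ, ((q : ℝ) ^ (3 / 2 : ℝ))⁻¹ with hZ
  have hZ0 : 0 ≤ Z := tsum_nonneg (fun q => by positivity)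
  set r : ℝ := (2 : ℝ) ^ (-(1 / 4) : ℝ) with hr
  have hr0 : 0 < r := by positivity
  have hr1 : r < 1 := Real.rpow_lt_one_of_one_lt_of_neg (by norm_num) (by norm_num)
  set Q : ℝ := 2 * ((c ^ (3 / 2 : ℝ))⁻¹ * (2 : ℝ) ^ (7 / 4 : ℝ) * Z) with hQ
  have hQ0 : 0 ≤ Q := by positivity
  have hblock : ∀ j : ℕ, ∑ k ∈ Finset.Ico (2 ^ j) (2 ^ (j + 1)), f k ≤ Q * r ^ j := by
    intro j
    set X : ℝ := (2 : ℝ) ^ (j + 1) with hX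
    set g : ℝ := c / X ^ (7 / 6 : ℝ) with hg
    have hX0 : 0 < X := by positivity
    have hg0 : 0 < g := by positivity
    have hgn : ∀ n : ℕ, 1 ≤ n → n < 2 ^ (j + 1) →
        g ≤ ‖(((n : ℝ) * ω : ℝ) : UnitAddCircle)‖ := by
      intro n hn hn2
      refine le_trans ?_ (h n hn)
      have : (0 : ℝ) < n := by exact_mod_cast hn
      rw [hg]
      gcongr
      rw [hX]; exact_mod_cast hn2.le
    have hs := sum_spaced ω (Finset.Ico (2 ^ j) (2 ^ (j + 1))) g hg0
      (fun k hk => by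
        rw [Finset.mem_Ico] at hk
        exact hgn k (Nat.one_le_two_pow.trans hk.1) hk.2)
      (fun k hk l hl hkl => by
        rw [Finset.mem_Ico] at hk hl
        exact hgn (l - k) (by omega) (by omega))
    have hgpow : (g ^ (3 / 2 : ℝ))⁻¹ = (c ^ (3 / 2 : ℝ))⁻¹ * X ^ (7 / 4 : ℝ) := by
      rw [hg, Real.div_rpow hc.le (by positivity), ← Real.rpow_mul hX0.le, inv_div]
      rw [show (7 / 6 * (3 / 2) : ℝ) = 7 / 4 by norm_num]
      ring
    calc ∑ k ∈ Finset.Ico (2 ^ j) (2 ^ (j + 1)), f k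
        ≤ ∑ k ∈ (Finset.Ico (2 ^ j) (2 ^ (j + 1)) : Finset ℕ), (((2 : ℝ) ^ j) ^ 2)⁻¹ *
          (‖(((k : ℝ) * ω : ℝ) : UnitAddCircle)‖ ^ (3 / 2 : ℝ))⁻¹ := by
          refine Finset.sum_le_sum (fun k hk => ?_)
          rw [Finset.mem_Ico] at hk
          simp only [hf]
          gcongr
          exact_mod_cast hk.1
      _ = (((2 : ℝ) ^ j) ^ 2)⁻¹ * ∑ k ∈ (Finset.Ico (2 ^ j) (2 ^ (j + 1)) : Finset ℕ),
          (‖(((k : ℝ) * ω : ℝ) : UnitAddCircle)‖ ^ (3 / 2 : ℝ))⁻¹ := by rw [Finset.mul_sum]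
      _ ≤ (((2 : ℝ) ^ j) ^ 2)⁻¹ * (2 * ((g ^ (3 / 2 : ℝ))⁻¹ * Z)) := by gcongr
      _ = Q * r ^ j := by
          rw [hgpow, hQ, hr, hX]
          have e1 : ((2 : ℝ) ^ (j + 1)) ^ (7 / 4 : ℝ) =
              (2 : ℝ) ^ (7 / 4 : ℝ) * (2 : ℝ) ^ ((7 / 4 : ℝ) * j) := by
            rw [← Real.rpow_natCast, ← Real.rpow_mul (by norm_num), ← Real.rpow_add (by norm_num)]
            congr 1; push_cast; ring
          have e2 : ((2 : ℝ) ^ (-(1 / 4) : ℝ)) ^ j = (2 : ℝ) ^ (-(1 / 4) * (j : ℝ)) := by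
            rw [← Real.rpow_natCast, ← Real.rpow_mul (by norm_num)]
          have e3 : (((2 : ℝ) ^ j) ^ 2)⁻¹ = (2 : ℝ) ^ (-2 * (j : ℝ)) := by
            rw [← pow_mul, ← Real.rpow_natCast, ← Real.rpow_neg (by norm_num)]
            congr 1; push_cast; ring
          have e4 : (2 : ℝ) ^ (-(1 / 4) * (j : ℝ)) =
              (2 : ℝ) ^ (-2 * (j : ℝ)) * (2 : ℝ) ^ ((7 / 4 : ℝ) * j) := by
            rw [← Real.rpow_add (by norm_num)]
            congr 1; ring
          rw [e1, e2, e3, e4]; ring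
  have hdy : ∀ J : ℕ, ∑ k ∈ Finset.Ico 1 (2 ^ J), f k ≤ ∑ j ∈ Finset.range J, Q * r ^ j := by
    intro J
    induction J with
    | zero => simp
    | succ J ih =>
      rw [Finset.sum_range_succ, ← Finset.sum_Ico_consecutive f (Nat.one_le_two_pow (n := J))
        (Nat.pow_le_pow_right (by norm_num) (Nat.le_succ J))]
      exact add_le_add ih (hblock J)
  refine summable_of_sum_range_le (c := Q * (1 - r)⁻¹) hf0 (fun n => ?_)
  have hz : f 0 = 0 := by simp [hf]
  calc ∑ k ∈ Finset.range n, f k ≤ ∑ k ∈ Finset.range (2 ^ n), f k :=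
        Finset.sum_le_sum_of_subset_of_nonneg
          (Finset.range_subset_range.2 Nat.lt_two_pow_self.le) (fun i _ _ => hf0 i)
    _ = ∑ k ∈ Finset.Ico 1 (2 ^ n), f k := by
        rw [Finset.range_eq_Ico, Finset.sum_eq_sum_Ico_succ_bot (by positivity), hz, zero_add]
    _ ≤ ∑ j ∈ Finset.range n, Q * r ^ j := hdy n
    _ = Q * ∑ j ∈ Finset.range n, r ^ j := by rw [Finset.mul_sum]
    _ ≤ Q * (1 - r)⁻¹ := by
        gcongr
        rw [← tsum_geometric_of_lt_one hr0.le hr1]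
        exact (summable_geometric_of_lt_one hr0.le hr1).sum_le_tsum _ (fun i _ => by positivity)

theorem summable_small_divisors {ω a : ℝ} (ha : 1 < a) (h : Diophantine ω a) :
    Summable (fun k : ℤ => ((k : ℝ) ^ 2)⁻¹ *
      (‖(((k : ℝ) * ω : ℝ) : UnitAddCircle)‖ ^ (3 / 2 : ℝ))⁻¹) := by
  refine Summable.of_nat_of_neg ?_ ?_
  · simpa using summable_small_divisors_nat ha h
  · refine (summable_small_divisors_nat ha h).congr (fun k => ?_)
    have e : ((((-(k : ℤ) : ℤ) : ℝ) * ω : ℝ) : UnitAddCircle) =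
        -(((k : ℝ) * ω : ℝ) : UnitAddCircle) := by
      rw [← AddCircle.coe_neg]
      congr 1
      push_cast
      ring
    rw [e, norm_neg]
    push_cast
    rw [neg_sq]

/-! ### A second order differential inequality -/

theorem sinh_mul_le {t X : ℝ} (ht0 : 0 ≤ t) (ht1 : t ≤ 1) (hX : 0 ≤ X) :
    Real.sinh (t * X) ≤ t * Real.sinh X := by
  have hc : ConvexOn ℝ (Set.Ici (0 : ℝ)) Real.sinh := by
    refine convexOn_of_deriv2_nonneg (convex_Ici 0) Real.continuous_sinh.continuousOn
      Real.differentiable_sinh.differentiableOn ?_ ?_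
    · rw [Real.deriv_sinh]; exact Real.differentiable_cosh.differentiableOn
    · intro x hx
      rw [interior_Ici] at hx
      simp only [Function.iterate_succ, Function.iterate_zero, Function.comp, id,
        Real.deriv_sinh, Real.deriv_cosh]
      exact (Real.sinh_pos_iff.2 hx).le
  have := hc.2 (Set.mem_Ici.2 hX) (Set.mem_Ici.2 le_rfl) ht0 (sub_nonneg.2 ht1) (by ring)
  simpa using this

/-- One-sided form of `ode_bound`. -/
theorem ode_bound_aux {r κ : ℝ} (hr : 0 < r) (hκ : 0 < κ) {s s1 s2 J J1 J2 : ℝ → ℝ}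
    (hs : ∀ y ∈ Set.Icc 0 r, HasDerivAt s (s1 y) y)
    (hs1 : ∀ y ∈ Set.Icc 0 r, HasDerivAt s1 (s2 y) y)
    (hJ : ∀ y ∈ Set.Icc 0 r, HasDerivAt J (J1 y) y)
    (hJ1 : ∀ y ∈ Set.Icc 0 r, HasDerivAt J1 (J2 y) y)
    (h0 : s1 0 = 0) (hJ0 : J1 0 = 0)
    (hle : ∀ y ∈ Set.Icc 0 r, |s2 y - κ ^ 2 * s y| ≤ J2 y) :
    κ * (-s 0) ≤ (J r - J 0) / r + |s r| / r := by
  set σ := Real.sinh (κ * r) with hσ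
  have hκr : 0 < κ * r := by positivity
  have hσ0 : 0 < σ := Real.sinh_pos_iff.2 hκr
  set Ψ : ℝ → ℝ := fun y => σ * ((1 - y / r) * J1 y + J y / r) -
    (Real.sinh (κ * (r - y)) * s1 y + κ * Real.cosh (κ * (r - y)) * s y) with hΨ
  have hder : ∀ y ∈ Set.Icc 0 r, HasDerivAt Ψ
      (σ * ((1 - y / r) * J2 y) - Real.sinh (κ * (r - y)) * (s2 y - κ ^ 2 * s y)) y := by
    intro y hy
    have e1 : HasDerivAt (fun y => κ * (r - y)) (-κ) y := by
      simpa using ((hasDerivAt_id y).const_sub r).const_mul κ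
    have e2 := e1.sinh
    have e3 := e1.cosh
    have e4 : HasDerivAt (fun y => 1 - y / r) (-(1 / r)) y := by
      simpa using ((hasDerivAt_id y).div_const r).const_sub 1
    have := (((e4.mul (hJ1 y hy)).add ((hJ y hy).div_const r)).const_mul σ).sub
      ((e2.mul (hs1 y hy)).add ((e3.const_mul κ).mul (hs y hy)))
    refine this.congr_deriv ?_
    ring
  have hmono : MonotoneOn Ψ (Set.Icc 0 r) := by
    refine monotoneOn_of_hasDerivWithinAt_nonneg (convex_Icc 0 r)
      (fun y hy => (hder y hy).continuousAt.continuousWithinAt)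
      (fun y hy => (hder y (interior_subset hy)).hasDerivWithinAt) (fun y hy => ?_)
    have hy := interior_subset hy
    have ht0 : 0 ≤ 1 - y / r := by
      rw [sub_nonneg, div_le_one hr]; exact hy.2
    have ht1 : 1 - y / r ≤ 1 := by
      have : 0 ≤ y / r := div_nonneg hy.1 hr.le
      linarith
    have hw := sinh_mul_le ht0 ht1 hκr.le
    rw [show (1 - y / r) * (κ * r) = κ * (r - y) by field_simp] at hw
    have hw0 : 0 ≤ Real.sinh (κ * (r - y)) :=
      Real.sinh_nonneg_iff.2 (mul_nonneg hκ.le (sub_nonneg.2 hy.2))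
    have h1 := hle y hy
    have h2 : Real.sinh (κ * (r - y)) * (s2 y - κ ^ 2 * s y) ≤
        Real.sinh (κ * (r - y)) * J2 y :=
      mul_le_mul_of_nonneg_left ((le_abs_self _).trans h1) hw0
    have h3 : Real.sinh (κ * (r - y)) * J2 y ≤ (1 - y / r) * σ * J2 y :=
      mul_le_mul_of_nonneg_right hw ((abs_nonneg _).trans h1)
    nlinarith
  have hfin := hmono (Set.left_mem_Icc.2 hr.le) (Set.right_mem_Icc.2 hr.le) hr.le
  simp only [hΨ, h0, hJ0, sub_self, mul_zero, Real.sinh_zero, Real.cosh_zero, zero_div, sub_zero,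
    div_self hr.ne', zero_mul, zero_add, mul_one] at hfin
  have hcs : σ < Real.cosh (κ * r) := Real.sinh_lt_cosh _
  have hκσ : κ ≤ σ / r := by
    rw [le_div_iff₀ hr]; exact Real.self_le_sinh_iff.2 hκr.le
  by_cases hneg : s 0 ≤ 0
  · have h1 : κ * σ * (-s 0) ≤ κ * Real.cosh (κ * r) * (-s 0) := by
      refine mul_le_mul_of_nonneg_right ?_ (by linarith)
      exact mul_le_mul_of_nonneg_left hcs.le hκ.le
    have h2 : -(κ * s r) ≤ σ / r * |s r| := by
      calc -(κ * s r) = κ * (- s r) := by ring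
        _ ≤ κ * |s r| := mul_le_mul_of_nonneg_left (neg_le_abs _) hκ.le
        _ ≤ _ := mul_le_mul_of_nonneg_right hκσ (abs_nonneg _)
    have h3 : σ * (κ * (-s 0)) ≤ σ * ((J r - J 0) / r + |s r| / r) := by
      calc σ * (κ * (-s 0)) = κ * σ * (-s 0) := by ring
        _ ≤ σ * (J r / r) - σ * (J 0 / r) + σ / r * |s r| := by linarith
        _ = _ := by ring
    exact le_of_mul_le_mul_left h3 hσ0
  · push Not at hneg
    have hJJ : 0 ≤ J r - J 0 := by
      have hm1 : MonotoneOn J1 (Set.Icc 0 r) :=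
        monotoneOn_of_hasDerivWithinAt_nonneg (convex_Icc 0 r)
          (fun y hy => (hJ1 y hy).continuousAt.continuousWithinAt)
          (fun y hy => (hJ1 y (interior_subset hy)).hasDerivWithinAt)
          (fun y hy => (abs_nonneg _).trans (hle y (interior_subset hy)))
      have hm : MonotoneOn J (Set.Icc 0 r) :=
        monotoneOn_of_hasDerivWithinAt_nonneg (convex_Icc 0 r)
          (fun y hy => (hJ y hy).continuousAt.continuousWithinAt)
          (fun y hy => (hJ y (interior_subset hy)).hasDerivWithinAt)
          (fun y hy => by
            have := hm1 (Set.left_mem_Icc.2 hr.le) (interior_subset hy) (interior_subset hy).1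
            rwa [hJ0] at this)
      exact sub_nonneg.2 (hm (Set.left_mem_Icc.2 hr.le) (Set.right_mem_Icc.2 hr.le) hr.le)
    have : 0 ≤ (J r - J 0) / r + |s r| / r :=
      add_nonneg (div_nonneg hJJ hr.le) (div_nonneg (abs_nonneg _) hr.le)
    nlinarith

/-- If `|s'' - κ² s| ≤ J''` on `[0, r]` and `s`, `J` have zero derivative at `0`, then
`κ |s 0| ≤ (J r - J 0 + |s r|) / r`: test against the weight `sinh (κ (r - y))`, which is
dominated by the linear function `(1 - y / r) sinh (κ r)`. -/
theorem ode_bound {r κ : ℝ} (hr : 0 < r) (hκ : 0 < κ) {s s1 s2 J J1 J2 : ℝ → ℝ}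
    (hs : ∀ y ∈ Set.Icc 0 r, HasDerivAt s (s1 y) y)
    (hs1 : ∀ y ∈ Set.Icc 0 r, HasDerivAt s1 (s2 y) y)
    (hJ : ∀ y ∈ Set.Icc 0 r, HasDerivAt J (J1 y) y)
    (hJ1 : ∀ y ∈ Set.Icc 0 r, HasDerivAt J1 (J2 y) y)
    (h0 : s1 0 = 0) (hJ0 : J1 0 = 0)
    (hle : ∀ y ∈ Set.Icc 0 r, |s2 y - κ ^ 2 * s y| ≤ J2 y) :
    κ * |s 0| ≤ (J r - J 0) / r + |s r| / r := by
  rcases abs_cases (s 0) with ⟨h, -⟩ | ⟨h, -⟩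
  · rw [h]
    have := ode_bound_aux hr hκ (s := fun y => - s y) (s1 := fun y => - s1 y)
      (s2 := fun y => - s2 y) (fun y hy => (hs y hy).neg) (fun y hy => (hs1 y hy).neg)
      hJ hJ1 (by simp [h0]) hJ0 (fun y hy => by
        have := hle y hy
        rwa [← abs_neg, show -(s2 y - κ ^ 2 * s y) = -s2 y - κ ^ 2 * -s y by ring] at this)
    simpa using this
  · rw [h]
    exact ode_bound_aux hr hκ hs hs1 hJ hJ1 h0 hJ0 hle

/-- Differentiation of `y ↦ ∫ V(x, y) c(x) dx` under the integral sign. -/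
theorem hasDerivAt_integral_mul {ρ : ℝ} {V Vy : ℝ → ℝ → ℝ} {c : ℝ → ℝ} (hc : Continuous c)
    (hVc : ∀ y, |y| < ρ → Continuous (fun x => V x y))
    (hV : ∀ x y, |y| < ρ → HasDerivAt (fun y => V x y) (Vy x y) y)
    (hVy : ContinuousOn (fun q : ℝ × ℝ => Vy q.1 q.2) {q | |q.2| < ρ}) {y : ℝ} (hy : |y| < ρ) :
    HasDerivAt (fun y => ∫ x in (0:ℝ)..1, V x y * c x) (∫ x in (0:ℝ)..1, Vy x y * c x) y := by
  obtain ⟨r, hyr, hrρ⟩ := exists_between hy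
  have hK : IsCompact (Set.Icc (0:ℝ) 1 ×ˢ Set.Icc (-r) r) := isCompact_Icc.prod isCompact_Icc
  have hsub : (Set.Icc (0:ℝ) 1 ×ˢ Set.Icc (-r) r) ⊆ {q : ℝ × ℝ | |q.2| < ρ} := fun q hq =>
    (abs_le.2 hq.2).trans_lt hrρ
  obtain ⟨B, hB⟩ := hK.exists_bound_of_continuousOn (f := fun q : ℝ × ℝ => Vy q.1 q.2 * c q.1)
    ((hVy.mono hsub).mul (hc.comp continuous_fst).continuousOn)
  have hnear : ∀ᶠ t in nhds y, |t| < r := continuous_abs.continuousAt.eventually_lt_const hyr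
  refine (intervalIntegral.hasDerivAt_integral_of_dominated_loc_of_deriv_le
    (F := fun y x => V x y * c x) (F' := fun y x => Vy x y * c x) (bound := fun _ => B)
    (s := {t | |t| < r}) hnear ?_ ?_ ?_ ?_ ?_ ?_).2
  · filter_upwards [hnear] with t ht
    exact ((hVc t (ht.trans hrρ)).mul hc).aestronglyMeasurable
  · exact ((hVc y hy).mul hc).intervalIntegrable _ _
  · have : Continuous (fun x => Vy x y) :=
      hVy.comp_continuous (f := fun x => (x, y)) (by fun_prop) (fun x => hy)
    exact (this.mul hc).aestronglyMeasurable
  · refine Filter.Eventually.of_forall (fun x hx t ht => ?_)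
    rw [Set.uIoc_of_le zero_le_one] at hx
    exact hB (x, t) ⟨⟨hx.1.le, hx.2⟩, abs_le.1 (le_of_lt ht)⟩
  · exact intervalIntegrable_const
  · exact Filter.Eventually.of_forall (fun x _ t ht =>
      (hV x t (lt_trans ht hrρ)).mul_const (c x))

/-! ### Fourier decay of subharmonic functions -/

/-- A smooth subharmonic function on a strip, `1`-periodic in `x` and bounded by `H`, has
Fourier coefficients `O(H / |k|)` on the real axis. Here `Vx, Vy, Vxx, Vyy` are the partial
derivatives of `V`. -/
theorem fourier_decay_cos {ρ r H : ℝ} (hr : 0 < r) (hrρ : r < ρ) {V Vx Vy Vxx Vyy : ℝ → ℝ → ℝ}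
    (hVx : ∀ x y, |y| < ρ → HasDerivAt (fun x => V x y) (Vx x y) x)
    (hVxx : ∀ x y, |y| < ρ → HasDerivAt (fun x => Vx x y) (Vxx x y) x)
    (hVy : ∀ x y, |y| < ρ → HasDerivAt (fun y => V x y) (Vy x y) y)
    (hVyy : ∀ x y, |y| < ρ → HasDerivAt (fun y => Vy x y) (Vyy x y) y)
    (cVy : ContinuousOn (fun q : ℝ × ℝ => Vy q.1 q.2) {q | |q.2| < ρ})
    (cVxx : ContinuousOn (fun q : ℝ × ℝ => Vxx q.1 q.2) {q | |q.2| < ρ})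
    (cVyy : ContinuousOn (fun q : ℝ × ℝ => Vyy q.1 q.2) {q | |q.2| < ρ})
    (pV : ∀ x y, V (x + 1) y = V x y) (pVx : ∀ x y, Vx (x + 1) y = Vx x y)
    (hsub : ∀ x y, |y| < ρ → 0 ≤ Vxx x y + Vyy x y)
    (hH : ∀ x y, |y| < ρ → |V x y| ≤ H) (k : ℕ) (hk : 1 ≤ k) (θ : ℝ) :
    |∫ x in (0:ℝ)..1, V x 0 * Real.cos (2 * Real.pi * k * x + θ)| ≤
      3 * H / (r * (2 * Real.pi * k)) := by
  set κ : ℝ := 2 * Real.pi * k with hκ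
  have hk' : (1 : ℝ) ≤ k := by exact_mod_cast hk
  have hκ0 : 0 < κ := by positivity
  set c : ℝ → ℝ := fun x => Real.cos (κ * x + θ) with hc
  set c1 : ℝ → ℝ := fun x => -(κ * Real.sin (κ * x + θ)) with hc1
  have cc : Continuous c := by fun_prop
  have hdc : ∀ x, HasDerivAt c (c1 x) x := by
    intro x
    have : HasDerivAt (fun x => κ * x + θ) κ x := by
      simpa using ((hasDerivAt_id x).const_mul κ).add_const θ
    refine this.cos.congr_deriv ?_
    simp only [hc1]; ring
  have hdc1 : ∀ x, HasDerivAt c1 (-(κ ^ 2 * c x)) x := by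
    intro x
    have : HasDerivAt (fun x => κ * x + θ) κ x := by
      simpa using ((hasDerivAt_id x).const_mul κ).add_const θ
    refine ((this.sin.const_mul κ).neg).congr_deriv ?_
    simp only [hc]; ring
  have pc : ∀ x, c (x + 1) = c x := by
    intro x
    simp only [hc, hκ]
    rw [show 2 * Real.pi * k * (x + 1) + θ = 2 * Real.pi * k * x + θ + k * (2 * Real.pi) by ring,
      Real.cos_add_nat_mul_two_pi]
  have pc1 : ∀ x, c1 (x + 1) = c1 x := by
    intro x
    simp only [hc1, hκ]
    rw [show 2 * Real.pi * k * (x + 1) + θ = 2 * Real.pi * k * x + θ + k * (2 * Real.pi) by ring,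
      Real.sin_add_nat_mul_two_pi]
  have hcle : ∀ x, |c x| ≤ 1 := fun x => Real.abs_cos_le_one _
  have cVl : ∀ y, |y| < ρ → Continuous (fun x => V x y) := fun y hy =>
    continuous_iff_continuousAt.2 (fun x => (hVx x y hy).continuousAt)
  have slice : ∀ {W : ℝ → ℝ → ℝ}, ContinuousOn (fun q : ℝ × ℝ => W q.1 q.2) {q | |q.2| < ρ} →
      ∀ y, |y| < ρ → Continuous (fun x => W x y) := fun hW y hy =>
    hW.comp_continuous (f := fun x => (x, y)) (by fun_prop) (fun x => hy)
  have c1l : Continuous (fun _ : ℝ => (1 : ℝ)) := continuous_const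
  -- the moments against `c` and against `1`
  set q : ℝ → ℝ := fun y => ∫ x in (0:ℝ)..1, V x y * c x with hq
  set q1 : ℝ → ℝ := fun y => ∫ x in (0:ℝ)..1, Vy x y * c x with hq1
  set q2 : ℝ → ℝ := fun y => ∫ x in (0:ℝ)..1, Vyy x y * c x with hq2
  set I : ℝ → ℝ := fun y => ∫ x in (0:ℝ)..1, V x y * 1 with hI
  set I1 : ℝ → ℝ := fun y => ∫ x in (0:ℝ)..1, Vy x y * 1 with hI1
  set I2 : ℝ → ℝ := fun y => ∫ x in (0:ℝ)..1, Vyy x y * 1 with hI2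
  have dq : ∀ y, |y| < ρ → HasDerivAt q (q1 y) y := fun y hy =>
    hasDerivAt_integral_mul cc cVl hVy cVy hy
  have dq1 : ∀ y, |y| < ρ → HasDerivAt q1 (q2 y) y := fun y hy =>
    hasDerivAt_integral_mul cc (slice cVy) hVyy cVyy hy
  have dI : ∀ y, |y| < ρ → HasDerivAt I (I1 y) y := fun y hy =>
    hasDerivAt_integral_mul c1l cVl hVy cVy hy
  have dI1 : ∀ y, |y| < ρ → HasDerivAt I1 (I2 y) y := fun y hy =>
    hasDerivAt_integral_mul c1l (slice cVy) hVyy cVyy hy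
  -- integration by parts in `x`
  have parts : ∀ y, |y| < ρ → ∫ x in (0:ℝ)..1, (Vxx x y * c x + κ ^ 2 * (V x y * c x)) = 0 := by
    intro y hy
    rw [intervalIntegral.integral_eq_sub_of_hasDerivAt
      (f := fun x => Vx x y * c x - V x y * c1 x)]
    · have e1 := pV 0 y
      have e2 := pVx 0 y
      have e3 := pc 0
      have e4 := pc1 0
      rw [zero_add] at e1 e2 e3 e4
      simp only [e1, e2, e3, e4, sub_self]
    · intro x _
      refine (((hVxx x y hy).mul (hdc x)).sub ((hVx x y hy).mul (hdc1 x))).congr_deriv ?_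
      ring
    · exact Continuous.intervalIntegrable
        (((slice cVxx y hy).mul cc).add (((cVl y hy).mul cc).const_mul _)) _ _
  have parts0 : ∀ y, |y| < ρ → ∫ x in (0:ℝ)..1, Vxx x y = 0 := by
    intro y hy
    rw [intervalIntegral.integral_eq_sub_of_hasDerivAt (f := fun x => Vx x y)
      (fun x _ => hVxx x y hy) ((slice cVxx y hy).intervalIntegrable _ _)]
    have e2 := pVx 0 y
    rw [zero_add] at e2
    rw [e2, sub_self]
  have key : ∀ y, |y| < ρ → |q2 y - κ ^ 2 * q y| ≤ I2 y := by
    intro y hy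
    have iv : IntervalIntegrable (fun x => V x y * c x) volume 0 1 :=
      ((cVl y hy).mul cc).intervalIntegrable _ _
    have ixx : IntervalIntegrable (fun x => Vxx x y * c x) volume 0 1 :=
      ((slice cVxx y hy).mul cc).intervalIntegrable _ _
    have iyy : IntervalIntegrable (fun x => Vyy x y * c x) volume 0 1 :=
      ((slice cVyy y hy).mul cc).intervalIntegrable _ _
    have ixx' : IntervalIntegrable (fun x => Vxx x y) volume 0 1 :=
      (slice cVxx y hy).intervalIntegrable _ _
    have iyy' : IntervalIntegrable (fun x => Vyy x y) volume 0 1 :=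
      (slice cVyy y hy).intervalIntegrable _ _
    have e1 := parts y hy
    rw [intervalIntegral.integral_add ixx (iv.const_mul _),
      intervalIntegral.integral_const_mul] at e1
    have e2 : q2 y - κ ^ 2 * q y = ∫ x in (0:ℝ)..1, (Vxx x y + Vyy x y) * c x := by
      have : ∫ x in (0:ℝ)..1, (Vxx x y + Vyy x y) * c x =
          (∫ x in (0:ℝ)..1, Vxx x y * c x) + ∫ x in (0:ℝ)..1, Vyy x y * c x := by
        rw [← intervalIntegral.integral_add ixx iyy]
        congr 1; ext x; ring
      rw [this]
      simp only [hq2, hq]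
      linarith
    have e3 : I2 y = ∫ x in (0:ℝ)..1, (Vxx x y + Vyy x y) := by
      rw [intervalIntegral.integral_add ixx' iyy', parts0 y hy, zero_add]
      simp only [hI2, mul_one]
    rw [e2, e3]
    refine (intervalIntegral.abs_integral_le_integral_abs zero_le_one).trans ?_
    refine intervalIntegral.integral_mono_on zero_le_one ?_ (ixx'.add iyy') (fun x _ => ?_)
    · exact Continuous.intervalIntegrable
        ((((slice cVxx y hy).add (slice cVyy y hy)).mul cc).abs) _ _
    · rw [abs_mul, abs_of_nonneg (hsub x y hy)]
      exact mul_le_of_le_one_right (hsub x y hy) (hcle x)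
  -- bounds for the moments
  have bd : ∀ (w : ℝ → ℝ), (∀ x, |w x| ≤ 1) → ∀ y, |y| < ρ →
      |∫ x in (0:ℝ)..1, V x y * w x| ≤ H := by
    intro w hw y hy
    have := intervalIntegral.norm_integral_le_of_norm_le_const (a := (0:ℝ)) (b := 1) (C := H)
      (f := fun x => V x y * w x) (fun x _ => by
        rw [Real.norm_eq_abs, abs_mul]
        calc |V x y| * |w x| ≤ |V x y| * 1 :=
              mul_le_mul_of_nonneg_left (hw x) (abs_nonneg _)
          _ ≤ H := by rw [mul_one]; exact hH x y hy)
    simpa using this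
  have hin : ∀ y ∈ Set.Icc 0 r, |y| < ρ ∧ |-y| < ρ := by
    intro y hy
    rw [abs_neg, abs_of_nonneg hy.1]
    exact ⟨hy.2.trans_lt hrρ, hy.2.trans_lt hrρ⟩
  have hn : ∀ {f f1 : ℝ → ℝ}, (∀ y, |y| < ρ → HasDerivAt f (f1 y) y) → ∀ y ∈ Set.Icc 0 r,
      HasDerivAt (fun y => f (-y)) (-f1 (-y)) y := by
    intro f f1 hf y hy
    exact ((hf (-y) (hin y hy).2).comp y (hasDerivAt_neg y)).congr_deriv (by ring)
  have h := ode_bound hr hκ0 (s := fun y => q y + q (-y)) (s1 := fun y => q1 y + -q1 (-y))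
    (s2 := fun y => q2 y + q2 (-y)) (J := fun y => I y + I (-y)) (J1 := fun y => I1 y + -I1 (-y))
    (J2 := fun y => I2 y + I2 (-y))
    (fun y hy => (dq y (hin y hy).1).add (hn dq y hy))
    (fun y hy => ((dq1 y (hin y hy).1).add (hn dq1 y hy).neg).congr_deriv (by simp))
    (fun y hy => (dI y (hin y hy).1).add (hn dI y hy))
    (fun y hy => ((dI1 y (hin y hy).1).add (hn dI1 y hy).neg).congr_deriv (by simp))
    (by simp) (by simp)
    (fun y hy => by
      have h1 := key y (hin y hy).1
      have h2 := key (-y) (hin y hy).2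
      rw [show q2 y + q2 (-y) - κ ^ 2 * (q y + q (-y)) =
        (q2 y - κ ^ 2 * q y) + (q2 (-y) - κ ^ 2 * q (-y)) by ring]
      exact (abs_add_le _ _).trans (add_le_add h1 h2))
  simp only [neg_zero] at h
  have hρ0 : |(0:ℝ)| < ρ := by rw [abs_zero]; linarith
  have hr1 : |r| < ρ := by rwa [abs_of_pos hr]
  have hr2 : |-r| < ρ := by rwa [abs_neg]
  have b1 := abs_le.1 (bd (fun _ => 1) (by simp) r hr1)
  have b2 := abs_le.1 (bd (fun _ => 1) (by simp) (-r) hr2)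
  have b3 := abs_le.1 (bd (fun _ => 1) (by simp) 0 hρ0)
  have b4 := bd c hcle r hr1
  have b5 := bd c hcle (-r) hr2
  have b6 : |q r + q (-r)| ≤ 2 * H := by
    refine (abs_add_le _ _).trans ?_
    linarith
  have b7 : I r + I (-r) - (I 0 + I 0) ≤ 4 * H := by simp only [hI]; linarith
  have b8 : |q 0 + q 0| = 2 * |q 0| := by
    rw [← two_mul, abs_mul]; simp
  rw [b8, ← add_div, le_div_iff₀ hr] at h
  change |q 0| ≤ _
  rw [le_div_iff₀ (by positivity)]
  nlinarith

/-! ### Fourier decay of logarithms of holomorphic families -/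

/-- The real inner product of two families of complex numbers. -/
def dotRe {ι : Type*} [Fintype ι] (u w : ι → ℂ) : ℝ :=
  ∑ i, ((u i).re * (w i).re + (u i).im * (w i).im)

theorem dotRe_self {ι : Type*} [Fintype ι] (u : ι → ℂ) : dotRe u u = ∑ i, ‖u i‖ ^ 2 := by
  refine Finset.sum_congr rfl (fun i _ => ?_)
  rw [Complex.sq_norm, Complex.normSq_apply]

theorem hasDerivAt_dotRe {ι : Type*} [Fintype ι] {u u' w w' : ℝ → ι → ℂ} {t : ℝ}
    (hu : ∀ i, HasDerivAt (fun t => u t i) (u' t i) t)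
    (hw : ∀ i, HasDerivAt (fun t => w t i) (w' t i) t) :
    HasDerivAt (fun t => dotRe (u t) (w t)) (dotRe (u' t) (w t) + dotRe (u t) (w' t)) t := by
  have hre : ∀ {g : ℝ → ℂ} {g' : ℂ}, HasDerivAt g g' t → HasDerivAt (fun t => (g t).re) g'.re t :=
    fun h => (Complex.reCLM.hasFDerivAt.comp_hasDerivAt t h)
  have him : ∀ {g : ℝ → ℂ} {g' : ℂ}, HasDerivAt g g' t → HasDerivAt (fun t => (g t).im) g'.im t :=
    fun h => (Complex.imCLM.hasFDerivAt.comp_hasDerivAt t h)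
  have := HasDerivAt.fun_sum (u := Finset.univ) (fun i _ =>
    ((hre (hu i)).mul (hre (hw i))).add ((him (hu i)).mul (him (hw i))))
  refine this.congr_deriv ?_
  simp only [dotRe, ← Finset.sum_add_distrib]
  refine Finset.sum_congr rfl (fun i _ => by ring)

theorem dotRe_comm {ι : Type*} [Fintype ι] (u w : ι → ℂ) : dotRe u w = dotRe w u :=
  Finset.sum_congr rfl (fun i _ => by ring)

/-- First and second derivative of `½ log (‖u‖² + η)` along a curve. -/
theorem hasDerivAt_log_dotRe {ι : Type*} [Fintype ι] {u u1 u2 : ℝ → ι → ℂ} {t η : ℝ} (hη : 0 < η)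
    (hu : ∀ i, HasDerivAt (fun t => u t i) (u1 t i) t)
    (hu1 : ∀ i, HasDerivAt (fun t => u1 t i) (u2 t i) t) :
    HasDerivAt (fun t => 2⁻¹ * Real.log (dotRe (u t) (u t) + η))
      (dotRe (u t) (u1 t) / (dotRe (u t) (u t) + η)) t ∧
    HasDerivAt (fun t => dotRe (u t) (u1 t) / (dotRe (u t) (u t) + η))
      ((dotRe (u1 t) (u1 t) + dotRe (u t) (u2 t)) / (dotRe (u t) (u t) + η) -
        2 * dotRe (u t) (u1 t) ^ 2 / (dotRe (u t) (u t) + η) ^ 2) t := by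
  have hg0 : 0 < dotRe (u t) (u t) + η := by
    rw [dotRe_self]; positivity
  have hg : HasDerivAt (fun t => dotRe (u t) (u t) + η) (2 * dotRe (u t) (u1 t)) t := by
    refine ((hasDerivAt_dotRe hu hu).add_const η).congr_deriv ?_
    rw [dotRe_comm (u1 t)]; ring
  constructor
  · refine ((hg.log hg0.ne').const_mul 2⁻¹).congr_deriv ?_
    field_simp
  · refine ((hasDerivAt_dotRe hu hu1).div hg hg0.ne').congr_deriv ?_
    field_simp

theorem dotRe_cauchy {ι : Type*} [Fintype ι] (u w : ι → ℂ) :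
    dotRe u w ^ 2 + dotRe u (fun i => Complex.I * w i) ^ 2 ≤ dotRe u u * dotRe w w := by
  set S : ℂ := ∑ i, (starRingEnd ℂ) (u i) * w i with hS
  have h1 : dotRe u w = S.re := by
    rw [hS, Complex.re_sum]
    exact Finset.sum_congr rfl (fun i _ => by simp)
  have h2 : dotRe u (fun i => Complex.I * w i) = -S.im := by
    rw [hS, Complex.im_sum, ← Finset.sum_neg_distrib]
    exact Finset.sum_congr rfl (fun i _ => by simp; ring)
  have h3 : dotRe u w ^ 2 + dotRe u (fun i => Complex.I * w i) ^ 2 = ‖S‖ ^ 2 := by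
    rw [h1, h2, Complex.sq_norm, Complex.normSq_apply]; ring
  rw [h3, dotRe_self, dotRe_self]
  have h4 : ‖S‖ ≤ ∑ i, ‖u i‖ * ‖w i‖ := by
    refine (norm_sum_le _ _).trans (le_of_eq (Finset.sum_congr rfl (fun i _ => ?_)))
    rw [norm_mul, RCLike.norm_conj]
  calc ‖S‖ ^ 2 ≤ (∑ i, ‖u i‖ * ‖w i‖) ^ 2 := by gcongr
    _ ≤ _ := Finset.sum_mul_sq_le_sq_mul_sq _ _ _

/-- Fourier decay for `½ log (∑ ‖f i‖² + η)` with `f i` holomorphic and periodic on a strip. -/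
theorem fourier_decay_log {ι : Type*} [Fintype ι] {ρ r H η : ℝ} (hr : 0 < r) (hrρ : r < ρ)
    (hη : 0 < η) (f : ι → ℂ → ℂ)
    (hf : ∀ i, DifferentiableOn ℂ (f i) {z : ℂ | |z.im| < ρ})
    (hper : ∀ i z, f i (z + 1) = f i z)
    (hH : ∀ z : ℂ, |z.im| < ρ → |2⁻¹ * Real.log (∑ i, ‖f i z‖ ^ 2 + η)| ≤ H)
    (k : ℕ) (hk : 1 ≤ k) (θ : ℝ) :
    |∫ x in (0:ℝ)..1, 2⁻¹ * Real.log (∑ i, ‖f i (x : ℂ)‖ ^ 2 + η) *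
      Real.cos (2 * Real.pi * k * x + θ)| ≤ 3 * H / (r * (2 * Real.pi * k)) := by
  set U : Set ℂ := {z : ℂ | |z.im| < ρ} with hU
  have hUo : IsOpen U := isOpen_lt (continuous_abs.comp Complex.continuous_im) continuous_const
  set f1 : ι → ℂ → ℂ := fun i => deriv (f i) with hf1
  set f2 : ι → ℂ → ℂ := fun i => deriv (f1 i) with hf2
  have df1 : ∀ i, DifferentiableOn ℂ (f1 i) U := fun i => (hf i).deriv hUo
  have df2 : ∀ i, DifferentiableOn ℂ (f2 i) U := fun i => (df1 i).deriv hUo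
  have D0 : ∀ i, ∀ z ∈ U, HasDerivAt (f i) (f1 i z) z := fun i z hz =>
    ((hf i).differentiableAt (hUo.mem_nhds hz)).hasDerivAt
  have D1 : ∀ i, ∀ z ∈ U, HasDerivAt (f1 i) (f2 i z) z := fun i z hz =>
    ((df1 i).differentiableAt (hUo.mem_nhds hz)).hasDerivAt
  have p1 : ∀ i z, f1 i (z + 1) = f1 i z := by
    intro i z
    simp only [hf1]
    rw [← deriv_comp_add_const]
    congr 1
    ext w
    exact hper i w
  set Z : ℝ → ℝ → ℂ := fun x y => x + y * Complex.I with hZ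
  have hZU : ∀ x y, |y| < ρ → Z x y ∈ U := fun x y hy => by simpa [hZ, hU] using hy
  have hZx : ∀ x y, HasDerivAt (fun x => Z x y) 1 x := fun x y =>
    (Complex.ofRealCLM.hasDerivAt (x := x)).add_const _
  have hZy : ∀ x y, HasDerivAt (fun y => Z x y) Complex.I y := fun x y => by
    exact (((Complex.ofRealCLM.hasDerivAt (x := y)).mul_const Complex.I).const_add
      (x : ℂ)).congr_deriv (by simp)
  have hZp : ∀ x y, Z (x + 1) y = Z x y + 1 := fun x y => by simp only [hZ]; push_cast; ring
  have hZc : Continuous (fun q : ℝ × ℝ => Z q.1 q.2) := by simp only [hZ]; fun_prop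
  have curve : ∀ {g g1 : ι → ℂ → ℂ}, (∀ i, ∀ z ∈ U, HasDerivAt (g i) (g1 i z) z) →
      ∀ {γ : ℝ → ℂ} {γ' : ℂ} {t : ℝ}, γ t ∈ U → HasDerivAt γ γ' t → ∀ i,
      HasDerivAt (fun t => g i (γ t)) (γ' * g1 i (γ t)) t := by
    intro g g1 hg γ γ' t ht hγ i
    have := (hg i (γ t) ht).scomp t hγ
    simpa [Function.comp_def] using this
  set u : ℂ → ι → ℂ := fun z i => f i z with hu
  set u1 : ℂ → ι → ℂ := fun z i => f1 i z with hu1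
  set u2 : ℂ → ι → ℂ := fun z i => f2 i z with hu2
  set w1 : ℂ → ι → ℂ := fun z i => Complex.I * f1 i z with hw1
  set w2 : ℂ → ι → ℂ := fun z i => -f2 i z with hw2
  have Lx := fun x y (hy : |y| < ρ) => hasDerivAt_log_dotRe (t := x) (u := fun x => u (Z x y))
    (u1 := fun x => u1 (Z x y)) (u2 := fun x => u2 (Z x y)) hη
    (fun i => by simpa using curve D0 (γ := fun x => Z x y) (hZU x y hy) (hZx x y) i)
    (fun i => by simpa using curve D1 (γ := fun x => Z x y) (hZU x y hy) (hZx x y) i)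
  have Ly := fun x y (hy : |y| < ρ) => hasDerivAt_log_dotRe (t := y) (u := fun y => u (Z x y))
    (u1 := fun y => w1 (Z x y)) (u2 := fun y => w2 (Z x y)) hη
    (fun i => curve D0 (hZU x y hy) (hZy x y) i)
    (fun i => by
      have := (curve D1 (hZU x y hy) (hZy x y) i).const_mul Complex.I
      refine this.congr_deriv ?_
      simp only [hw2]
      rw [← mul_assoc, Complex.I_mul_I]; ring)
  have cont : ∀ g : ι → ℂ → ℂ, (∀ i, DifferentiableOn ℂ (g i) U) → ∀ i,
      ContinuousOn (fun q : ℝ × ℝ => g i (Z q.1 q.2)) {q | |q.2| < ρ} := fun g hg i =>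
    (hg i).continuousOn.comp hZc.continuousOn (fun q hq => hZU q.1 q.2 hq)
  have cdot : ∀ {a b : ℂ → ι → ℂ},
      (∀ i, ContinuousOn (fun q : ℝ × ℝ => a (Z q.1 q.2) i) {q | |q.2| < ρ}) →
      (∀ i, ContinuousOn (fun q : ℝ × ℝ => b (Z q.1 q.2) i) {q | |q.2| < ρ}) →
      ContinuousOn (fun q : ℝ × ℝ => dotRe (a (Z q.1 q.2)) (b (Z q.1 q.2))) {q | |q.2| < ρ} := by
    intro a b ha hb
    refine continuousOn_finsetSum _ (fun i _ => ?_)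
    have := ha i
    have := hb i
    exact ((Complex.continuous_re.comp_continuousOn (ha i)).mul
      (Complex.continuous_re.comp_continuousOn (hb i))).add
      ((Complex.continuous_im.comp_continuousOn (ha i)).mul
      (Complex.continuous_im.comp_continuousOn (hb i)))
  have cu := cont f hf
  have cu1 := cont f1 df1
  have cu2 := cont f2 df2
  have cw1 : ∀ i, ContinuousOn (fun q : ℝ × ℝ => w1 (Z q.1 q.2) i) {q | |q.2| < ρ} := fun i =>
    continuousOn_const.mul (cu1 i)
  have cw2 : ∀ i, ContinuousOn (fun q : ℝ × ℝ => w2 (Z q.1 q.2) i) {q | |q.2| < ρ} := fun i =>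
    (cu2 i).neg
  have cg : ContinuousOn (fun q : ℝ × ℝ => dotRe (u (Z q.1 q.2)) (u (Z q.1 q.2)) + η)
      {q | |q.2| < ρ} := (cdot cu cu).add continuousOn_const
  have hg0 : ∀ z, 0 < dotRe (u z) (u z) + η := fun z => by rw [dotRe_self]; positivity
  have hg1 : ∀ q ∈ {q : ℝ × ℝ | |q.2| < ρ}, dotRe (u (Z q.1 q.2)) (u (Z q.1 q.2)) + η ≠ 0 :=
    fun q _ => (hg0 _).ne'
  have hfin := fourier_decay_cos (H := H) hr hrρ
    (V := fun x y => 2⁻¹ * Real.log (dotRe (u (Z x y)) (u (Z x y)) + η))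
    (fun x y hy => (Lx x y hy).1) (fun x y hy => (Lx x y hy).2)
    (fun x y hy => (Ly x y hy).1) (fun x y hy => (Ly x y hy).2)
    ((cdot cu cw1).div cg hg1)
    ((((cdot cu1 cu1).add (cdot cu cu2)).div cg hg1).sub
      ((continuousOn_const.mul ((cdot cu cu1).pow 2)).div (cg.pow 2)
        (fun q hq => pow_ne_zero 2 (hg1 q hq))))
    ((((cdot cw1 cw1).add (cdot cu cw2)).div cg hg1).sub
      ((continuousOn_const.mul ((cdot cu cw1).pow 2)).div (cg.pow 2)
        (fun q hq => pow_ne_zero 2 (hg1 q hq))))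
    (fun x y => by simp only [hZp, hu, hper])
    (fun x y => by simp only [hZp, hu, hu1, hper, p1])
    (fun x y hy => by
      set z := Z x y
      have e1 : dotRe (w1 z) (w1 z) = dotRe (u1 z) (u1 z) := by
        rw [dotRe_self, dotRe_self]; simp [hw1, hu1]
      have e2 : dotRe (u z) (w2 z) = - dotRe (u z) (u2 z) := by
        simp only [dotRe, hw2, hu2, Complex.neg_re, Complex.neg_im, ← Finset.sum_neg_distrib]
        exact Finset.sum_congr rfl (fun i _ => by ring)
      have e3 := dotRe_cauchy (u z) (u1 z)
      have e4 := hg0 z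
      set g := dotRe (u z) (u z) + η with hg
      have e5 : 0 ≤ dotRe (u1 z) (u1 z) := by rw [dotRe_self]; positivity
      rw [e1, e2]
      have e6 : (dotRe (u1 z) (u1 z) + dotRe (u z) (u2 z)) / g - 2 * dotRe (u z) (u1 z) ^ 2 / g ^ 2
          + ((dotRe (u1 z) (u1 z) + -dotRe (u z) (u2 z)) / g - 2 * dotRe (u z) (w1 z) ^ 2 / g ^ 2)
          = 2 * (g * dotRe (u1 z) (u1 z) - (dotRe (u z) (u1 z) ^ 2 + dotRe (u z) (w1 z) ^ 2))
            / g ^ 2 := by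
        field_simp; ring
      rw [e6]
      refine div_nonneg ?_ (by positivity)
      have e7 : dotRe (u z) (u z) * dotRe (u1 z) (u1 z) ≤ g * dotRe (u1 z) (u1 z) :=
        mul_le_mul_of_nonneg_right (by rw [hg]; linarith) e5
      have e8 : dotRe (u z) (u1 z) ^ 2 + dotRe (u z) (w1 z) ^ 2 ≤
        dotRe (u z) (u z) * dotRe (u1 z) (u1 z) := e3
      linarith)
    (fun x y hy => by
      have := hH (Z x y) (hZU x y hy)
      rwa [dotRe_self]) k hk θ
  simpa [hZ, dotRe_self, hu] using hfin

/-! ### A quantitative mean ergodic theorem -/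

/-- The character `x ↦ exp (2π i k x)`. -/
def chr (k : ℤ) (x : ℝ) : ℂ := Complex.exp (Complex.I * ((2 * Real.pi * k * x : ℝ) : ℂ))

theorem chr_add (k : ℤ) (x y : ℝ) : chr k (x + y) = chr k x * chr k y := by
  simp only [chr, ← Complex.exp_add]
  congr 1; push_cast; ring

theorem continuous_chr (k : ℤ) : Continuous (chr k) := by
  unfold chr; fun_prop

theorem norm_chr (k : ℤ) (x : ℝ) : ‖chr k x‖ = 1 := by
  rw [chr, mul_comm, Complex.norm_exp_ofReal_mul_I]

theorem chr_one (k : ℤ) : chr k 1 = 1 := by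
  rw [chr, Complex.exp_eq_one_iff]
  exact ⟨k, by push_cast; ring⟩

theorem chr_nat_mul (k : ℤ) (m : ℕ) (x : ℝ) : chr k (m * x) = chr k x ^ m := by
  rw [chr, chr, ← Complex.exp_nat_mul]
  congr 1; push_cast; ring

theorem four_norm_le_chr_sub_one (k : ℤ) (x : ℝ) :
    4 * ‖(((k : ℝ) * x : ℝ) : UnitAddCircle)‖ ≤ ‖chr k x - 1‖ := by
  set t : ℝ := (k : ℝ) * x - round ((k : ℝ) * x) with ht
  have h1 : chr k x = Complex.exp (Complex.I * ((2 * Real.pi * t : ℝ) : ℂ)) := by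
    have : chr k x = Complex.exp (Complex.I * ((2 * Real.pi * t : ℝ) : ℂ)) *
        Complex.exp ((round ((k : ℝ) * x) : ℤ) * (2 * Real.pi * Complex.I)) := by
      rw [chr, ← Complex.exp_add]
      congr 1; simp only [ht]; push_cast; ring
    rw [this, Complex.exp_int_mul_two_pi_mul_I, mul_one]
  have h2 : |t| ≤ 1 / 2 := abs_sub_round _
  rw [h1, Complex.norm_exp_I_mul_ofReal_sub_one, UnitAddCircle.norm_eq, ← ht, norm_mul,
    Real.norm_eq_abs, Real.norm_eq_abs, abs_two]
  have h3 : |2 * Real.pi * t / 2| = Real.pi * |t| := by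
    rw [show 2 * Real.pi * t / 2 = Real.pi * t by ring, abs_mul, abs_of_pos Real.pi_pos]
  have h4 := Real.mul_abs_le_abs_sin (x := 2 * Real.pi * t / 2) (by
    rw [h3]; nlinarith [Real.pi_pos])
  rw [h3] at h4
  have : 2 / Real.pi * (Real.pi * |t|) = 2 * |t| := by
    have := Real.pi_pos; field_simp
  linarith

theorem parseval {w : ℝ → ℝ} (hw : Continuous w) :
    HasSum (fun k : ℤ => ‖∫ x in (0:ℝ)..1, chr (-k) x * (w x : ℂ)‖ ^ 2)
      (∫ x in (0:ℝ)..1, w x ^ 2) := by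
  have hL2 : MemLp (fun x => (w x : ℂ)) 2 (volume.restrict (Set.Ioc (0:ℝ) 1)) := by
    have hc : Continuous (fun x => (w x : ℂ)) := by fun_prop
    obtain ⟨B, hB⟩ := (isCompact_Icc (a := (0:ℝ)) (b := 1)).exists_bound_of_continuousOn
      hc.continuousOn
    refine MemLp.of_bound hc.aestronglyMeasurable B ?_
    refine (ae_restrict_mem measurableSet_Ioc).mono (fun x hx => hB x ⟨hx.1.le, hx.2⟩)
  have h := hasSum_sq_fourierCoeffOn (zero_lt_one (α := ℝ)) hL2
  convert h using 1
  · ext k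
    rw [fourierCoeffOn_eq_integral]
    congr 2
    simp only [sub_zero, div_one, one_smul]
    refine intervalIntegral.integral_congr (fun x _ => ?_)
    simp only [smul_eq_mul]
    congr 1
    rw [fourier_coe_apply, chr]
    congr 1; push_cast; ring
  · simp

theorem integral_shift {E : Type*} [NormedAddCommGroup E] [NormedSpace ℝ E] {g : ℝ → E}
    (hg : ∀ x, g (x + 1) = g x) (s : ℝ) :
    ∫ x in (0:ℝ)..1, g (x + s) = ∫ x in (0:ℝ)..1, g x := by
  have h : Function.Periodic g 1 := hg
  rw [intervalIntegral.integral_comp_add_right (fun x => g x), zero_add]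
  have := h.intervalIntegral_add_eq s 0
  rw [zero_add] at this
  rw [add_comm 1 s]
  exact this

theorem fourier_shift {v : ℝ → ℝ} (hp : ∀ x, v (x + 1) = v x) (k : ℤ) (s : ℝ) :
    ∫ x in (0:ℝ)..1, chr (-k) x * (v (x + s) : ℂ) =
      chr k s * ∫ x in (0:ℝ)..1, chr (-k) x * (v x : ℂ) := by
  rw [← integral_shift (g := fun x => chr (-k) x * (v x : ℂ)) (fun x => by
    rw [chr_add, chr_one, hp, mul_one]) s, ← intervalIntegral.integral_const_mul]
  refine intervalIntegral.integral_congr (fun x _ => ?_)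
  rw [chr_add, ← mul_assoc, ← mul_assoc]
  congr 1
  have : chr k s * chr (-k) s = 1 := by
    rw [chr, chr, ← Complex.exp_add, Complex.exp_eq_one_iff]
    exact ⟨0, by push_cast; ring⟩
  rw [mul_assoc, mul_comm (chr (-k) x), ← mul_assoc, this, one_mul]

/-- Bounds on all phase-shifted cosine moments bound the complex Fourier coefficients. -/
theorem fourier_norm_le {v : ℝ → ℝ} (hv : Continuous v) {H : ℝ}
    (h : ∀ (k : ℕ), 1 ≤ k → ∀ θ : ℝ,
      |∫ x in (0:ℝ)..1, v x * Real.cos (2 * Real.pi * k * x + θ)| ≤ H / k)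
    (k : ℤ) (hk : k ≠ 0) :
    ‖∫ x in (0:ℝ)..1, chr (-k) x * (v x : ℂ)‖ ≤ 2 * H / |(k : ℝ)| := by
  have hn : 1 ≤ k.natAbs := Int.natAbs_pos.2 hk
  have hcast : ((k.natAbs : ℕ) : ℝ) = |(k : ℝ)| := by
    rw [Nat.cast_natAbs]; push_cast; rfl
  set W := ∫ x in (0:ℝ)..1, chr (-k) x * (v x : ℂ) with hW
  have hint : IntervalIntegrable (fun x => chr (-k) x * (v x : ℂ)) volume 0 1 :=
    Continuous.intervalIntegrable ((continuous_chr _).mul (by fun_prop)) _ _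
  have hre : W.re = ∫ x in (0:ℝ)..1, v x * Real.cos (2 * Real.pi * k.natAbs * x + 0) := by
    have := (Complex.reCLM.intervalIntegral_comp_comm hint).symm
    rw [← hW] at this
    rw [show W.re = Complex.reCLM W from rfl, this]
    refine intervalIntegral.integral_congr (fun x _ => ?_)
    simp only [Complex.reCLM_apply, chr, mul_comm Complex.I, Complex.re_mul_ofReal,
      Complex.exp_ofReal_mul_I_re, add_zero, hcast]
    rw [mul_comm]
    congr 1
    rcases abs_choice (k : ℝ) with h | h <;> rw [h]
    · rw [← Real.cos_neg]; congr 1; push_cast; ring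
    · congr 1; push_cast; ring
  have him : |W.im| = |∫ x in (0:ℝ)..1,
      v x * Real.cos (2 * Real.pi * k.natAbs * x + Real.pi / 2)| := by
    have := (Complex.imCLM.intervalIntegral_comp_comm hint).symm
    rw [← hW] at this
    rw [show W.im = Complex.imCLM W from rfl, this]
    simp only [Complex.imCLM_apply, chr, mul_comm Complex.I, Complex.im_mul_ofReal,
      Complex.exp_ofReal_mul_I_im, hcast, Real.cos_add_pi_div_two]
    rcases abs_choice (k : ℝ) with h | h <;> rw [h]
    · congr 1
      refine intervalIntegral.integral_congr (fun x _ => ?_)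
      rw [mul_comm, ← Real.sin_neg]; congr 2; push_cast; ring
    · rw [← abs_neg, ← intervalIntegral.integral_neg]
      congr 1
      refine intervalIntegral.integral_congr (fun x _ => ?_)
      rw [mul_neg, neg_inj, mul_comm]; congr 2; push_cast; ring
  have b1 := h _ hn 0
  have b2 := h _ hn (Real.pi / 2)
  rw [← hre] at b1
  rw [← him] at b2
  rw [hcast] at b1 b2
  calc ‖W‖ ≤ |W.re| + |W.im| := Complex.norm_le_abs_re_add_abs_im W
    _ ≤ H / |(k : ℝ)| + H / |(k : ℝ)| := add_le_add b1 b2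
    _ = _ := by ring

/-- Interpolation between the bounds `1` and `O((M ‖kω‖)⁻¹)` for the averaged geometric sum. -/
theorem geom_avg_le (k : ℤ) (ω : ℝ) (M : ℕ) (hM : 1 ≤ M)
    (hpos : 0 < ‖(((k : ℝ) * ω : ℝ) : UnitAddCircle)‖) :
    (‖∑ m ∈ Finset.range M, chr k (m * ω)‖ / M) ^ 2 ≤
      (M : ℝ) ^ (-(3 / 2) : ℝ) * (‖(((k : ℝ) * ω : ℝ) : UnitAddCircle)‖ ^ (3 / 2 : ℝ))⁻¹ := by
  set t := ‖(((k : ℝ) * ω : ℝ) : UnitAddCircle)‖ with ht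
  have hM' : (0 : ℝ) < M := by exact_mod_cast hM
  set D := ‖∑ m ∈ Finset.range M, chr k (m * ω)‖ / M with hD
  have hD0 : 0 ≤ D := by positivity
  have h1 : D ≤ 1 := by
    rw [hD, div_le_one hM']
    refine (norm_sum_le _ _).trans ?_
    simp [norm_chr]
  have h2 : D ≤ (M * t)⁻¹ := by
    have hne : chr k ω ≠ 1 := by
      intro h
      have := four_norm_le_chr_sub_one k ω
      rw [h] at this
      simp only [sub_self, norm_zero] at this
      linarith
    have h3 : ∑ m ∈ Finset.range M, chr k (m * ω) = (chr k ω ^ M - 1) / (chr k ω - 1) := by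
      rw [← geom_sum_eq hne]
      exact Finset.sum_congr rfl (fun m _ => chr_nat_mul k m ω)
    have h4 : ‖chr k ω ^ M - 1‖ ≤ 2 := by
      refine (norm_sub_le _ _).trans ?_
      rw [norm_pow, norm_chr]; norm_num
    have h5 := four_norm_le_chr_sub_one k ω
    rw [hD, h3, norm_div, div_div, div_le_iff₀ (by nlinarith), ← ht] at *
    calc ‖chr k ω ^ M - 1‖ ≤ 2 := h4
      _ ≤ 4 := by norm_num
      _ = (M * t)⁻¹ * (4 * t * M) := by field_simp
      _ ≤ _ := by gcongr
  have h3 : D ^ 2 ≤ D ^ (3 / 2 : ℝ) := by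
    rw [← Real.rpow_natCast]
    rcases hD0.eq_or_lt with h | h
    · rw [← h]; norm_num
    · exact Real.rpow_le_rpow_of_exponent_ge h h1 (by norm_num)
  refine h3.trans ?_
  calc D ^ (3 / 2 : ℝ) ≤ ((M * t)⁻¹) ^ (3 / 2 : ℝ) := by gcongr
    _ = _ := by
      rw [Real.inv_rpow (by positivity), Real.mul_rpow hM'.le hpos.le, mul_inv,
        Real.rpow_neg hM'.le]

theorem circle_norm_pos {ω a : ℝ} (ha : 1 < a) (h : Diophantine ω a) (k : ℤ) (hk : k ≠ 0) :
    0 < ‖(((k : ℝ) * ω : ℝ) : UnitAddCircle)‖ := by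
  obtain ⟨c, hc, h⟩ := diophantine_pow ha h
  have hn : 1 ≤ k.natAbs := Int.natAbs_pos.2 hk
  have h1 := h _ hn
  have hcast : ((k.natAbs : ℕ) : ℝ) = |(k : ℝ)| := by
    rw [Nat.cast_natAbs]; push_cast; rfl
  have h2 : 0 < c / ((k.natAbs : ℕ) : ℝ) ^ (7 / 6 : ℝ) := by positivity
  have h3 : ‖((((k.natAbs : ℕ) : ℝ) * ω : ℝ) : UnitAddCircle)‖ =
      ‖(((k : ℝ) * ω : ℝ) : UnitAddCircle)‖ := by
    rw [hcast]
    rcases abs_choice (k : ℝ) with h | h <;> rw [h]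
    rw [neg_mul, AddCircle.coe_neg, norm_neg]
  rw [h3] at h1
  exact h2.trans_le h1

/-- Quantitative mean ergodic theorem for functions with Fourier coefficients `O(H / |k|)`. -/
theorem ergodic_l2 {ω a : ℝ} (ha : 1 < a) (hω : Diophantine ω a) :
    ∃ C : ℝ, 0 ≤ C ∧ ∀ (v : ℝ → ℝ) (H : ℝ), Continuous v → (∀ x, v (x + 1) = v x) →
      (∀ (k : ℕ), 1 ≤ k → ∀ θ : ℝ,
        |∫ x in (0:ℝ)..1, v x * Real.cos (2 * Real.pi * k * x + θ)| ≤ H / k) →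
      ∀ M : ℕ, 1 ≤ M →
        ∫ x in (0:ℝ)..1, ((∑ m ∈ Finset.range M, v (x + m * ω)) / M - ∫ y in (0:ℝ)..1, v y) ^ 2
          ≤ C * H ^ 2 * (M : ℝ) ^ (-(3 / 2) : ℝ) := by
  have hsum := summable_small_divisors ha hω
  refine ⟨4 * ∑' k : ℤ, ((k : ℝ) ^ 2)⁻¹ *
      (‖(((k : ℝ) * ω : ℝ) : UnitAddCircle)‖ ^ (3 / 2 : ℝ))⁻¹, ?_, ?_⟩
  · exact mul_nonneg (by norm_num) (tsum_nonneg (fun k => by positivity))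
  intro v H hv hp hk M hM
  have hM' : (0 : ℝ) < M := by exact_mod_cast hM
  set μ := ∫ y in (0:ℝ)..1, v y with hμ
  have hwc : Continuous (fun x => (∑ m ∈ Finset.range M, v (x + m * ω)) / M - μ) := by
    fun_prop
  have hpars := parseval hwc
  -- Fourier coefficients of the centred Birkhoff average
  have hcoef : ∀ k : ℤ, ∫ x in (0:ℝ)..1, chr (-k) x *
      (((∑ m ∈ Finset.range M, v (x + m * ω)) / M - μ : ℝ) : ℂ) =
      ((∑ m ∈ Finset.range M, chr k (m * ω)) / M) * (∫ x in (0:ℝ)..1, chr (-k) x * (v x : ℂ)) -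
        μ * ∫ x in (0:ℝ)..1, chr (-k) x := by
    intro k
    have ii : ∀ m : ℕ, IntervalIntegrable (fun x => chr (-k) x * (v (x + m * ω) : ℂ))
        volume 0 1 := fun m =>
      Continuous.intervalIntegrable ((continuous_chr _).mul (by fun_prop)) _ _
    have e1 : ∀ x, chr (-k) x * (((∑ m ∈ Finset.range M, v (x + m * ω)) / M - μ : ℝ) : ℂ) =
        (M : ℂ)⁻¹ * (∑ m ∈ Finset.range M, chr (-k) x * (v (x + m * ω) : ℂ)) -
          μ * chr (-k) x := by
      intro x
      push_cast
      rw [← Finset.mul_sum]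
      ring
    simp_rw [e1]
    rw [intervalIntegral.integral_sub, intervalIntegral.integral_const_mul,
      intervalIntegral.integral_const_mul, intervalIntegral.integral_finsetSum (fun m _ => ii m)]
    · simp_rw [fourier_shift hp k]
      rw [← Finset.sum_mul]
      ring
    · refine (Continuous.intervalIntegrable ?_ _ _).const_mul _
      exact continuous_finsetSum _ (fun m _ => (continuous_chr _).mul (by fun_prop))
    · exact ((continuous_chr _).intervalIntegrable _ _).const_mul _
  have hchr : ∀ k : ℤ, k ≠ 0 → ∫ x in (0:ℝ)..1, chr (-k) x = 0 := by
    intro k hk0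
    have hs := integral_shift (g := chr (-k)) (fun x => by rw [chr_add, chr_one, mul_one]) ω
    have : ∫ x in (0:ℝ)..1, chr (-k) (x + ω) = (∫ x in (0:ℝ)..1, chr (-k) x) * chr (-k) ω := by
      rw [← intervalIntegral.integral_mul_const]
      exact intervalIntegral.integral_congr (fun x _ => chr_add _ _ _)
    rw [this] at hs
    have h1 := four_norm_le_chr_sub_one (-k) ω
    have h2 := circle_norm_pos ha hω (-k) (neg_ne_zero.2 hk0)
    have h3 : (∫ x in (0:ℝ)..1, chr (-k) x) * (chr (-k) ω - 1) = 0 := by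
      rw [mul_sub, hs]; simp
    rcases mul_eq_zero.1 h3 with h | h
    · exact h
    · rw [h, norm_zero] at h1; linarith
  have hbound : ∀ k : ℤ, ‖∫ x in (0:ℝ)..1, chr (-k) x *
      (((∑ m ∈ Finset.range M, v (x + m * ω)) / M - μ : ℝ) : ℂ)‖ ^ 2 ≤
      4 * H ^ 2 * (M : ℝ) ^ (-(3 / 2) : ℝ) * (((k : ℝ) ^ 2)⁻¹ *
      (‖(((k : ℝ) * ω : ℝ) : UnitAddCircle)‖ ^ (3 / 2 : ℝ))⁻¹) := by
    intro k
    rw [hcoef]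
    by_cases hk0 : k = 0
    · subst hk0
      have hc0 : ∀ x, chr 0 x = 1 := fun x => by simp [chr]
      have : (∫ x in (0:ℝ)..1, (v x : ℂ)) = (μ : ℂ) := by
        rw [hμ]; exact intervalIntegral.integral_ofReal
      have hMc : (M : ℂ) ≠ 0 := by exact_mod_cast hM'.ne'
      simp only [neg_zero, hc0, one_mul, this]
      simp [hMc]
    · rw [hchr k hk0, mul_zero, sub_zero, norm_mul, norm_div, Complex.norm_natCast, mul_pow]
      have g1 := geom_avg_le k ω M hM (circle_norm_pos ha hω k hk0)
      have g2 := fourier_norm_le hv hk k hk0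
      have g3 : ‖∫ x in (0:ℝ)..1, chr (-k) x * (v x : ℂ)‖ ^ 2 ≤ 4 * H ^ 2 * ((k : ℝ) ^ 2)⁻¹ := by
        calc _ ≤ (2 * H / |(k : ℝ)|) ^ 2 := by gcongr
          _ = _ := by rw [div_pow, sq_abs]; ring
      calc _ ≤ ((M : ℝ) ^ (-(3 / 2) : ℝ) *
              (‖(((k : ℝ) * ω : ℝ) : UnitAddCircle)‖ ^ (3 / 2 : ℝ))⁻¹) *
              (4 * H ^ 2 * ((k : ℝ) ^ 2)⁻¹) := by gcongr
        _ = _ := by ring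
  calc _ ≤ ∑' k : ℤ, 4 * H ^ 2 * (M : ℝ) ^ (-(3 / 2) : ℝ) * (((k : ℝ) ^ 2)⁻¹ *
      (‖(((k : ℝ) * ω : ℝ) : UnitAddCircle)‖ ^ (3 / 2 : ℝ))⁻¹) :=
        hasSum_le hbound hpars (hsum.mul_left _).hasSum
    _ = _ := by rw [tsum_mul_left]; ring

/-! ### Logarithmic norms of the cocycle -/

theorem compound_bound (K : Type*) [RCLike K] (d : ℕ) (B : ℝ) :
    ∃ c : ℝ, 0 ≤ c ∧ ∀ (p : ℕ) (M : Matrix (Fin d) (Fin d) K), matOpNorm M ≤ B →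
      matOpNorm (compound p M) ≤ Real.exp c := by
  set b : ℕ → ℝ := fun p =>
    (Fintype.card {s : Finset (Fin d) // s.card = p} : ℝ) * (p.factorial * (max B 0) ^ p) with hb
  have hb0 : ∀ p, 0 ≤ b p := fun p => by
    have : 0 ≤ max B 0 := le_max_right _ _
    positivity
  refine ⟨∑ p ∈ Finset.range (d + 1), b p, Finset.sum_nonneg (fun p _ => hb0 p), ?_⟩
  intro p M hM
  have h1 : matOpNorm (compound p M) ≤ b p := by
    refine matOpNorm_le_of_entries _ (by have : 0 ≤ max B 0 := le_max_right _ _; positivity) ?_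
    intro s t
    have := Matrix.det_le (A := M.submatrix (fun i => (s.1.orderIsoOfFin s.2 i : Fin d))
      (fun i => (t.1.orderIsoOfFin t.2 i : Fin d))) (abv := NormedField.toAbsoluteValue K)
      (x := max B 0) (fun i j => ((norm_entry_le_matOpNorm M _ _).trans hM).trans (le_max_left _ _))
    rw [Fintype.card_fin, nsmul_eq_mul] at this
    exact this
  have h2 : b p ≤ ∑ p ∈ Finset.range (d + 1), b p := by
    by_cases hp : p ∈ Finset.range (d + 1)
    · exact Finset.single_le_sum (fun p _ => hb0 p) hp
    · have hcard : Fintype.card {s : Finset (Fin d) // s.card = p} = 0 := by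
        rw [Fintype.card_eq_zero_iff]
        refine ⟨fun s => hp ?_⟩
        have := s.1.card_le_univ
        rw [s.2, Fintype.card_fin] at this
        exact Finset.mem_range.2 (by omega)
      have : b p = 0 := by simp only [hb]; rw [hcard]; simp
      rw [this]
      exact Finset.sum_nonneg (fun p _ => hb0 p)
  exact (h1.trans h2).trans ((le_add_of_nonneg_right zero_le_one).trans (Real.add_one_le_exp _))

section
variable {K : Type*} [RCLike K] {d : ℕ} {ε : Type*}

theorem cocycle_zero (A : ℝ → ε → Matrix (Fin d) (Fin d) K) (ω x : ℝ) (e : ε) :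
    cocycle A ω 0 x e = 1 := by simp [cocycle]

theorem cocycle_succ (A : ℝ → ε → Matrix (Fin d) (Fin d) K) (ω : ℝ) (n : ℕ) (x : ℝ) (e : ε) :
    cocycle A ω (n + 1) x e = A (x + (n + 1 : ℕ) * ω) e * cocycle A ω n x e := by
  simp [cocycle, List.range_succ]

theorem cocycle_add (A : ℝ → ε → Matrix (Fin d) (Fin d) K) (ω : ℝ) (n m : ℕ) (x : ℝ) (e : ε) :
    cocycle A ω (n + m) x e = cocycle A ω m (x + n * ω) e * cocycle A ω n x e := by
  induction m with
  | zero => simp [cocycle_zero]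
  | succ m ih =>
    rw [← add_assoc, cocycle_succ, ih, cocycle_succ, mul_assoc]
    congr 2
    push_cast; ring

/-- `log ‖Λ^p A^{(n)}_x(e)‖`. -/
def extLog (A : ℝ → ε → Matrix (Fin d) (Fin d) K) (ω : ℝ) (p n : ℕ) (x : ℝ) (e : ε) : ℝ :=
  Real.log (matOpNorm (compound p (cocycle A ω n x e)))

/-- A continuous, `1`-periodic, invertible matrix function whose exterior powers, and those of its
inverse, have norm at most `exp c`. -/
structure Tame [TopologicalSpace ε] (A : ℝ → ε → Matrix (Fin d) (Fin d) K) (c : ℝ) : Prop where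
  cont : Continuous fun q : ℝ × ε => A q.1 q.2
  per : ∀ x e, A (x + 1) e = A x e
  unit : ∀ x e, IsUnit (A x e)
  nonneg : 0 ≤ c
  bound : ∀ p x e, matOpNorm (compound p (A x e)) ≤ Real.exp c
  bound_inv : ∀ p x e, matOpNorm (compound p (A x e)⁻¹) ≤ Real.exp c

theorem compound_index_nonempty {p : ℕ} (hp : p ≤ d) :
    Nonempty {s : Finset (Fin d) // s.card = p} := by
  obtain ⟨s, -, hs⟩ := Finset.exists_subset_card_eq (s := (Finset.univ : Finset (Fin d)))
    (n := p) (by simpa using hp)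
  exact ⟨⟨s, hs⟩⟩

theorem matOpNorm_compound_one_le (p : ℕ) :
    matOpNorm (compound p (1 : Matrix (Fin d) (Fin d) K)) ≤ 1 := by
  rw [compound_one]
  exact matOpNorm_le_one_of_unitary (one_mem _)

theorem matOpNorm_compound_mul_le (p : ℕ) (M N : Matrix (Fin d) (Fin d) K) :
    matOpNorm (compound p (M * N)) ≤ matOpNorm (compound p M) * matOpNorm (compound p N) := by
  rw [compound_mul]; exact matOpNorm_mul_le _ _

theorem matOpNorm_compound_pos {p : ℕ} (hp : p ≤ d) {M : Matrix (Fin d) (Fin d) K}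
    (hM : IsUnit M) : 0 < matOpNorm (compound p M) := by
  have := compound_index_nonempty hp
  have h1 : matOpNorm (compound p (M * M⁻¹)) = 1 := by
    rw [Matrix.mul_nonsing_inv _ ((Matrix.isUnit_iff_isUnit_det _).1 hM), compound_one,
      matOpNorm_one]
  have h2 := matOpNorm_compound_mul_le p M M⁻¹
  rw [h1] at h2
  by_contra h
  have h3 : matOpNorm (compound p M) = 0 := le_antisymm (not_lt.1 h) (matOpNorm_nonneg _)
  rw [h3, zero_mul] at h2
  linarith

namespace Tame
variable [TopologicalSpace ε] {A : ℝ → ε → Matrix (Fin d) (Fin d) K} {c : ℝ} {ω : ℝ}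

theorem unit_cocycle (h : Tame A c) (n : ℕ) (x : ℝ) (e : ε) : IsUnit (cocycle A ω n x e) := by
  induction n with
  | zero => rw [cocycle_zero]; exact isUnit_one
  | succ n ih => rw [cocycle_succ]; exact (h.unit _ _).mul ih

theorem cocycle_per (h : Tame A c) (n : ℕ) (x : ℝ) (e : ε) :
    cocycle A ω n (x + 1) e = cocycle A ω n x e := by
  induction n with
  | zero => rw [cocycle_zero, cocycle_zero]
  | succ n ih =>
    rw [cocycle_succ, cocycle_succ, ih, ← h.per (x + (n + 1 : ℕ) * ω)]
    congr 2; ring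

theorem cocycle_cont (h : Tame A c) (n : ℕ) :
    Continuous fun q : ℝ × ε => cocycle A ω n q.1 q.2 := by
  induction n with
  | zero => simp only [cocycle_zero]; exact continuous_const
  | succ n ih =>
    simp only [cocycle_succ]
    exact (h.cont.comp (f := fun q : ℝ × ε => (q.1 + (n + 1 : ℕ) * ω, q.2)) (by fun_prop)).mul ih

theorem pos (h : Tame A c) {p : ℕ} (hp : p ≤ d) (n : ℕ) (x : ℝ) (e : ε) :
    0 < matOpNorm (compound p (cocycle A ω n x e)) :=
  matOpNorm_compound_pos hp (h.unit_cocycle n x e)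

theorem exp_extLog (h : Tame A c) {p : ℕ} (hp : p ≤ d) (n : ℕ) (x : ℝ) (e : ε) :
    Real.exp (extLog A ω p n x e) = matOpNorm (compound p (cocycle A ω n x e)) :=
  Real.exp_log (h.pos hp n x e)

theorem bound_cocycle (h : Tame A c) (p n : ℕ) (x : ℝ) (e : ε) :
    matOpNorm (compound p (cocycle A ω n x e)) ≤ Real.exp (c * n) := by
  induction n with
  | zero => simpa [cocycle_zero] using matOpNorm_compound_one_le p
  | succ n ih =>
    rw [cocycle_succ]
    refine (matOpNorm_compound_mul_le _ _ _).trans ?_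
    rw [show c * ((n + 1 : ℕ) : ℝ) = c + c * n by push_cast; ring, Real.exp_add]
    exact mul_le_mul (h.bound _ _ _) ih (matOpNorm_nonneg _) (Real.exp_pos _).le

theorem bound_inv_cocycle (h : Tame A c) (p n : ℕ) (x : ℝ) (e : ε) :
    matOpNorm (compound p (cocycle A ω n x e)⁻¹) ≤ Real.exp (c * n) := by
  induction n with
  | zero => simpa [cocycle_zero] using matOpNorm_compound_one_le p
  | succ n ih =>
    rw [cocycle_succ, Matrix.mul_inv_rev]
    refine (matOpNorm_compound_mul_le _ _ _).trans ?_
    rw [show c * ((n + 1 : ℕ) : ℝ) = c * n + c by push_cast; ring, Real.exp_add]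
    exact mul_le_mul ih (h.bound_inv _ _ _) (matOpNorm_nonneg _) (Real.exp_pos _).le

theorem sub (h : Tame A c) {p : ℕ} (hp : p ≤ d) (n m : ℕ) (x : ℝ) (e : ε) :
    extLog A ω p (n + m) x e ≤ extLog A ω p n x e + extLog A ω p m (x + n * ω) e := by
  rw [← Real.exp_le_exp, Real.exp_add, h.exp_extLog hp, h.exp_extLog hp, h.exp_extLog hp,
    cocycle_add]
  exact (matOpNorm_compound_mul_le _ _ _).trans (le_of_eq (mul_comm _ _))

/-- Removing the last `m` factors costs at most `exp (c m)`, by invertibility. -/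
theorem low_left (h : Tame A c) {p : ℕ} (hp : p ≤ d) (n m : ℕ) (x : ℝ) (e : ε) :
    extLog A ω p n x e - c * m ≤ extLog A ω p (n + m) x e := by
  rw [sub_le_iff_le_add, ← Real.exp_le_exp, Real.exp_add, h.exp_extLog hp, h.exp_extLog hp,
    cocycle_add]
  have hu := (Matrix.isUnit_iff_isUnit_det _).1 (h.unit_cocycle (ω := ω) m (x + n * ω) e)
  calc matOpNorm (compound p (cocycle A ω n x e))
      = matOpNorm (compound p ((cocycle A ω m (x + n * ω) e)⁻¹ *
          (cocycle A ω m (x + n * ω) e * cocycle A ω n x e))) := by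
        rw [← mul_assoc, Matrix.nonsing_inv_mul _ hu, one_mul]
    _ ≤ matOpNorm (compound p (cocycle A ω m (x + n * ω) e)⁻¹) *
        matOpNorm (compound p (cocycle A ω m (x + n * ω) e * cocycle A ω n x e)) :=
      matOpNorm_compound_mul_le _ _ _
    _ ≤ Real.exp (c * m) *
        matOpNorm (compound p (cocycle A ω m (x + n * ω) e * cocycle A ω n x e)) :=
      mul_le_mul_of_nonneg_right (h.bound_inv_cocycle _ _ _ _) (matOpNorm_nonneg _)
    _ = _ := mul_comm _ _

/-- Removing the first `n` factors costs at most `exp (c n)`, by invertibility. -/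
theorem low_right (h : Tame A c) {p : ℕ} (hp : p ≤ d) (n m : ℕ) (x : ℝ) (e : ε) :
    extLog A ω p m (x + n * ω) e - c * n ≤ extLog A ω p (n + m) x e := by
  rw [sub_le_iff_le_add, ← Real.exp_le_exp, Real.exp_add, h.exp_extLog hp, h.exp_extLog hp,
    cocycle_add]
  have hu := (Matrix.isUnit_iff_isUnit_det _).1 (h.unit_cocycle (ω := ω) n x e)
  calc matOpNorm (compound p (cocycle A ω m (x + n * ω) e))
      = matOpNorm (compound p ((cocycle A ω m (x + n * ω) e * cocycle A ω n x e) *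
          (cocycle A ω n x e)⁻¹)) := by
        rw [mul_assoc, Matrix.mul_nonsing_inv _ hu, mul_one]
    _ ≤ matOpNorm (compound p (cocycle A ω m (x + n * ω) e * cocycle A ω n x e)) *
        matOpNorm (compound p (cocycle A ω n x e)⁻¹) :=
      matOpNorm_compound_mul_le _ _ _
    _ ≤ _ := mul_le_mul_of_nonneg_left (h.bound_inv_cocycle _ _ _ _) (matOpNorm_nonneg _)

theorem extLog_zero (_ : Tame A c) {p : ℕ} (hp : p ≤ d) (x : ℝ) (e : ε) : extLog A ω p 0 x e = 0 := by
  have := compound_index_nonempty hp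
  rw [extLog, cocycle_zero, compound_one, matOpNorm_one, Real.log_one]

theorem abs_extLog (h : Tame A c) {p : ℕ} (hp : p ≤ d) (n : ℕ) (x : ℝ) (e : ε) :
    |extLog A ω p n x e| ≤ c * n := by
  rw [abs_le]
  constructor
  · have := h.low_left (ω := ω) hp 0 n x e
    rw [h.extLog_zero hp, zero_add] at this
    linarith
  · rw [← Real.exp_le_exp, h.exp_extLog hp]
    exact h.bound_cocycle _ _ _ _

theorem extLog_per (h : Tame A c) (p n : ℕ) (x : ℝ) (e : ε) :
    extLog A ω p n (x + 1) e = extLog A ω p n x e := by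
  rw [extLog, extLog, h.cocycle_per]

theorem continuous_matOpNorm {m : Type*} [Fintype m] [DecidableEq m] :
    Continuous (fun M : Matrix m m K => matOpNorm M) := by
  unfold matOpNorm
  refine continuous_norm.comp (LinearMap.continuous_of_finiteDimensional
    (LinearMap.toContinuousLinearMap.toLinearMap ∘ₗ
      (Matrix.toEuclideanLin (𝕜 := K) (m := m) (n := m)).toLinearMap))

theorem continuous_compound (p : ℕ) :
    Continuous (fun M : Matrix (Fin d) (Fin d) K => compound p M) := by
  refine continuous_matrix (fun s t => ?_)
  unfold compound
  fun_prop

theorem extLog_cont (h : Tame A c) {p : ℕ} (hp : p ≤ d) (n : ℕ) :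
    Continuous fun q : ℝ × ε => extLog A ω p n q.1 q.2 := by
  refine Continuous.log ?_ (fun q => (h.pos hp n q.1 q.2).ne')
  exact continuous_matOpNorm.comp ((continuous_compound p).comp (h.cocycle_cont n))

theorem extLog_cont_left (h : Tame A c) {p : ℕ} (hp : p ≤ d) (n : ℕ) (e : ε) :
    Continuous fun x : ℝ => extLog A ω p n x e :=
  (h.extLog_cont hp n).comp (f := fun x => (x, e)) (by fun_prop)

/-- Translating by one step of the rotation changes `extLog` by at most `2c`. -/
theorem almost_inv (h : Tame A c) {p : ℕ} (hp : p ≤ d) (n : ℕ) (x : ℝ) (e : ε) :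
    |extLog A ω p n (x + ω) e - extLog A ω p n x e| ≤ 2 * c := by
  have a1 := h.low_right (ω := ω) hp 1 n x e
  have a2 := h.sub (ω := ω) hp 1 n x e
  have a3 := h.low_left (ω := ω) hp n 1 x e
  have a4 := h.sub (ω := ω) hp n 1 x e
  have a5 := abs_le.1 (h.abs_extLog (ω := ω) hp 1 x e)
  have a6 := abs_le.1 (h.abs_extLog (ω := ω) hp 1 (x + n * ω) e)
  rw [add_comm n 1] at a3 a4
  simp only [Nat.cast_one, one_mul, mul_one] at a1 a2 a3 a4 a5 a6
  rw [abs_le]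
  constructor <;> linarith

theorem almost_inv_nat (h : Tame A c) {p : ℕ} (hp : p ≤ d) (n m : ℕ) (x : ℝ) (e : ε) :
    |extLog A ω p n (x + m * ω) e - extLog A ω p n x e| ≤ 2 * c * m := by
  induction m with
  | zero => simp
  | succ m ih =>
    have h1 := h.almost_inv (ω := ω) hp n (x + m * ω) e
    rw [show x + ((m + 1 : ℕ) : ℝ) * ω = x + m * ω + ω by push_cast; ring]
    rw [show extLog A ω p n (x + m * ω + ω) e - extLog A ω p n x e =
      (extLog A ω p n (x + m * ω + ω) e - extLog A ω p n (x + m * ω) e) +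
      (extLog A ω p n (x + m * ω) e - extLog A ω p n x e) by ring]
    refine (abs_add_le _ _).trans ?_
    push_cast
    linarith
end Tame
end

/-! ### The large deviation estimate -/

/-- `rcToComplex` as a ring homomorphism. -/
def rcHom (K : Type*) [RCLike K] : K →+* ℂ where
  toFun := rcToComplex
  map_one' := by apply Complex.ext <;> simp [rcToComplex]
  map_mul' a b := by apply Complex.ext <;> simp [rcToComplex, RCLike.mul_re, RCLike.mul_im]
  map_zero' := by apply Complex.ext <;> simp [rcToComplex]
  map_add' a b := by apply Complex.ext <;> simp [rcToComplex]

theorem norm_rcToComplex {K : Type*} [RCLike K] (z : K) : ‖rcToComplex z‖ = ‖z‖ := by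
  have h1 : ‖rcToComplex z‖ ^ 2 = ‖z‖ ^ 2 := by
    rw [← Complex.normSq_eq_norm_sq, RCLike.norm_sq_eq_def, Complex.normSq_apply]
    simp [rcToComplex]
  exact (sq_eq_sq₀ (norm_nonneg _) (norm_nonneg _)).1 h1

section
variable {K : Type*} [RCLike K] {d : ℕ} {ε : Type*}

/-- The cocycle products of the holomorphic extension, with the same order of the factors as in
`cocycle`. -/
def complexCocycle (F : ℂ → ε → Matrix (Fin d) (Fin d) ℂ) (ω : ℝ) :
    ℕ → ℂ → ε → Matrix (Fin d) (Fin d) ℂ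
  | 0, _, _ => 1
  | n + 1, z, e => F (z + ((n + 1 : ℕ) * ω : ℝ)) e * complexCocycle F ω n z e

theorem complexCocycle_per {F : ℂ → ε → Matrix (Fin d) (Fin d) ℂ} (hF : ∀ z e, F (z + 1) e = F z e)
    (ω : ℝ) (n : ℕ) (z : ℂ) (e : ε) :
    complexCocycle F ω n (z + 1) e = complexCocycle F ω n z e := by
  induction n with
  | zero => rfl
  | succ n ih =>
    rw [complexCocycle, complexCocycle, ih, add_right_comm, hF]

theorem complexCocycle_real {F : ℂ → ε → Matrix (Fin d) (Fin d) ℂ}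
    {A : ℝ → ε → Matrix (Fin d) (Fin d) K}
    (hF : ∀ (x : ℝ) (e : ε), F (x : ℂ) e = (A x e).map rcToComplex)
    (ω : ℝ) (n : ℕ) (x : ℝ) (e : ε) :
    complexCocycle F ω n x e = (cocycle A ω n x e).map (rcHom K) := by
  induction n with
  | zero => simp [complexCocycle, cocycle_zero]
  | succ n ih =>
    rw [complexCocycle, cocycle_succ, ih, Matrix.map_mul, ← Complex.ofReal_add, hF]
    rfl

theorem complexCocycle_diff {F : ℂ → ε → Matrix (Fin d) (Fin d) ℂ} {ρ : ℝ}
    (hF : ∀ e i j, DifferentiableOn ℂ (fun z => F z e i j) {z : ℂ | |z.im| < ρ})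
    (ω : ℝ) (n : ℕ) (e : ε) (i j : Fin d) :
    DifferentiableOn ℂ (fun z => complexCocycle F ω n z e i j) {z : ℂ | |z.im| < ρ} := by
  induction n generalizing i j with
  | zero => exact differentiableOn_const _
  | succ n ih =>
    simp only [complexCocycle, Matrix.mul_apply]
    refine DifferentiableOn.fun_sum (fun k _ => DifferentiableOn.mul ?_ (ih k j))
    refine (hF e i k).comp (f := fun z : ℂ => z + ((n + 1 : ℕ) * ω : ℝ)) (by fun_prop) ?_
    intro z hz
    simp only [Set.mem_ofPred_eq] at hz ⊢
    rwa [Complex.add_im, Complex.ofReal_im, add_zero]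

theorem complexCocycle_bound {F : ℂ → ε → Matrix (Fin d) (Fin d) ℂ} {ρ c : ℝ}
    (hF : ∀ p z e, |z.im| < ρ → matOpNorm (compound p (F z e)) ≤ Real.exp c)
    (ω : ℝ) (p n : ℕ) (z : ℂ) (hz : |z.im| < ρ) (e : ε) :
    matOpNorm (compound p (complexCocycle F ω n z e)) ≤ Real.exp (c * n) := by
  induction n with
  | zero => simpa [complexCocycle] using matOpNorm_compound_one_le p
  | succ n ih =>
    rw [complexCocycle]
    refine (matOpNorm_compound_mul_le _ _ _).trans ?_
    rw [show c * ((n + 1 : ℕ) : ℝ) = c + c * n by push_cast; ring, Real.exp_add]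
    refine mul_le_mul (hF _ _ _ ?_) ih (matOpNorm_nonneg _) (Real.exp_pos _).le
    rwa [Complex.add_im, Complex.ofReal_im, add_zero]

theorem compound_diff {G : ℂ → Matrix (Fin d) (Fin d) ℂ} {s : Set ℂ}
    (hG : ∀ i j, DifferentiableOn ℂ (fun z => G z i j) s) (p : ℕ)
    (i j : {s : Finset (Fin d) // s.card = p}) :
    DifferentiableOn ℂ (fun z => compound p (G z) i j) s := by
  simp only [compound, Matrix.det_apply, Matrix.submatrix_apply]
  refine DifferentiableOn.fun_sum (fun σ _ => DifferentiableOn.const_smul ?_ _)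
  exact DifferentiableOn.fun_finsetProd (fun k _ => hG _ _)

theorem card_compound_index_le (p : ℕ) :
    (Fintype.card {s : Finset (Fin d) // s.card = p} : ℝ) ≤ 2 ^ d := by
  have := Fintype.card_subtype_le (fun s : Finset (Fin d) => s.card = p)
  rw [Fintype.card_finset, Fintype.card_fin] at this
  exact_mod_cast this

variable [TopologicalSpace ε] {A : ℝ → ε → Matrix (Fin d) (Fin d) K} {c ω a : ℝ}

/-- Up to a bounded error, `extLog` at scale `n` has Fourier coefficients of size `O(n / k)`:
it is compared with `½ log (∑ |minors|² + η)`, which extends to the strip. -/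
theorem Tame.fourier_approx (h : Tame A c) (hanal : AnalyticOnStrip A) (ω : ℝ) :
    ∃ b Q : ℝ, 0 ≤ b ∧ 0 ≤ Q ∧ ∀ p ≤ d, ∀ (n : ℕ) (e : ε), 1 ≤ n → ∃ v : ℝ → ℝ, Continuous v ∧
      (∀ x, v (x + 1) = v x) ∧ (∀ x, |v x - extLog A ω p n x e| ≤ b) ∧
      (∀ k : ℕ, 1 ≤ k → ∀ θ : ℝ,
        |∫ x in (0:ℝ)..1, v x * Real.cos (2 * Real.pi * k * x + θ)| ≤ Q * n / k) := by
  obtain ⟨ρ, hρ, F, hFd, hFp, hFA, M, hM⟩ := hanal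
  obtain ⟨c1, hc1, hb1⟩ := compound_bound ℂ d M
  set c2 := max c c1 with hc2
  have hc20 : 0 ≤ c2 := h.nonneg.trans (le_max_left _ _)
  set b := 2⁻¹ * Real.log ((2 ^ d) ^ 2 + 1) with hb
  have hb0 : 0 ≤ b := mul_nonneg (by norm_num)
    (Real.log_nonneg (le_add_of_nonneg_left (by positivity)))
  refine ⟨b, 3 * (c2 + b) / ((ρ / 2) * (2 * Real.pi)), hb0, by positivity, ?_⟩
  intro p hp n e hn
  have hn' : (1:ℝ) ≤ n := by exact_mod_cast hn
  set f : ({s : Finset (Fin d) // s.card = p} × {s : Finset (Fin d) // s.card = p}) → ℂ → ℂ :=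
    fun i z => compound p (complexCocycle F ω n z e) i.1 i.2 with hf
  set η := Real.exp (-(2 * (c2 * n))) with hη
  have hη0 : 0 < η := Real.exp_pos _
  have hη1 : η ≤ 1 := Real.exp_le_one_iff.2 (by have := mul_nonneg hc20 (zero_le_one.trans hn'); linarith)
  have hfd : ∀ i, DifferentiableOn ℂ (f i) {z : ℂ | |z.im| < ρ} := fun i =>
    compound_diff (fun i j => complexCocycle_diff hFd ω n e i j) p i.1 i.2
  have hfp : ∀ i z, f i (z + 1) = f i z := fun i z => by
    simp only [hf, complexCocycle_per hFp]
  set N : ℝ := (Fintype.card {s : Finset (Fin d) // s.card = p} : ℝ) with hN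
  have hN0 : 0 ≤ N := Nat.cast_nonneg _
  have hNd : N ^ 2 ≤ (2 ^ d) ^ 2 := pow_le_pow_left₀ hN0 (card_compound_index_le p) 2
  have hH : ∀ z : ℂ, |z.im| < ρ → |2⁻¹ * Real.log (∑ i, ‖f i z‖ ^ 2 + η)| ≤ (c2 + b) * n := by
    intro z hz
    have hS0 : 0 ≤ ∑ i, ‖f i z‖ ^ 2 := Finset.sum_nonneg (fun i _ => by positivity)
    have hop := complexCocycle_bound (fun p z e hz => hb1 p _ (hM z hz e)) ω p n z hz e
    have hop2 : matOpNorm (compound p (complexCocycle F ω n z e)) ≤ Real.exp (c2 * n) :=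
      hop.trans (Real.exp_le_exp.2 (mul_le_mul_of_nonneg_right (le_max_right _ _) (by linarith)))
    have hS1 : ∑ i, ‖f i z‖ ^ 2 ≤ (2 ^ d) ^ 2 * Real.exp (2 * (c2 * n)) := by
      refine (sum_sq_le_matOpNorm (compound p (complexCocycle F ω n z e))).trans ?_
      rw [mul_comm 2 (c2 * (n:ℝ)), Real.exp_mul]
      refine mul_le_mul hNd ?_ (by positivity) (by positivity)
      norm_cast
      exact pow_le_pow_left₀ (matOpNorm_nonneg _) hop2 2
    have h1 : Real.log (∑ i, ‖f i z‖ ^ 2 + η) ≤ 2 * b + 2 * (c2 * n) := by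
      have h2 : ∑ i, ‖f i z‖ ^ 2 + η ≤ ((2 ^ d) ^ 2 + 1) * Real.exp (2 * (c2 * n)) := by
        have : 1 ≤ Real.exp (2 * (c2 * n)) := Real.one_le_exp (by positivity)
        linarith
      refine (Real.log_le_log (by linarith) h2).trans ?_
      rw [Real.log_mul (by positivity) (Real.exp_pos _).ne', Real.log_exp, hb]
      linarith
    have h3 : -(2 * (c2 * n)) ≤ Real.log (∑ i, ‖f i z‖ ^ 2 + η) := by
      rw [Real.le_log_iff_exp_le (by linarith)]
      linarith
    have h4 : b ≤ b * n := le_mul_of_one_le_right hb0 hn'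
    rw [abs_le]
    constructor <;> nlinarith
  have hreal : ∀ x : ℝ, ∑ i, ‖f i (x:ℂ)‖ ^ 2 =
      ∑ i : {s : Finset (Fin d) // s.card = p} × {s : Finset (Fin d) // s.card = p},
        ‖compound p (cocycle A ω n x e) i.1 i.2‖ ^ 2 := by
    intro x
    refine Finset.sum_congr rfl (fun i _ => ?_)
    simp only [hf]
    rw [complexCocycle_real hFA, compound_map, Matrix.map_apply]
    exact congrArg (· ^ 2) (norm_rcToComplex _)
  refine ⟨fun x => 2⁻¹ * Real.log (∑ i, ‖f i (x:ℂ)‖ ^ 2 + η), ?_, ?_, ?_, ?_⟩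
  · refine continuous_const.mul (Continuous.log ?_ (fun x => ?_))
    · refine Continuous.add (continuous_finsetSum _ (fun i _ => ?_)) continuous_const
      refine (continuous_norm.comp ?_).pow 2
      refine (hfd i).continuousOn.comp_continuous Complex.continuous_ofReal (fun x => ?_)
      simpa using hρ
    · exact (add_pos_of_nonneg_of_pos (Finset.sum_nonneg (fun i _ => by positivity)) hη0).ne'
  · intro x
    simp only [Complex.ofReal_add, Complex.ofReal_one, hfp]
  · intro x
    simp only [hreal]
    have hU := h.exp_extLog (ω := ω) hp n x e
    have hu := abs_le.1 (h.abs_extLog (ω := ω) hp n x e)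
    set U := matOpNorm (compound p (cocycle A ω n x e)) with hUdef
    set u := extLog A ω p n x e with hudef
    have hs1 := matOpNorm_sq_le (compound p (cocycle A ω n x e))
    have hs2 := sum_sq_le_matOpNorm (compound p (cocycle A ω n x e))
    rw [← hUdef, ← hU] at hs1 hs2
    set S := ∑ i : {s : Finset (Fin d) // s.card = p} × {s : Finset (Fin d) // s.card = p},
        ‖compound p (cocycle A ω n x e) i.1 i.2‖ ^ 2 with hS
    have hsq : Real.exp u ^ 2 = Real.exp (2 * u) := by rw [← Real.exp_nat_mul]; norm_num
    rw [hsq] at hs1 hs2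
    have hηu : η ≤ Real.exp (2 * u) := by
      refine Real.exp_le_exp.2 ?_
      have : c * n ≤ c2 * n := mul_le_mul_of_nonneg_right (le_max_left _ _) (by linarith)
      linarith
    have hpos : 0 < S + η := by have := Real.exp_pos (2 * u); linarith
    have h1 : 2 * u ≤ Real.log (S + η) := by
      rw [Real.le_log_iff_exp_le hpos]; linarith
    have h2 : Real.log (S + η) ≤ 2 * b + 2 * u := by
      have h3 : S + η ≤ ((2 ^ d) ^ 2 + 1) * Real.exp (2 * u) := by
        have := mul_le_mul_of_nonneg_right hNd (Real.exp_pos (2 * u)).le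
        linarith
      refine (Real.log_le_log hpos h3).trans ?_
      rw [Real.log_mul (by positivity) (Real.exp_pos _).ne', Real.log_exp, hb]
      linarith
    rw [abs_le]
    constructor <;> linarith
  · intro k hk θ
    refine (fourier_decay_log (half_pos hρ) (half_lt_self hρ) hη0 f hfd hfp hH k hk θ).trans
      (le_of_eq ?_)
    have : (k:ℝ) ≠ 0 := by positivity
    field_simp

/-- A large deviation estimate: off a set controlled by `g`, whose integral is `O(n ^ (-3/2))`,
`extLog` at scale `n` is within `δ n` of its mean. -/
theorem Tame.ldt (h : Tame A c) (ha : 1 < a) (hdio : Diophantine ω a) (hanal : AnalyticOnStrip A)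
    {δ : ℝ} (hδ : 0 < δ) :
    ∃ C : ℝ, 0 ≤ C ∧ ∀ p ≤ d, ∀ (n : ℕ) (e : ε), 1 ≤ n → ∃ g : ℝ → ℝ, Continuous g ∧
      (∀ x, g (x + 1) = g x) ∧ (∀ x, 0 ≤ g x) ∧
      (∀ x, δ * n < |extLog A ω p n x e - ∫ y in (0:ℝ)..1, extLog A ω p n y e| → 1 ≤ g x) ∧
      ∫ x in (0:ℝ)..1, g x ≤ C * (n : ℝ) ^ (-(3 / 2) : ℝ) := by
  obtain ⟨b, Q, hb, hQ, hv⟩ := h.fourier_approx hanal ω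
  obtain ⟨C0, hC0, herg⟩ := ergodic_l2 ha hdio
  have hc := h.nonneg
  -- beyond the scale `T`, both `8 b ≤ δ n` and `8 (c + 1) ≤ δ n` hold
  set T : ℝ := (8 * (c + 1) + 8 * b) / δ with hT
  have hT0 : 0 < T := by positivity
  set τ : ℝ := δ / (16 * (c + 1)) with hτ
  have hτ0 : 0 < τ := by positivity
  set C1 : ℝ := 4 / δ ^ 2 * (C0 * Q ^ 2 * τ ^ (-(3 / 2) : ℝ)) with hC1
  have hC10 : 0 ≤ C1 := by positivity
  refine ⟨T ^ (3 / 2 : ℝ) + C1, by positivity, ?_⟩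
  intro p hp n e hn
  have hn0 : (0:ℝ) < n := by exact_mod_cast hn
  rcases lt_or_ge (n:ℝ) T with hnT | hnT
  · refine ⟨fun _ => 1, continuous_const, fun _ => rfl, fun _ => zero_le_one, fun _ _ => le_rfl, ?_⟩
    have h1 : (1:ℝ) ≤ T ^ (3 / 2 : ℝ) * (n:ℝ) ^ (-(3 / 2) : ℝ) := by
      rw [Real.rpow_neg hn0.le, ← div_eq_mul_inv, ← Real.div_rpow hT0.le hn0.le]
      exact Real.one_le_rpow ((one_le_div hn0).2 hnT.le) (by norm_num)
    have h2 : 0 ≤ C1 * (n:ℝ) ^ (-(3 / 2) : ℝ) := by positivity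
    simp only [intervalIntegral.integral_const, sub_zero, smul_eq_mul, mul_one]
    linarith
  obtain ⟨v, hvc, hvp, hvu, hvf⟩ := hv p hp n e hn
  have hTn : 8 * (c + 1) + 8 * b ≤ δ * n := by
    rw [hT, div_le_iff₀ hδ] at hnT; linarith
  set M : ℕ := ⌊2 * τ * n⌋₊ with hMdef
  have h2τ : 2 * τ * n = δ * n / (8 * (c + 1)) := by rw [hτ]; field_simp; norm_num
  have h1τ : 1 ≤ 2 * τ * n := by
    rw [h2τ, one_le_div (by positivity)]; linarith
  have hM1 : 1 ≤ M := Nat.le_floor (by simpa using h1τ)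
  have hMle : (M:ℝ) ≤ 2 * τ * n := Nat.floor_le (by linarith)
  have hMge : τ * n ≤ M := by
    have h1 : (1:ℝ) ≤ M := by exact_mod_cast hM1
    have h2 := Nat.lt_floor_add_one (2 * τ * n)
    rw [← hMdef] at h2
    linarith
  have hM0 : (0:ℝ) < M := by exact_mod_cast hM1
  have hcM : 2 * c * M ≤ δ * n / 4 := by
    have h1 : 2 * c * M ≤ 2 * (c + 1) * (2 * τ * n) :=
      mul_le_mul (by linarith) hMle hM0.le (by linarith)
    have h2 : 2 * (c + 1) * (2 * τ * n) = δ * n / 4 := by rw [h2τ]; field_simp; norm_num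
    linarith
  have hE := herg v (Q * n) hvc hvp hvf M hM1
  set G : ℝ → ℝ := fun x => (∑ m ∈ Finset.range M, v (x + m * ω)) / M - ∫ y in (0:ℝ)..1, v y with hG
  have hGc : Continuous G := by
    refine Continuous.sub (Continuous.div_const (continuous_finsetSum _ (fun i _ => ?_)) _)
      continuous_const
    exact hvc.comp (by fun_prop)
  have huc := h.extLog_cont_left (ω := ω) hp n e
  have hint : |∫ y in (0:ℝ)..1, v y - extLog A ω p n y e| ≤ b := by
    have := intervalIntegral.norm_integral_le_of_norm_le_const (a := (0:ℝ)) (b := 1) (C := b)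
      (f := fun y => v y - extLog A ω p n y e) (fun y _ => hvu y)
    simpa using this
  rw [intervalIntegral.integral_sub (hvc.intervalIntegrable _ _) (huc.intervalIntegrable _ _)] at hint
  refine ⟨fun x => 4 / (δ * n) ^ 2 * (G x) ^ 2, by fun_prop, ?_, fun x => by positivity, ?_, ?_⟩
  · intro x
    have : G (x + 1) = G x := by
      simp only [hG]
      congr 2
      refine Finset.sum_congr rfl (fun m _ => ?_)
      rw [add_right_comm, hvp]
    simp only [this]
  · intro x hx
    have hav : |(∑ m ∈ Finset.range M, v (x + m * ω)) / M - extLog A ω p n x e| ≤ 2 * c * M + b := by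
      rw [show (∑ m ∈ Finset.range M, v (x + m * ω)) / M - extLog A ω p n x e =
        (∑ m ∈ Finset.range M, (v (x + m * ω) - extLog A ω p n x e)) / M by
          rw [Finset.sum_sub_distrib, Finset.sum_const, Finset.card_range, nsmul_eq_mul,
            sub_div, mul_div_cancel_left₀ _ hM0.ne']]
      rw [abs_div, abs_of_pos hM0, div_le_iff₀ hM0]
      refine (Finset.abs_sum_le_sum_abs _ _).trans ?_
      refine (Finset.sum_le_card_nsmul _ _ (2 * c * M + b) (fun m hm => ?_)).trans (le_of_eq ?_)
      · have h1 := hvu (x + m * ω)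
        have h2 := h.almost_inv_nat (ω := ω) hp n m x e
        have h3 : 2 * c * (m:ℝ) ≤ 2 * c * M := by
          have : (m:ℝ) ≤ M := by exact_mod_cast (Finset.mem_range.1 hm).le
          exact mul_le_mul_of_nonneg_left this (by linarith)
        rw [show v (x + m * ω) - extLog A ω p n x e = (v (x + m * ω) - extLog A ω p n (x + m * ω) e)
          + (extLog A ω p n (x + m * ω) e - extLog A ω p n x e) by ring]
        exact (abs_add_le _ _).trans (by linarith)
      · rw [Finset.card_range, nsmul_eq_mul]; ring
    have hGx : δ * n / 2 ≤ |G x| := by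
      have e1 : extLog A ω p n x e - ∫ y in (0:ℝ)..1, extLog A ω p n y e = G x
        - ((∑ m ∈ Finset.range M, v (x + m * ω)) / M - extLog A ω p n x e)
        + ((∫ y in (0:ℝ)..1, v y) - ∫ y in (0:ℝ)..1, extLog A ω p n y e) := by
          simp only [hG]; ring
      rw [e1] at hx
      have h1 := abs_add_le (G x - ((∑ m ∈ Finset.range M, v (x + m * ω)) / M - extLog A ω p n x e))
        ((∫ y in (0:ℝ)..1, v y) - ∫ y in (0:ℝ)..1, extLog A ω p n y e)
      have h2 := abs_sub (G x) ((∑ m ∈ Finset.range M, v (x + m * ω)) / M - extLog A ω p n x e)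
      linarith
    have h4 : (δ * n / 2) ^ 2 ≤ (G x) ^ 2 := by
      rw [← sq_abs (G x)]
      exact pow_le_pow_left₀ (by positivity) hGx 2
    have h5 : 4 / (δ * n) ^ 2 * (δ * n / 2) ^ 2 = 1 := by field_simp; norm_num
    rw [← h5]
    exact mul_le_mul_of_nonneg_left h4 (by positivity)
  · rw [intervalIntegral.integral_const_mul]
    have h6 : (M:ℝ) ^ (-(3 / 2) : ℝ) ≤ τ ^ (-(3 / 2) : ℝ) * (n:ℝ) ^ (-(3 / 2) : ℝ) := by
      rw [← Real.mul_rpow hτ0.le hn0.le]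
      exact Real.rpow_le_rpow_of_nonpos (by positivity) hMge (by norm_num)
    have h7 : 0 ≤ T ^ (3 / 2 : ℝ) * (n:ℝ) ^ (-(3 / 2) : ℝ) := by positivity
    calc 4 / (δ * n) ^ 2 * ∫ x in (0:ℝ)..1, G x ^ 2
        ≤ 4 / (δ * n) ^ 2 * (C0 * (Q * n) ^ 2 * (τ ^ (-(3 / 2) : ℝ) * (n:ℝ) ^ (-(3 / 2) : ℝ))) := by
          refine mul_le_mul_of_nonneg_left (hE.trans ?_) (by positivity)
          exact mul_le_mul_of_nonneg_left h6 (by positivity)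
      _ = C1 * (n:ℝ) ^ (-(3 / 2) : ℝ) := by rw [hC1]; field_simp
      _ ≤ _ := by linarith
end

/-! ### The avalanche step -/

section
variable {K : Type*} [RCLike K] {d : ℕ} {ε : Type*}

/-- The mean `∫ log ‖Λ^p A^{(n)}_x(e)‖ dx`, that is, `n` times `sumLyapFin`. -/
def meanLog (A : ℝ → ε → Matrix (Fin d) (Fin d) K) (ω : ℝ) (p n : ℕ) (e : ε) : ℝ :=
  ∫ x in (0:ℝ)..1, extLog A ω p n x e

variable [TopologicalSpace ε] {A : ℝ → ε → Matrix (Fin d) (Fin d) K} {c ω a : ℝ}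

theorem Tame.integral_extLog_shift (h : Tame A c) (p n : ℕ) (e : ε) (s : ℝ) :
    ∫ x in (0:ℝ)..1, extLog A ω p n (x + s) e = meanLog A ω p n e :=
  integral_shift (g := fun x => extLog A ω p n x e) (fun x => h.extLog_per p n x e) s

/-- The three-block inequality `compound_three` in logarithmic form, for consecutive blocks of lengths
`l`, `m` and `k`; the constant `2 (2^d)²` serves all orders of the exterior power. -/
theorem Tame.three (h : Tame A c) {p : ℕ} (hp : p + 2 ≤ d) (l m k : ℕ) (x : ℝ) (e : ε) :
    1 ≤ Real.exp (extLog A ω (p + 1) (l + m + k) x e + extLog A ω (p + 1) m (x + l * ω) e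
        - extLog A ω (p + 1) (l + m) x e - extLog A ω (p + 1) (m + k) (x + l * ω) e)
      + 2 * (2 ^ d) ^ 2 * Real.exp (extLog A ω p m (x + l * ω) e + extLog A ω (p + 2) m (x + l * ω) e
        + extLog A ω (p + 1) k (x + (l + m : ℕ) * ω) e + extLog A ω (p + 1) l x e
        - extLog A ω (p + 1) (l + m) x e - extLog A ω (p + 1) (m + k) (x + l * ω) e) := by
  have h1 := compound_three p (cocycle A ω k (x + (l + m : ℕ) * ω) e)
    (cocycle A ω m (x + l * ω) e) (cocycle A ω l x e) (h.unit_cocycle _ _ _)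
  have e1 : cocycle A ω (l + m) x e = cocycle A ω m (x + l * ω) e * cocycle A ω l x e :=
    cocycle_add _ _ _ _ _ _
  have e2 : cocycle A ω (m + k) (x + l * ω) e =
      cocycle A ω k (x + (l + m : ℕ) * ω) e * cocycle A ω m (x + l * ω) e := by
    rw [cocycle_add]; congr 2; push_cast; ring
  have e3 : cocycle A ω (l + m + k) x e =
      cocycle A ω k (x + (l + m : ℕ) * ω) e * cocycle A ω m (x + l * ω) e * cocycle A ω l x e := by
    rw [cocycle_add, e1, mul_assoc]
  rw [← e3, ← e2, ← e1] at h1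
  rw [← h.exp_extLog (by omega), ← h.exp_extLog (by omega), ← h.exp_extLog (by omega),
    ← h.exp_extLog (by omega), ← h.exp_extLog (by omega), ← h.exp_extLog hp,
    ← h.exp_extLog (by omega), ← h.exp_extLog (by omega), ← Real.exp_add, ← Real.exp_add,
    ← Real.exp_add, ← Real.exp_add, mul_assoc _ (Real.exp _) (Real.exp _), ← Real.exp_add] at h1
  have hcard : (2 * (Fintype.card {s : Finset (Fin d) // s.card = p + 1} : ℝ) ^ 2) ≤
      2 * (2 ^ d) ^ 2 :=
    mul_le_mul_of_nonneg_left (pow_le_pow_left₀ (Nat.cast_nonneg _) (card_compound_index_le _) 2)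
      (by norm_num)
  have h2 := h1.trans (add_le_add_right (mul_le_mul_of_nonneg_right hcard (Real.exp_pos _).le) _)
  set w := extLog A ω (p + 1) (m + k) (x + l * ω) e + extLog A ω (p + 1) (l + m) x e with hw
  have h3 := mul_le_mul_of_nonneg_right h2 (Real.exp_pos (-w)).le
  rw [add_mul, mul_assoc, ← Real.exp_add, ← Real.exp_add, ← Real.exp_add, add_neg_cancel,
    Real.exp_zero] at h3
  refine h3.trans (le_of_eq ?_)
  rw [hw]
  congr 2
  · ring
  · congr 1; ring

theorem neg_two_mul_le_of_one_le {ψ R : ℝ} (h : 1 ≤ Real.exp ψ + R) (h0 : 0 ≤ R) (hR : R ≤ 1 / 2) :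
    -(2 * R) ≤ ψ := by
  rw [← Real.exp_le_exp]
  have h1 := Real.add_one_le_exp (2 * R)
  have h2 : Real.exp (-(2 * R)) * Real.exp (2 * R) = 1 := by rw [← Real.exp_add]; simp
  have h3 : Real.exp (-(2 * R)) ≤ 1 - R := by
    have h4 : 0 < Real.exp (-(2 * R)) := Real.exp_pos _
    by_contra hcon
    push Not at hcon
    nlinarith
  linarith

theorem integral_four {f₁ f₂ f₃ f₄ : ℝ → ℝ} (h₁ : Continuous f₁) (h₂ : Continuous f₂)
    (h₃ : Continuous f₃) (h₄ : Continuous f₄) :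
    ∫ x in (0:ℝ)..1, (f₁ x + f₂ x - f₃ x - f₄ x) = (∫ x in (0:ℝ)..1, f₁ x) +
      (∫ x in (0:ℝ)..1, f₂ x) - (∫ x in (0:ℝ)..1, f₃ x) - ∫ x in (0:ℝ)..1, f₄ x := by
  rw [intervalIntegral.integral_sub (Continuous.intervalIntegrable (by fun_prop) _ _)
      (h₄.intervalIntegrable _ _),
    intervalIntegral.integral_sub (Continuous.intervalIntegrable (by fun_prop) _ _)
      (h₃.intervalIntegrable _ _),
    intervalIntegral.integral_add (h₁.intervalIntegrable _ _) (h₂.intervalIntegrable _ _)]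

/-- The avalanche step. While the scale-`m` gap and near-additivity persist, prolonging the
middle block changes the additivity defect by only `O(m ^ (-1/2))`, which is summable along
dyadic scales. -/
theorem Tame.step (h : Tame A c) (ha : 1 < a) (hdio : Diophantine ω a) (hanal : AnalyticOnStrip A)
    {κ : ℝ} (hκ : 0 < κ) :
    ∃ (C : ℝ) (N : ℕ), 0 ≤ C ∧ 2 ≤ N ∧ ∀ p, p + 2 ≤ d → ∀ (e : ε) (l m k : ℕ), N ≤ m → k ≤ m →
      m ≤ k + 1 → m ≤ l → l ≤ 2 * m →
      κ * m / 2 ≤ 2 * meanLog A ω (p + 1) m e - meanLog A ω p m e - meanLog A ω (p + 2) m e →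
      meanLog A ω (p + 1) k e + meanLog A ω (p + 1) m e - meanLog A ω (p + 1) (m + k) e
        ≤ κ * m / 16 →
      meanLog A ω (p + 1) l e + meanLog A ω (p + 1) m e - meanLog A ω (p + 1) (l + m) e
        ≤ κ * m / 16 →
      meanLog A ω (p + 1) l e + meanLog A ω (p + 1) (m + k) e - meanLog A ω (p + 1) (l + m + k) e
        ≤ meanLog A ω (p + 1) l e + meanLog A ω (p + 1) m e - meanLog A ω (p + 1) (l + m) e
          + C * (m:ℝ) ^ (-(1 / 2) : ℝ) := by
  obtain ⟨C0, hC0, hldt⟩ := h.ldt (ω := ω) ha hdio hanal (δ := κ / 80) (by positivity)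
  have hc := h.nonneg
  set B : ℝ := 2 * (2 ^ d) ^ 2 with hB
  have hB0 : 0 < B := by positivity
  obtain ⟨N, hN⟩ := exists_nat_gt (8 * B / κ)
  refine ⟨2 * (B * (4 / κ)) + 2 * c * (6 * (C0 * 2 ^ (3 / 2 : ℝ))), N + 2, by positivity,
    by omega, ?_⟩
  intro p hp e l m k hm hkm hmk hml hlm hG hδk hδl
  have hmR : (0:ℝ) < m := by exact_mod_cast (by omega : 0 < m)
  have hm1 : (1:ℝ) ≤ m := by exact_mod_cast (by omega : 1 ≤ m)
  have hkR : (k:ℝ) ≤ m := by exact_mod_cast hkm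
  have hk2 : (m:ℝ) / 2 ≤ k := by
    have : m ≤ 2 * k := by omega
    have : (m:ℝ) ≤ 2 * k := by exact_mod_cast this
    linarith
  have hlR : (l:ℝ) ≤ 2 * m := by exact_mod_cast hlm
  -- `B e^{-κ m / 4}` is at most `4B/(κ m)`, hence at most `1/2` and at most `(4B/κ) m^{-1/2}`
  have hexp : B * Real.exp (-(κ * m / 4)) ≤ B * (4 / (κ * m)) := by
    refine mul_le_mul_of_nonneg_left ?_ hB0.le
    have hpos : 0 < κ * m / 4 := by positivity
    rw [Real.exp_neg, show 4 / (κ * m) = (κ * m / 4)⁻¹ by rw [inv_div]]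
    refine inv_anti₀ hpos ?_
    have := Real.add_one_le_exp (κ * m / 4)
    linarith
  have hsmall : B * (4 / (κ * m)) ≤ 1 / 2 := by
    have h1 : 8 * B / κ < m := hN.trans_le (by exact_mod_cast (by omega : N ≤ m))
    rw [div_lt_iff₀ hκ] at h1
    rw [mul_div_assoc', div_le_div_iff₀ (by positivity) (by norm_num)]
    linarith
  have hhalf : B * (4 / (κ * m)) ≤ B * (4 / κ) * (m:ℝ) ^ (-(1 / 2) : ℝ) := by
    have h1 : (m:ℝ)⁻¹ ≤ (m:ℝ) ^ (-(1 / 2) : ℝ) := by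
      rw [← Real.rpow_neg_one]
      exact Real.rpow_le_rpow_of_exponent_le hm1 (by norm_num)
    have h2 : B * (4 / (κ * m)) = B * (4 / κ) * (m:ℝ)⁻¹ := by field_simp
    rw [h2]
    exact mul_le_mul_of_nonneg_left h1 (by positivity)
  have hpow : ∀ j : ℕ, (m:ℝ) / 2 ≤ j →
      C0 * (j:ℝ) ^ (-(3 / 2) : ℝ) ≤ C0 * 2 ^ (3 / 2 : ℝ) * (m:ℝ) ^ (-(3 / 2) : ℝ) := by
    intro j hj
    rw [mul_assoc]
    refine mul_le_mul_of_nonneg_left ?_ hC0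
    refine (Real.rpow_le_rpow_of_nonpos (by positivity) hj (by norm_num)).trans (le_of_eq ?_)
    rw [Real.div_rpow hmR.le (by norm_num), Real.rpow_neg (by norm_num : (0:ℝ) ≤ 2), div_inv_eq_mul,
      mul_comm]
  have hdev : ∀ q ≤ d, ∀ (j : ℕ) (s : ℝ), (m:ℝ) / 2 ≤ j → ∃ g : ℝ → ℝ, Continuous g ∧
      (∀ x, 0 ≤ g x) ∧ (∀ x, g x < 1 → |extLog A ω q j (x + s) e - meanLog A ω q j e| ≤ κ / 80 * j) ∧
      ∫ x in (0:ℝ)..1, g x ≤ C0 * 2 ^ (3 / 2 : ℝ) * (m:ℝ) ^ (-(3 / 2) : ℝ) := by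
    intro q hq j s hj
    have hj1 : 1 ≤ j := by
      have : (0:ℝ) < j := by linarith
      exact_mod_cast this
    obtain ⟨g, hg1, hg2, hg3, hg4, hg5⟩ := hldt q hq j e hj1
    refine ⟨fun x => g (x + s), hg1.comp (by fun_prop), fun x => hg3 _, fun x hx => ?_, ?_⟩
    · by_contra hcon
      exact absurd (hg4 (x + s) (not_le.1 hcon)) (not_le.2 hx)
    · rw [integral_shift hg2]
      exact hg5.trans (hpow j hj)
  obtain ⟨g1, g1c, g1n, g1d, g1i⟩ := hdev p (by omega) m (l * ω) (by linarith)
  obtain ⟨g2, g2c, g2n, g2d, g2i⟩ := hdev (p + 2) hp m (l * ω) (by linarith)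
  obtain ⟨g3, g3c, g3n, g3d, g3i⟩ := hdev (p + 1) (by omega) k ((l + m : ℕ) * ω) hk2
  obtain ⟨g4, g4c, g4n, g4d, g4i⟩ := hdev (p + 1) (by omega) l 0
    (by have : (m:ℝ) ≤ l := by exact_mod_cast hml
        linarith)
  obtain ⟨g5, g5c, g5n, g5d, g5i⟩ := hdev (p + 1) (by omega) (l + m) 0
    (by push_cast; have : (0:ℝ) ≤ l := by positivity
        linarith)
  obtain ⟨g6, g6c, g6n, g6d, g6i⟩ := hdev (p + 1) (by omega) (m + k) (l * ω)
    (by push_cast; linarith)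
  set g : ℝ → ℝ := fun x => g1 x + g2 x + g3 x + g4 x + g5 x + g6 x with hg
  set ψ : ℝ → ℝ := fun x => extLog A ω (p + 1) (l + m + k) x e
    + extLog A ω (p + 1) m (x + l * ω) e - extLog A ω (p + 1) (l + m) x e
    - extLog A ω (p + 1) (m + k) (x + l * ω) e with hψ
  have hlow : ∀ x, -(2 * (B * (4 / (κ * m))) + 2 * c * m * g x) ≤ ψ x := by
    intro x
    have p1 := g1n x
    have p2 := g2n x
    have p3 := g3n x
    have p4 := g4n x
    have p5 := g5n x
    have p6 := g6n x
    have hg0 : 0 ≤ 2 * c * m * g x := by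
      refine mul_nonneg (by positivity) ?_
      simp only [hg]; linarith
    rcases le_or_gt 1 (g x) with hgx | hgx
    · have a1 := h.low_left (ω := ω) (p := p + 1) (by omega) (l + m) k x e
      have a2 := h.sub (ω := ω) (p := p + 1) (by omega) m k (x + l * ω) e
      have a3 := (abs_le.1 (h.abs_extLog (ω := ω) (p := p + 1) (by omega) k
        (x + l * ω + m * ω) e)).2
      have a4 : c * k ≤ c * m := mul_le_mul_of_nonneg_left hkR hc
      have a5 : 2 * c * m * 1 ≤ 2 * c * m * g x := mul_le_mul_of_nonneg_left hgx (by positivity)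
      have a6 : 0 ≤ B * (4 / (κ * m)) := by positivity
      simp only [hψ]
      linarith
    · have hgx' : g1 x + g2 x + g3 x + g4 x + g5 x + g6 x < 1 := hgx
      have d1 := abs_le.1 (g1d x (by linarith))
      have d2 := abs_le.1 (g2d x (by linarith))
      have d3 := abs_le.1 (g3d x (by linarith))
      have d4 := abs_le.1 (g4d x (by linarith))
      have d5 := abs_le.1 (g5d x (by linarith))
      have d6 := abs_le.1 (g6d x (by linarith))
      rw [add_zero] at d4 d5
      have h3 := h.three (ω := ω) hp l m k x e
      have hle : extLog A ω p m (x + l * ω) e + extLog A ω (p + 2) m (x + l * ω) e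
        + extLog A ω (p + 1) k (x + (l + m : ℕ) * ω) e + extLog A ω (p + 1) l x e
        - extLog A ω (p + 1) (l + m) x e - extLog A ω (p + 1) (m + k) (x + l * ω) e
          ≤ -(κ * m / 4) := by
        have b1 : κ / 80 * k ≤ κ / 80 * m := mul_le_mul_of_nonneg_left hkR (by positivity)
        have b2 : κ / 80 * l ≤ κ / 80 * (2 * m) := mul_le_mul_of_nonneg_left hlR (by positivity)
        push_cast at d3 d5 d6 ⊢
        rw [mul_add] at d5 d6
        linarith [d1.1, d1.2, d2.1, d2.2, d3.1, d3.2, d4.1, d4.2, d5.1, d5.2, d6.1, d6.2]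
      have h4 : 1 ≤ Real.exp (ψ x) + B * (4 / (κ * m)) := by
        refine h3.trans (add_le_add_right ?_ _)
        exact (mul_le_mul_of_nonneg_left (Real.exp_le_exp.2 hle) hB0.le).trans hexp
      have h5 := neg_two_mul_le_of_one_le h4 (by positivity) hsmall
      linarith
  have hgc : Continuous g := by fun_prop
  have c1 := h.extLog_cont_left (ω := ω) (p := p + 1) (by omega) (l + m + k) e
  have c2 : Continuous fun x => extLog A ω (p + 1) m (x + l * ω) e :=
    (h.extLog_cont_left (ω := ω) (p := p + 1) (by omega) m e).comp (by fun_prop)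
  have c3 := h.extLog_cont_left (ω := ω) (p := p + 1) (by omega) (l + m) e
  have c4 : Continuous fun x => extLog A ω (p + 1) (m + k) (x + l * ω) e :=
    (h.extLog_cont_left (ω := ω) (p := p + 1) (by omega) (m + k) e).comp (by fun_prop)
  have hψc : Continuous ψ := ((c1.add c2).sub c3).sub c4
  have hψi : ∫ x in (0:ℝ)..1, ψ x = meanLog A ω (p + 1) (l + m + k) e + meanLog A ω (p + 1) m e
      - meanLog A ω (p + 1) (l + m) e - meanLog A ω (p + 1) (m + k) e := by
    rw [integral_four c1 c2 c3 c4, h.integral_extLog_shift, h.integral_extLog_shift]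
    rfl
  have hgi : ∫ x in (0:ℝ)..1, g x ≤ 6 * (C0 * 2 ^ (3 / 2 : ℝ) * (m:ℝ) ^ (-(3 / 2) : ℝ)) := by
    simp only [hg]
    rw [intervalIntegral.integral_add (Continuous.intervalIntegrable (by fun_prop) _ _)
        (g6c.intervalIntegrable _ _),
      intervalIntegral.integral_add (Continuous.intervalIntegrable (by fun_prop) _ _)
        (g5c.intervalIntegrable _ _),
      intervalIntegral.integral_add (Continuous.intervalIntegrable (by fun_prop) _ _)
        (g4c.intervalIntegrable _ _),
      intervalIntegral.integral_add (Continuous.intervalIntegrable (by fun_prop) _ _)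
        (g3c.intervalIntegrable _ _),
      intervalIntegral.integral_add (g1c.intervalIntegrable _ _) (g2c.intervalIntegrable _ _)]
    linarith
  have hmono := intervalIntegral.integral_mono_on (μ := volume) (zero_le_one (α := ℝ))
    (Continuous.intervalIntegrable (by fun_prop : Continuous fun x =>
      -(2 * (B * (4 / (κ * m))) + 2 * c * m * g x)) 0 1)
    (hψc.intervalIntegrable 0 1) (fun x _ => hlow x)
  rw [intervalIntegral.integral_neg, intervalIntegral.integral_add
    (Continuous.intervalIntegrable (by fun_prop) _ _)
    (Continuous.intervalIntegrable (by fun_prop) _ _), intervalIntegral.integral_const,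
    intervalIntegral.integral_const_mul, hψi, sub_zero, one_smul] at hmono
  have hm32 : (m:ℝ) * (m:ℝ) ^ (-(3 / 2) : ℝ) = (m:ℝ) ^ (-(1 / 2) : ℝ) := by
    rw [← Real.rpow_one_add' hmR.le (by norm_num)]
    norm_num
  have hfin : 2 * c * m * ∫ x in (0:ℝ)..1, g x ≤
      2 * c * (6 * (C0 * 2 ^ (3 / 2 : ℝ))) * (m:ℝ) ^ (-(1 / 2) : ℝ) := by
    refine (mul_le_mul_of_nonneg_left hgi (by positivity)).trans (le_of_eq ?_)
    rw [← hm32]; ring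
  rw [add_mul]
  linarith
end

/-! ### Induction on scales -/

theorem rpow_neg_half_le {m n : ℕ} (hm : 1 ≤ m) (h : 3 * m ≤ 2 * n) :
    (n:ℝ) ^ (-(1 / 2) : ℝ) ≤ 5 / 6 * (m:ℝ) ^ (-(1 / 2) : ℝ) := by
  have hm0 : (0:ℝ) < m := by exact_mod_cast hm
  have h1 : (3:ℝ) * m ≤ 2 * n := by exact_mod_cast h
  have h2 : ((5 / 6 : ℝ) ^ 2)⁻¹ * m ≤ n := by norm_num; linarith
  refine (Real.rpow_le_rpow_of_nonpos (by positivity) h2 (by norm_num)).trans (le_of_eq ?_)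
  rw [Real.mul_rpow (by positivity) hm0.le, Real.inv_rpow (by positivity),
    ← Real.rpow_neg (by positivity), neg_neg, ← Real.rpow_natCast, ← Real.rpow_mul (by norm_num)]
  norm_num

/-- Induction on scales. If, over one dyadic range `[N, 2N]`, the gaps are at least `(3κ/4) m` and
the doubling defects at most `(κ/256) m`, then the doubling defects stay bounded at all larger
scales. -/
theorem avalanche {d : ℕ} (I : ℕ → ℕ → ℝ) {c κ C : ℝ} {N₀ : ℕ} (hc : 0 ≤ c) (hκ : 0 < κ)
    (hC : 0 ≤ C) (hN₀ : 2 ≤ N₀)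
    (hsub : ∀ p ≤ d, ∀ n m, I p (n + m) ≤ I p n + I p m)
    (hlip : ∀ p ≤ d, ∀ n, |I p (n + 1) - I p n| ≤ c)
    (h0 : ∀ n m, I 0 (n + m) = I 0 n + I 0 m) (hd : ∀ n m, I d (n + m) = I d n + I d m)
    (hstep : ∀ p, p + 2 ≤ d → ∀ l m k : ℕ, N₀ ≤ m → k ≤ m → m ≤ k + 1 → m ≤ l → l ≤ 2 * m →
      κ * m / 2 ≤ 2 * I (p + 1) m - I p m - I (p + 2) m →
      I (p + 1) k + I (p + 1) m - I (p + 1) (m + k) ≤ κ * m / 16 →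
      I (p + 1) l + I (p + 1) m - I (p + 1) (l + m) ≤ κ * m / 16 →
      I (p + 1) l + I (p + 1) (m + k) - I (p + 1) (l + m + k) ≤
        I (p + 1) l + I (p + 1) m - I (p + 1) (l + m) + C * (m:ℝ) ^ (-(1 / 2) : ℝ))
    {N : ℕ} (hN : N₀ ≤ N) (hN1 : 12 * C + 2 * c ≤ κ * N / 64)
    (hbase1 : ∀ m, N ≤ m → m ≤ 2 * N → ∀ p ≤ d, I p m + I p m - I p (m + m) ≤ κ / 256 * m)
    (hbase2 : ∀ m, N ≤ m → m ≤ 2 * N → ∀ p, p + 2 ≤ d →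
      3 * κ / 4 * m ≤ 2 * I (p + 1) m - I p m - I (p + 2) m) :
    ∀ p ≤ d, ∀ n, N ≤ n → I p n + I p n - I p (n + n) ≤ κ / 128 * N + 12 * C := by
  have hNR : (0:ℝ) < N := by exact_mod_cast (by omega : 0 < N)
  set D : ℝ := κ / 128 * N + 12 * C with hD
  have hD0 : 0 ≤ D := by positivity
  set E : ℝ := D + 2 * c with hE
  have hE0 : 0 ≤ E := by positivity
  have hEN : E ≤ 3 * κ * N / 128 := by rw [hE, hD]; linarith
  set g : ℝ := 3 * κ / 4 - 4 * E / N with hg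
  have hgκ : κ / 2 ≤ g := by
    have : 4 * E / N ≤ κ / 4 := by
      rw [div_le_iff₀ hNR]
      have : 0 < κ * N := by positivity
      linarith
    rw [hg]; linarith
  have hr0 : ∀ n : ℕ, 0 ≤ (n:ℝ) ^ (-(1 / 2) : ℝ) := fun n => by positivity
  have hr1 : ∀ n : ℕ, 1 ≤ n → (n:ℝ) ^ (-(1 / 2) : ℝ) ≤ 1 := fun n hn =>
    Real.rpow_le_one_of_one_le_of_nonpos (by exact_mod_cast hn) (by norm_num)
  have key : ∀ n, N ≤ n →
      (∀ p ≤ d, I p n + I p n - I p (n + n) ≤ D - 12 * C * (n:ℝ) ^ (-(1 / 2) : ℝ)) ∧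
      (∀ p, p + 2 ≤ d → g * n + 3 * E ≤ 2 * I (p + 1) n - I p n - I (p + 2) n) := by
    intro n
    induction n using Nat.strong_induction_on with
    | _ n ih =>
      intro hn
      have hnR : (N:ℝ) ≤ n := by exact_mod_cast hn
      rcases le_or_gt n (2 * N) with h2 | h2
      · constructor
        · intro p hp
          have h3 := hbase1 n hn h2 p hp
          have h4 : (n:ℝ) ≤ 2 * N := by exact_mod_cast h2
          have h5 : κ / 256 * n ≤ κ / 256 * (2 * N) := mul_le_mul_of_nonneg_left h4 (by positivity)
          have h6 : 12 * C * (n:ℝ) ^ (-(1 / 2) : ℝ) ≤ 12 * C * 1 :=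
            mul_le_mul_of_nonneg_left (hr1 n (by omega)) (by positivity)
          rw [hD]; linarith
        · intro p hp
          have h3 := hbase2 n hn h2 p hp
          have h4 : 4 * E ≤ 4 * E / N * n := by
            rw [div_mul_eq_mul_div, le_div_iff₀ hNR]
            exact mul_le_mul_of_nonneg_left hnR (by positivity)
          rw [hg, sub_mul]
          linarith
      -- split `n = m + k` with `m = ⌈n / 2⌉`
      · obtain ⟨m, k, hmk, hkm, hmk1⟩ : ∃ m k : ℕ, m + k = n ∧ k ≤ m ∧ m ≤ k + 1 :=
          ⟨(n + 1) / 2, n - (n + 1) / 2, by omega, by omega, by omega⟩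
        obtain ⟨ihm1, ihm2⟩ := ih m (by omega) (by omega)
        obtain ⟨-, ihk2⟩ := ih k (by omega) (by omega)
        have hmR : (N:ℝ) ≤ m := by exact_mod_cast (by omega : N ≤ m)
        have hkR : (N:ℝ) ≤ k := by exact_mod_cast (by omega : N ≤ k)
        have hnmk : (n:ℝ) = m + k := by exact_mod_cast hmk.symm
        have hκN : κ * N ≤ κ * m := mul_le_mul_of_nonneg_left hmR hκ.le
        have hδm : ∀ p ≤ d, I p m + I p m - I p (m + m) ≤ D := fun p hp => by
          have := ihm1 p hp
          have := mul_nonneg (by positivity : 0 ≤ 12 * C) (hr0 m)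
          linarith
        have hδk : ∀ p ≤ d, I p k + I p m - I p (m + k) ≤ E := fun p hp => by
          have h3 := hδm p hp
          rcases (by omega : k = m ∨ m = k + 1) with h4 | h4
          · rw [h4]; linarith
          · have h5 := abs_le.1 (hlip p hp k)
            have h6 := abs_le.1 (hlip p hp (m + k))
            rw [← h4] at h5
            rw [show m + k + 1 = m + m by omega] at h6
            linarith
        constructor
        · intro p hp
          have hDr : 0 ≤ D - 12 * C * (n:ℝ) ^ (-(1 / 2) : ℝ) := by
            have h6 : 12 * C * (n:ℝ) ^ (-(1 / 2) : ℝ) ≤ 12 * C * 1 :=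
              mul_le_mul_of_nonneg_left (hr1 n (by omega)) (by positivity)
            have : 0 ≤ κ / 128 * N := by positivity
            rw [hD]; linarith
          rcases Nat.eq_zero_or_pos p with hp0 | hp0
          · rw [hp0, h0]; linarith
          rcases Nat.eq_or_lt_of_le hp with hpd | hpd
          · rw [hpd, hd]; linarith
          obtain ⟨q, rfl⟩ : ∃ q, p = q + 1 := ⟨p - 1, by omega⟩
          have hG : κ * m / 2 ≤ 2 * I (q + 1) m - I q m - I (q + 2) m := by
            have h3 := ihm2 q (by omega)
            have h4 : κ / 2 * m ≤ g * m := mul_le_mul_of_nonneg_right hgκ (by linarith)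
            linarith
          have hCr : C * (m:ℝ) ^ (-(1 / 2) : ℝ) ≤ C * 1 :=
            mul_le_mul_of_nonneg_left (hr1 m (by omega)) hC
          have hDm := ihm1 (q + 1) hp
          have hDm' := hδm (q + 1) hp
          have hκN0 : 0 < κ * N := by positivity
          have hk16 : I (q + 1) k + I (q + 1) m - I (q + 1) (m + k) ≤ κ * m / 16 := by
            have := hδk (q + 1) hp
            linarith
          have s1 := hstep q (by omega) m m k (by omega) hkm hmk1 le_rfl (by omega) hG hk16
            (by linarith)
          rw [add_assoc m m k, hmk] at s1
          have s2 := hstep q (by omega) n m k (by omega) hkm hmk1 (by omega) (by omega) hG hk16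
            (by
              rw [add_comm n m]
              have : C ≤ E := by
                have : 0 ≤ κ / 128 * N := by positivity
                rw [hE, hD]; linarith
              linarith)
          rw [add_assoc n m k, hmk, add_comm n m] at s2
          have hr := rpow_neg_half_le (m := m) (n := n) (by omega) (by omega)
          have h7 : 12 * C * (n:ℝ) ^ (-(1 / 2) : ℝ) ≤ 12 * C * (5 / 6 * (m:ℝ) ^ (-(1 / 2) : ℝ)) :=
            mul_le_mul_of_nonneg_left hr (by positivity)
          linarith
        · intro p hp
          have h3 := ihm2 p hp
          have h4 := ihk2 p hp
          have h5 := hδk (p + 1) (by omega)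
          have h6 := hsub p (by omega) m k
          have h7 := hsub (p + 2) hp m k
          rw [hmk] at h5 h6 h7
          rw [hnmk, mul_add]
          linarith
  intro p hp n hn
  have h1 := (key n hn).1 p hp
  have h2 := mul_nonneg (by positivity : 0 ≤ 12 * C) (hr0 n)
  linarith

/-- A subadditive sequence whose doubling defects are bounded by `D` from scale `n` on
is, at scale `n`, within `D` of its linear growth: the quotients `u (2^i n) / (2^i n)` decrease to
the limit, with geometrically decaying differences. -/
theorem subadditive_rate {u : ℕ → ℝ} (hu : Subadditive u) {b D : ℝ} (hb : ∀ n : ℕ, |u n| ≤ b * n)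
    {n : ℕ} (hn : 1 ≤ n) (hD : ∀ m, n ≤ m → u m + u m - u (m + m) ≤ D) :
    u n - D ≤ n * hu.lim ∧ n * hu.lim ≤ u n := by
  have hbdd : BddBelow (Set.range fun n => u n / n) := by
    refine ⟨-b, ?_⟩
    rintro _ ⟨m, rfl⟩
    rcases Nat.eq_zero_or_pos m with h0 | h0
    · have h1 := (abs_nonneg _).trans (hb 1)
      simp [h0]; simpa using h1
    · have hm : (0:ℝ) < m := by exact_mod_cast h0
      simp only
      rw [le_div_iff₀ hm]
      linarith [(abs_le.1 (hb m)).1]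
  have hn0 : (0:ℝ) < n := by exact_mod_cast hn
  refine ⟨?_, ?_⟩
  · have hpow : ∀ j : ℕ, (2:ℝ) ^ j * (u n - D) ≤ u (2 ^ j * n) - D := by
      intro j
      induction j with
      | zero => simp
      | succ j ih =>
        have h1 := hD (2 ^ j * n) (Nat.le_mul_of_pos_left n (by positivity))
        rw [show 2 ^ (j + 1) * n = 2 ^ j * n + 2 ^ j * n by ring, pow_succ]
        linarith
    have hlim := hu.tendsto_lim hbdd
    have hsub : Filter.Tendsto (fun j : ℕ => 2 ^ j * n) Filter.atTop Filter.atTop :=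
      (tendsto_pow_atTop_atTop_of_one_lt (by norm_num)).atTop_mul_const' (by omega)
    have h1 := hlim.comp hsub
    have h2 : Filter.Tendsto (fun j : ℕ => (u n - D) / n + D / n * (1 / 2 : ℝ) ^ j) Filter.atTop
        (nhds ((u n - D) / n + D / n * 0)) :=
      tendsto_const_nhds.add (tendsto_const_nhds.mul
        (tendsto_pow_atTop_nhds_zero_of_lt_one (by norm_num) (by norm_num)))
    have h3 := le_of_tendsto_of_tendsto' h2 h1 (fun j => by
      have h4 := hpow j
      simp only [Function.comp]
      push_cast
      rw [le_div_iff₀ (by positivity), div_pow, one_pow]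
      have : ((u n - D) / n + D / n * (1 / 2 ^ j)) * (2 ^ j * n) = 2 ^ j * (u n - D) + D := by
        field_simp
      rw [this]; linarith)
    rw [mul_zero, add_zero, div_le_iff₀ hn0] at h3
    linarith
  · have := hu.lim_le_div hbdd (n := n) (by omega)
    rw [le_div_iff₀ hn0] at this
    linarith

/-! ### Uniform rate of convergence -/

section
variable {K : Type*} [RCLike K] {d : ℕ} {ε : Type*}

theorem compound_zero (M : Matrix (Fin d) (Fin d) K) : compound 0 M = 1 := by
  ext s t
  have hs : s = t := by
    apply Subtype.ext
    rw [Finset.card_eq_zero.1 s.2, Finset.card_eq_zero.1 t.2]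
  subst hs
  rw [Matrix.one_apply_eq, compound, Matrix.det_fin_zero]

theorem matOpNorm_eq_of_subsingleton {m : Type*} [Fintype m] [DecidableEq m] [Subsingleton m]
    (M : Matrix m m K) (i : m) : matOpNorm M = ‖M i i‖ := by
  refine le_antisymm ?_ (norm_entry_le_matOpNorm M i i)
  have h1 := matOpNorm_le_of_entries M (norm_nonneg (M i i)) (fun j k => by
    rw [Subsingleton.elim j i, Subsingleton.elim k i])
  have : Fintype.card m = 1 := Fintype.card_eq_one_iff.2 ⟨i, fun j => Subsingleton.elim _ _⟩
  rwa [this, Nat.cast_one, one_mul] at h1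

/-- The top exterior power is the determinant, so its norm is multiplicative. -/
theorem matOpNorm_compound_top_mul (M N : Matrix (Fin d) (Fin d) K) :
    matOpNorm (compound d (M * N)) = matOpNorm (compound d M) * matOpNorm (compound d N) := by
  obtain ⟨i⟩ := compound_index_nonempty (le_refl d)
  have : Subsingleton {s : Finset (Fin d) // s.card = d} := ⟨fun s t => by
    have huniv : ∀ s : {s : Finset (Fin d) // s.card = d}, s.1 = Finset.univ := fun s =>
      (Finset.card_eq_iff_eq_univ _).1 (by rw [s.2, Fintype.card_fin])
    exact Subtype.ext ((huniv s).trans (huniv t).symm)⟩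
  rw [matOpNorm_eq_of_subsingleton _ i, matOpNorm_eq_of_subsingleton _ i,
    matOpNorm_eq_of_subsingleton _ i, compound_mul, Matrix.mul_apply, ← norm_mul]
  rw [Finset.sum_eq_single i (fun j _ hj => absurd (Subsingleton.elim j i) hj)
    (fun h => absurd (Finset.mem_univ i) h)]

theorem mean_zero (A : ℝ → ε → Matrix (Fin d) (Fin d) K) (ω : ℝ) (n : ℕ) (e : ε) : meanLog A ω 0 n e = 0 := by
  have := compound_index_nonempty (Nat.zero_le d)
  have h1 : ∀ x, extLog A ω 0 n x e = 0 := fun x => by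
    rw [extLog, compound_zero, matOpNorm_one, Real.log_one]
  simp [meanLog, h1]

variable [TopologicalSpace ε] {A : ℝ → ε → Matrix (Fin d) (Fin d) K} {c ω a : ℝ}

namespace Tame

theorem mean_sub (h : Tame A c) {p : ℕ} (hp : p ≤ d) (n m : ℕ) (e : ε) :
    meanLog A ω p (n + m) e ≤ meanLog A ω p n e + meanLog A ω p m e := by
  have c1 := h.extLog_cont_left (ω := ω) hp n e
  have c2 : Continuous fun x => extLog A ω p m (x + n * ω) e :=
    (h.extLog_cont_left (ω := ω) hp m e).comp (by fun_prop)
  rw [← h.integral_extLog_shift p m e (n * ω)]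
  rw [meanLog, meanLog, ← intervalIntegral.integral_add (c1.intervalIntegrable _ _)
    (c2.intervalIntegrable _ _)]
  exact intervalIntegral.integral_mono_on zero_le_one
    ((h.extLog_cont_left (ω := ω) hp (n + m) e).intervalIntegrable _ _)
    ((c1.add c2).intervalIntegrable _ _) (fun x _ => h.sub hp n m x e)

theorem mean_top (h : Tame A c) (n m : ℕ) (e : ε) :
    meanLog A ω d (n + m) e = meanLog A ω d n e + meanLog A ω d m e := by
  have c1 := h.extLog_cont_left (ω := ω) le_rfl n e
  have c2 : Continuous fun x => extLog A ω d m (x + n * ω) e :=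
    (h.extLog_cont_left (ω := ω) le_rfl m e).comp (by fun_prop)
  rw [← h.integral_extLog_shift d m e (n * ω)]
  rw [meanLog, meanLog, ← intervalIntegral.integral_add (c1.intervalIntegrable _ _)
    (c2.intervalIntegrable _ _)]
  congr 1
  funext x
  rw [extLog, cocycle_add, matOpNorm_compound_top_mul, Real.log_mul (h.pos le_rfl _ _ _).ne'
    (h.pos le_rfl _ _ _).ne', add_comm]
  rfl

theorem abs_mean (h : Tame A c) {p : ℕ} (hp : p ≤ d) (n : ℕ) (e : ε) :
    |meanLog A ω p n e| ≤ c * n := by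
  have := intervalIntegral.norm_integral_le_of_norm_le_const (a := (0:ℝ)) (b := 1) (C := c * n)
      (f := fun y => extLog A ω p n y e) (fun y _ => h.abs_extLog hp n y e)
  simpa [meanLog] using this

theorem mean_lip (h : Tame A c) {p : ℕ} (hp : p ≤ d) (n : ℕ) (e : ε) :
    |meanLog A ω p (n + 1) e - meanLog A ω p n e| ≤ c := by
  have h1 := h.mean_sub (ω := ω) hp n 1 e
  have h2 := abs_le.1 (h.abs_mean (ω := ω) hp 1 e)
  have c1 := h.extLog_cont_left (ω := ω) hp n e
  have h3 : meanLog A ω p n e - c ≤ meanLog A ω p (n + 1) e := by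
    have c2 : Continuous fun x => extLog A ω p n x e - c * ((1 : ℕ) : ℝ) := by fun_prop
    have h4 := intervalIntegral.integral_mono_on (μ := volume) (zero_le_one (α := ℝ))
      (c2.intervalIntegrable 0 1)
      ((h.extLog_cont_left (ω := ω) hp (n + 1) e).intervalIntegrable 0 1)
      (fun x _ => h.low_left (ω := ω) hp n 1 x e)
    rw [intervalIntegral.integral_sub (c1.intervalIntegrable _ _)
      (continuous_const.intervalIntegrable _ _)] at h4
    simpa [meanLog] using h4
  simp only [Nat.cast_one, mul_one] at h2
  rw [abs_le]
  constructor <;> linarith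

theorem mean_cont (h : Tame A c) {p : ℕ} (hp : p ≤ d) (n : ℕ) :
    Continuous fun e => meanLog A ω p n e := by
  have h1 : Continuous (Function.uncurry fun (e : ε) (x : ℝ) => extLog A ω p n x e) :=
    (h.extLog_cont hp n).comp (f := fun q : ε × ℝ => (q.2, q.1)) (by fun_prop)
  simp only [meanLog]
  exact intervalIntegral.continuous_parametric_intervalIntegral_of_continuous' h1 0 1

theorem subadd (h : Tame A c) {p : ℕ} (hp : p ≤ d) (e : ε) :
    Subadditive (fun n => meanLog A ω p n e) := fun n m => h.mean_sub hp n m e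

theorem sumLyap_eq (h : Tame A c) {p : ℕ} (hp : p ≤ d) (e : ε) :
    sumLyap A ω p e = (h.subadd (ω := ω) hp e).lim := by
  rw [sumLyap, iInf, Subadditive.lim]
  congr 1
  ext y
  constructor
  · rintro ⟨n, rfl⟩
    refine ⟨n + 1, Set.mem_Ici.2 (by omega), ?_⟩
    simp only [sumLyapFin, meanLog, extLog]
    rw [one_div, div_eq_inv_mul]
  · rintro ⟨n, hn, rfl⟩
    have hn' : 1 ≤ n := hn
    refine ⟨n - 1, ?_⟩
    simp only [sumLyapFin, meanLog, extLog, Nat.sub_add_cancel hn']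
    rw [one_div, div_eq_inv_mul]

theorem tendsto_mean (h : Tame A c) {p : ℕ} (hp : p ≤ d) (e : ε) :
    Filter.Tendsto (fun n : ℕ => meanLog A ω p n e / n) Filter.atTop
      (nhds (sumLyap A ω p e)) := by
  rw [h.sumLyap_eq hp]
  refine (h.subadd (ω := ω) hp e).tendsto_lim ⟨-c, ?_⟩
  rintro _ ⟨m, rfl⟩
  rcases Nat.eq_zero_or_pos m with h0 | h0
  · simpa [h0] using h.nonneg
  · have hm : (0:ℝ) < m := by exact_mod_cast h0
    simp only
    rw [le_div_iff₀ hm]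
    linarith [(abs_le.1 (h.abs_mean (ω := ω) hp m e)).1]

/-- Near a parameter with simple Lyapunov spectrum, the error of the mean at scale `n` is bounded
uniformly in `n` and in the parameter. -/
theorem local_rate (h : Tame A c) (ha : 1 < a) (hdio : Diophantine ω a) (hanal : AnalyticOnStrip A)
    {κ : ℝ} (hκ : 0 < κ) (e₀ : ε)
    (hgap : ∀ p, p + 2 ≤ d → κ < 2 * sumLyap A ω (p + 1) e₀ - sumLyap A ω p e₀
      - sumLyap A ω (p + 2) e₀) :
    ∃ C : ℝ, ∀ᶠ e in nhds e₀, ∀ p ≤ d, ∀ n : ℕ, 1 ≤ n →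
      |meanLog A ω p n e - n * sumLyap A ω p e| ≤ C := by
  have hc := h.nonneg
  obtain ⟨C, N₀, hC, hN₀, hstep⟩ := h.step (ω := ω) ha hdio hanal hκ
  -- a scale from which all the means are close to their limits
  have hev : ∀ᶠ m : ℕ in Filter.atTop, ∀ p ∈ Finset.range (d + 1),
      meanLog A ω p m e₀ / m < sumLyap A ω p e₀ + κ / 600 := by
    rw [Filter.eventually_all_finset]
    intro p hp
    exact (h.tendsto_mean (ω := ω) (by have := Finset.mem_range.1 hp; omega) e₀).eventually_lt_const
      (by linarith)
  obtain ⟨N₁, hN₁⟩ := Filter.eventually_atTop.1 hev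
  obtain ⟨N₂, hN₂⟩ := exists_nat_ge ((12 * C + 2 * c) * 64 / κ)
  set N := max N₀ (max N₁ N₂) with hN
  have hNN₀ : N₀ ≤ N := le_max_left _ _
  have hNN₁ : N₁ ≤ N := (le_max_left _ _).trans (le_max_right _ _)
  have hNN₂ : N₂ ≤ N := (le_max_right _ _).trans (le_max_right _ _)
  have hNκ : 12 * C + 2 * c ≤ κ * N / 64 := by
    have h1 : (12 * C + 2 * c) * 64 / κ ≤ N := hN₂.trans (by exact_mod_cast hNN₂)
    rw [div_le_iff₀ hκ] at h1
    linarith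
  have hlow : ∀ p ≤ d, ∀ m : ℕ, 1 ≤ m → m * sumLyap A ω p e₀ ≤ meanLog A ω p m e₀ := by
    intro p hp m hm
    have hm0 : (0:ℝ) < m := by exact_mod_cast hm
    have h1 : sumLyap A ω p e₀ ≤ meanLog A ω p m e₀ / m := by
      obtain ⟨j, rfl⟩ : ∃ j, m = j + 1 := ⟨m - 1, by omega⟩
      have hb : BddBelow (Set.range fun n : ℕ => sumLyapFin A ω p (n + 1) e₀) := by
        refine ⟨-c, ?_⟩
        rintro _ ⟨n, rfl⟩
        have hn0 : (0:ℝ) < (n + 1 : ℕ) := by positivity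
        have h2 := (abs_le.1 (h.abs_mean (ω := ω) hp (n + 1) e₀)).1
        change -c ≤ (1 / ((n + 1 : ℕ) : ℝ)) * meanLog A ω p (n + 1) e₀
        rw [one_div, ← div_eq_inv_mul, le_div_iff₀ hn0]
        linarith
      refine (ciInf_le hb j).trans (le_of_eq ?_)
      change (1 / ((j + 1 : ℕ) : ℝ)) * meanLog A ω p (j + 1) e₀ = _
      rw [one_div, ← div_eq_inv_mul]
    rw [le_div_iff₀ hm0] at h1
    linarith
  have hupp : ∀ p ≤ d, ∀ m : ℕ, N ≤ m →
      meanLog A ω p m e₀ < m * sumLyap A ω p e₀ + κ / 600 * m := by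
    intro p hp m hm
    have hm0 : (0:ℝ) < m := by exact_mod_cast (by omega : 0 < m)
    have h1 := hN₁ m (by omega) p (Finset.mem_range.2 (by omega))
    rw [div_lt_iff₀ hm0] at h1
    linarith
  have hb1 : ∀ᶠ e in nhds e₀, ∀ m ∈ Finset.Icc N (2 * N), ∀ p ∈ Finset.range (d + 1),
      meanLog A ω p m e + meanLog A ω p m e - meanLog A ω p (m + m) e < κ / 256 * m := by
    rw [Filter.eventually_all_finset]
    intro m hm
    rw [Filter.eventually_all_finset]
    intro p hp
    have hp' : p ≤ d := by have := Finset.mem_range.1 hp; omega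
    have hmN := (Finset.mem_Icc.1 hm).1
    have hm0 : (0:ℝ) < m := by exact_mod_cast (by omega : 0 < m)
    refine Filter.Tendsto.eventually_lt_const ?_ (Continuous.tendsto
      (((h.mean_cont (ω := ω) hp' m).add (h.mean_cont hp' m)).sub (h.mean_cont hp' (m + m))) e₀)
    have h1 := hupp p hp' m hmN
    have h2 := hlow p hp' (m + m) (by omega)
    push_cast at h2
    have h3 : 0 < κ * m := by positivity
    simp only [Pi.add_apply, Pi.sub_apply]
    linarith
  have hb2 : ∀ᶠ e in nhds e₀, ∀ m ∈ Finset.Icc N (2 * N), ∀ p ∈ Finset.range (d - 1),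
      3 * κ / 4 * m < 2 * meanLog A ω (p + 1) m e - meanLog A ω p m e
        - meanLog A ω (p + 2) m e := by
    rw [Filter.eventually_all_finset]
    intro m hm
    rw [Filter.eventually_all_finset]
    intro p hp
    have hp' : p + 2 ≤ d := by have := Finset.mem_range.1 hp; omega
    have hmN := (Finset.mem_Icc.1 hm).1
    have hm0 : (0:ℝ) < m := by exact_mod_cast (by omega : 0 < m)
    refine Filter.Tendsto.eventually_const_lt ?_ (Continuous.tendsto
      (((continuous_const.mul (h.mean_cont (ω := ω) (p := p + 1) (by omega) m)).sub
        (h.mean_cont (p := p) (by omega) m)).sub (h.mean_cont hp' m)) e₀)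
    have h1 := hupp p (by omega) m hmN
    have h2 := hupp (p + 2) hp' m hmN
    have h4 := hlow (p + 1) (by omega) m (by omega)
    have h5 := mul_lt_mul_of_pos_right (hgap p hp') hm0
    have h3 : 0 < κ * m := by positivity
    simp only [Pi.sub_apply, Pi.mul_apply]
    linarith
  set D := κ / 128 * N + 12 * C with hD
  have hD0 : 0 ≤ D := by positivity
  have hN1 : 1 ≤ N := by omega
  have hNR : (0:ℝ) < N := by exact_mod_cast hN1
  refine ⟨D + 2 * c * N, ?_⟩
  filter_upwards [hb1, hb2] with e he1 he2 p hp n hn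
  have hav := avalanche (d := d) (fun p n => meanLog A ω p n e) hc hκ hC hN₀
    (fun p hp n m => h.mean_sub hp n m e) (fun p hp n => h.mean_lip hp n e)
    (fun n m => by simp only [mean_zero, add_zero]) (fun n m => h.mean_top n m e)
    (fun p hp l m k => hstep p hp e l m k) hNN₀ hNκ
    (fun m h1 h2 p hp => (he1 m (Finset.mem_Icc.2 ⟨h1, h2⟩) p (Finset.mem_range.2 (by omega))).le)
    (fun m h1 h2 p hp => (he2 m (Finset.mem_Icc.2 ⟨h1, h2⟩) p (Finset.mem_range.2 (by omega))).le)
    p hp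
  rw [h.sumLyap_eq hp]
  set L := (h.subadd (ω := ω) hp e).lim with hL
  have hcN : 0 ≤ 2 * c * N := by positivity
  rcases le_or_gt N n with hNn | hNn
  · obtain ⟨h1, h2⟩ := subadditive_rate (h.subadd (ω := ω) hp e) (fun n => h.abs_mean hp n e) hn
      (fun m hm => hav m (hNn.trans hm))
    rw [abs_le]
    constructor <;> linarith
  -- below `N`, bound `L` through the estimate at scale `N`
  · obtain ⟨h1, h2⟩ := subadditive_rate (h.subadd (ω := ω) hp e) (fun n => h.abs_mean hp n e) hN1
      (fun m hm => hav m hm)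
    have h3 := abs_le.1 (h.abs_mean (ω := ω) hp N e)
    have h4 := abs_le.1 (h.abs_mean (ω := ω) hp n e)
    have hnN : (n:ℝ) ≤ N := by exact_mod_cast hNn.le
    have hn0 : (0:ℝ) ≤ n := by positivity
    have h5 : c * n ≤ c * N := mul_le_mul_of_nonneg_left hnN hc
    rw [← hL] at h1 h2
    have hLu : L ≤ c := by
      by_contra hcon
      have := mul_lt_mul_of_pos_left (not_le.1 hcon) hNR
      linarith
    have hLl : -(c + D / N) ≤ L := by
      by_contra hcon
      have h6 := mul_lt_mul_of_pos_left (not_le.1 hcon) hNR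
      have h7 : N * -(c + D / N) = -(c * N) - D := by field_simp; ring
      linarith
    have h8 := mul_le_mul_of_nonneg_left hLu hn0
    have h9 := mul_le_mul_of_nonneg_left hLl hn0
    have h10 : n * -(c + D / N) = -(c * n) - n * (D / N) := by ring
    have h11 : n * (D / N) ≤ N * (D / N) := mul_le_mul_of_nonneg_right hnN (by positivity)
    have h12 : N * (D / N) = D := by field_simp
    rw [abs_le]
    constructor <;> linarith
end Tame

theorem exists_tame (hcont : Continuous fun q : ℝ × ε => A q.1 q.2)
    (hper : ∀ x e, A (x + 1) e = A x e) (hinv : ∀ x e, IsUnit (A x e)) (hanal : AnalyticOnStrip A)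
    (hbinv : ∃ M : ℝ, ∀ (x : ℝ) (e : ε), matOpNorm (A x e)⁻¹ ≤ M) : ∃ c, Tame A c := by
  obtain ⟨ρ, hρ, F, -, -, hFA, M, hM⟩ := hanal
  obtain ⟨M', hM'⟩ := hbinv
  obtain ⟨c1, hc1, hb1⟩ := compound_bound K d (Fintype.card (Fin d) * max M 0)
  obtain ⟨c2, hc2, hb2⟩ := compound_bound K d M'
  refine ⟨max c1 c2, hcont, hper, hinv, hc1.trans (le_max_left _ _), fun p x e => ?_,
    fun p x e => ?_⟩
  · refine (hb1 p _ ?_).trans (Real.exp_le_exp.2 (le_max_left _ _))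
    refine matOpNorm_le_of_entries _ (le_max_right _ _) (fun i j => ?_)
    have h1 := norm_entry_le_matOpNorm (F x e) i j
    have h2 := hM x (by simpa using hρ) e
    rw [hFA, Matrix.map_apply, norm_rcToComplex, ← hFA] at h1
    exact (h1.trans h2).trans (le_max_left _ _)
  · exact (hb2 p _ (hM' x e)).trans (Real.exp_le_exp.2 (le_max_right _ _))
end

/-- **Sharp rate of convergence (Proposition 6.1).** Under the hypotheses of the main
theorem (`ω` Diophantine; `A` analytic in `x`, Hölder in `E`; gap condition on `ℰ`),
there is a constant `C = C(κ,A,ℰ,ω)` with `|λ_{j,n}(E) − λ_j(E)| ≤ C/n` for all `E`,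
`1 ≤ j ≤ d` and `n ≥ 1`. -/
theorem sharp_rate_of_convergence
    {K : Type*} [RCLike K] {d : ℕ} {ε : Type*} [MetricSpace ε] [CompactSpace ε]
    (ω a : ℝ) (ha : 1 < a) (hdio : Diophantine ω a)
    (A : ℝ → ε → Matrix (Fin d) (Fin d) K)
    (hcont : Continuous fun q : ℝ × ε => A q.1 q.2)
    (hper : ∀ x e, A (x + 1) e = A x e)
    (hinv : ∀ x e, IsUnit (A x e))
    (hanal : AnalyticOnStrip A)
    (hbinv : ∃ M : ℝ, ∀ (x : ℝ) (e : ε), matOpNorm (A x e)⁻¹ ≤ M)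
    (β₀ C₀ : ℝ) (hβ₀ : 0 < β₀) (hβ₁ : β₀ ≤ 1)
    (hHolder : ∀ (x : ℝ) (e e' : ε),
      matOpNorm (A x e - A x e') ≤ C₀ * dist e e' ^ β₀)
    (κ : ℝ) (hκ : 0 < κ)
    (hgap : ∀ (e : ε) (j : ℕ), 1 ≤ j → j < d →
      κ < lyap A ω j e - lyap A ω (j + 1) e) :
    ∃ C : ℝ, ∀ (e : ε) (j n : ℕ), 1 ≤ j → j ≤ d → 1 ≤ n →
      |lyapFin A ω j n e - lyap A ω j e| ≤ C / n := by
  obtain ⟨c, h⟩ := exists_tame hcont hper hinv hanal hbinv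
  have hloc := fun e₀ => h.local_rate ha hdio hanal hκ e₀ (fun p hp => by
    have := hgap e₀ (p + 1) (by omega) (by omega)
    simp only [lyap, Nat.add_sub_cancel] at this
    linarith)
  have hglob : ∃ C : ℝ, ∀ e ∈ (Set.univ : Set ε), ∀ p ≤ d, ∀ n : ℕ, 1 ≤ n →
      |meanLog A ω p n e - n * sumLyap A ω p e| ≤ C := by
    refine isCompact_univ.induction_on (p := fun s : Set ε => ∃ C : ℝ, ∀ e ∈ s, ∀ p ≤ d, ∀ n : ℕ,
      1 ≤ n → |meanLog A ω p n e - n * sumLyap A ω p e| ≤ C) ⟨0, fun e he => he.elim⟩ ?_ ?_ ?_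
    · rintro s t hst ⟨C, hC⟩
      exact ⟨C, fun e he => hC e (hst he)⟩
    · rintro s t ⟨C, hC⟩ ⟨C', hC'⟩
      refine ⟨max C C', fun e he p hp n hn => ?_⟩
      rcases he with he | he
      · exact (hC e he p hp n hn).trans (le_max_left _ _)
      · exact (hC' e he p hp n hn).trans (le_max_right _ _)
    · intro e₀ _
      obtain ⟨C, hC⟩ := hloc e₀
      exact ⟨_, mem_nhdsWithin_of_mem_nhds hC, C, fun e he => he⟩
  obtain ⟨C, hC⟩ := hglob
  refine ⟨2 * C, fun e j n hj hjd hn => ?_⟩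
  have hn0 : (0:ℝ) < n := by exact_mod_cast hn
  have h1 := hC e (Set.mem_univ _) j hjd n hn
  have h2 := hC e (Set.mem_univ _) (j - 1) (by omega) n hn
  have hid : lyapFin A ω j n e - lyap A ω j e =
      ((meanLog A ω j n e - n * sumLyap A ω j e)
        - (meanLog A ω (j - 1) n e - n * sumLyap A ω (j - 1) e)) / n := by
    have hfin : ∀ p, sumLyapFin A ω p n e = (1 / (n:ℝ)) * meanLog A ω p n e := fun p => rfl
    rw [lyapFin, lyap, hfin, hfin]
    field_simp
    ring
  rw [hid, abs_div, abs_of_pos hn0]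
  refine div_le_div_of_nonneg_right ((abs_sub _ _).trans ?_) hn0.le
  linarith

end
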